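/- For i = 1, …, n−1 let g_i = a_{i1} z_1 + ⋯ + a_{i,n−1} z_{n−1} + b_i with a_{ij}, b_i ∈ K, and suppose the (n−1)×(n−1) coefficient matrix (a_{ij}) is invertible over K (the linear parts of g_1, …, g_{n−1} are linearly independent). Let F ∈ R^{l×m} with l < m and rank r (1 ≤ r ≤ l), and suppose d_r(F) is associated to g_1 g_2 ⋯ g_{n−1} h, where h ∈ K[z_n]. Then F is equivalent to its Smith form if and only if J_k(F) = R for every k = 1, …, r. -/

import Mathlib

/-!
The condition `J_k(F) = R` says that the `k × k` minors of `F` generate a principal ideal. This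
ideal is invariant under equivalence, and for a Smith form it is generated by `Φ_1 ⋯ Φ_k`, because
this gcd of the minors is itself a minor. That proves one direction.

Conversely, let the determinantal ideals of `F` up to the rank be principal. An affine change of
coordinates turns `g_i` into the variable `X_i`, and `R` into `B[X_1, …, X_N]` for the principal
ideal domain `B = K[z_n]`. The column and row spaces of `F` then span projective direct summands,
which are free by the Quillen–Suslin theorem, so `F` is equivalent to an `r × r` matrix `G` padded
with zeros. Comparing minors of `G` with those of its adjugate shows that no `X_i` divides
`d_{r-1}`; hence `d_k` is a constant, an element of `B`, for all `k < r`, while `d_r` is `X_1 ⋯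
X_N` times a constant.

A square matrix whose determinantal ideals are all generated by nonzero constants is equivalent to
its Smith form, one invariant factor at a time. Divide by the content. By Suslin's lemma, modulo
each prime divisor of the determinant some column in the column space is `GL`-equivalent to a
unimodular column of constants. These equivalences are patched together modulo the whole
determinant, and the resulting column is moved to the first basis vector.

For `G` itself, each substitution `X_j ↦ 0` kills the determinant, so it takes `G` to a matrix
equivalent to `diag(Φ_1, …, Φ_{r-1}, 0)`. The substitutions are commuting retractions, which
allows these equivalences to be glued to a single equivalence from `G` to a matrix `D * G'`, where
`D = diag(1, …, 1, X_1 ⋯ X_N)` and `G'` has determinantal ideals generated by constants. Finally,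
the equivalence diagonalising `G'` can be chosen, again by means of the retractions, so that it
can be carried across `D`.
-/

open MvPolynomial Matrix

section Defs

variable {A : Type*} [CommRing A]

/-- The set of all `k × k` minors of a matrix. -/
def minorsSet {l m : ℕ} (F : Matrix (Fin l) (Fin m) A) (k : ℕ) : Set A :=
  { p | ∃ (r : Fin k ↪ Fin l) (c : Fin k ↪ Fin m), p = (F.submatrix ⇑r ⇑c).det }

/-- `d` is a greatest common divisor of the `k × k` minors of `F`. -/
def IsGcdMinors {l m : ℕ} (F : Matrix (Fin l) (Fin m) A) (k : ℕ) (d : A) : Prop :=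
  (∀ p ∈ minorsSet F k, d ∣ p) ∧ ∀ e : A, (∀ p ∈ minorsSet F k, e ∣ p) → e ∣ d

/-- The ideal generated by the `k × k` reduced minors of `F`, relative to a gcd `d`
of the `k × k` minors (the reduced minors are the `v` with `d * v` a minor). -/
def reducedIdeal {l m : ℕ} (F : Matrix (Fin l) (Fin m) A) (k : ℕ) (d : A) : Ideal A :=
  Ideal.span { v : A | d * v ∈ minorsSet F k }

/-- `J_k(F) = R`: the `k × k` reduced minors of `F` generate the unit ideal. -/
def JkUnit {l m : ℕ} (F : Matrix (Fin l) (Fin m) A) (k : ℕ) : Prop :=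
  ∃ d : A, IsGcdMinors F k d ∧ reducedIdeal F k d = ⊤

/-- `F` has rank `r`: some `r × r` minor is nonzero and all `(r+1) × (r+1)` minors vanish. -/
def HasRank {l m : ℕ} (F : Matrix (Fin l) (Fin m) A) (r : ℕ) : Prop :=
  (∃ p ∈ minorsSet F r, p ≠ 0) ∧ ∀ p ∈ minorsSet F (r + 1), p = 0

/-- Equivalence of matrices: `F₁ = U * F₂ * V` for unimodular `U`, `V`. -/
def MatEquiv {l m : ℕ} (F₁ F₂ : Matrix (Fin l) (Fin m) A) : Prop :=
  ∃ (U : Matrix (Fin l) (Fin l) A) (V : Matrix (Fin m) (Fin m) A),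
    IsUnit U.det ∧ IsUnit V.det ∧ F₁ = U * F₂ * V

/-- The rectangular diagonal matrix with diagonal entries `Φ`. -/
def smithDiag {l m : ℕ} (Φ : Fin l → A) : Matrix (Fin l) (Fin m) A :=
  Matrix.of fun i j => if (i : ℕ) = (j : ℕ) then Φ i else 0

/-- `F` (of rank `r`) is equivalent to its Smith form: there are diagonal entries `Φ` such that
for each `i ≤ r` the product `Φ_1 ⋯ Φ_i` is a gcd of the `i × i` minors of `F`
(i.e. `Φ_i = d_i(F)/d_{i-1}(F)`), `Φ_i = 0` for `i > r`, and `F` is equivalent to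
the diagonal matrix with entries `Φ`. -/
def SmithEquivAt {l m : ℕ} (F : Matrix (Fin l) (Fin m) A) (r : ℕ) : Prop :=
  ∃ Φ : Fin l → A,
    (∀ i : Fin l, (i : ℕ) < r →
      IsGcdMinors F ((i : ℕ) + 1) (∏ j ∈ Finset.Iic i, Φ j)) ∧
    (∀ i : Fin l, r ≤ (i : ℕ) → Φ i = 0) ∧
    MatEquiv F (smithDiag Φ)

/-- `F` is equivalent to its Smith form. -/
def EquivToSmith {l m : ℕ} (F : Matrix (Fin l) (Fin m) A) : Prop :=
  ∃ r : ℕ, HasRank F r ∧ SmithEquivAt F r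

end Defs

section MinorIdeal

variable {A B : Type*} [CommRing A] [CommRing B] {l l' m m' : Type*}

/-- The determinantal ideal generated by the `k × k` minors of `F`. Rows and columns are picked by
arbitrary functions rather than embeddings: this only adds zero minors, and makes the Cauchy–Binet
expansion a sum over all functions. -/
def minorIdeal (F : Matrix l m A) (k : ℕ) : Ideal A :=
  Ideal.span {p | ∃ (f : Fin k → l) (g : Fin k → m), p = (F.submatrix f g).det}

lemma det_submatrix_mem_minorIdeal (F : Matrix l m A) {k : ℕ} (f : Fin k → l) (g : Fin k → m) :
    (F.submatrix f g).det ∈ minorIdeal F k :=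
  Ideal.subset_span ⟨f, g, rfl⟩

lemma minorIdeal_le_iff {F : Matrix l m A} {k : ℕ} {I : Ideal A} :
    minorIdeal F k ≤ I ↔ ∀ (f : Fin k → l) (g : Fin k → m), (F.submatrix f g).det ∈ I := by
  refine ⟨fun h f g => h (det_submatrix_mem_minorIdeal F f g), fun h => Ideal.span_le.2 ?_⟩
  rintro _ ⟨f, g, rfl⟩
  exact h f g

lemma minorIdeal_transpose_le (F : Matrix l m A) (k : ℕ) : minorIdeal Fᵀ k ≤ minorIdeal F k :=
  minorIdeal_le_iff.2 fun f g => by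
    rw [← det_transpose]
    exact det_submatrix_mem_minorIdeal F g f

lemma minorIdeal_transpose (F : Matrix l m A) (k : ℕ) : minorIdeal Fᵀ k = minorIdeal F k :=
  (minorIdeal_transpose_le F k).antisymm (minorIdeal_transpose_le Fᵀ k)

lemma det_submatrix_mul_eq_sum [Fintype l] (U : Matrix l' l A) (F : Matrix l m A)
    {k : ℕ} (f : Fin k → l') (g : Fin k → m) :
    ((U * F).submatrix f g).det =
      ∑ p : Fin k → l, (∏ i, U (f i) (p i)) * (F.submatrix p g).det := by
  classical
  have rows : (U * F).submatrix f g = fun i => ∑ p, U (f i) p • (F.submatrix id g) p := by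
    funext i j
    simp [Matrix.mul_apply, Finset.sum_apply]
  rw [rows]
  refine ((detRowAlternating (n := Fin k) (R := A)).toMultilinearMap.map_sum
    fun i p => U (f i) p • (F.submatrix id g) p).trans (Finset.sum_congr rfl fun p _ => ?_)
  exact (detRowAlternating (n := Fin k) (R := A)).toMultilinearMap.map_smul_univ _ _

lemma minorIdeal_mul_le_right [Fintype l] (U : Matrix l' l A) (F : Matrix l m A) (k : ℕ) :
    minorIdeal (U * F) k ≤ minorIdeal F k := by
  refine minorIdeal_le_iff.2 fun f g => ?_
  rw [det_submatrix_mul_eq_sum]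
  exact Ideal.sum_mem _ fun p _ =>
    Ideal.mul_mem_left _ _ (det_submatrix_mem_minorIdeal F p g)

lemma minorIdeal_mul_le_left [Fintype m] (F : Matrix l m A) (V : Matrix m m' A) (k : ℕ) :
    minorIdeal (F * V) k ≤ minorIdeal F k := by
  rw [← minorIdeal_transpose, ← minorIdeal_transpose F, transpose_mul]
  exact minorIdeal_mul_le_right _ _ _

lemma minorIdeal_map (φ : A →+* B) (F : Matrix l m A) (k : ℕ) :
    minorIdeal (F.map φ) k = (minorIdeal F k).map φ := by
  have det_map (f : Fin k → l) (g : Fin k → m) :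
      ((F.map φ).submatrix f g).det = φ (F.submatrix f g).det := by
    rw [RingHom.map_det]
    rfl
  refine le_antisymm (minorIdeal_le_iff.2 fun f g => ?_)
    (Ideal.map_le_iff_le_comap.2 <| minorIdeal_le_iff.2 fun f g => ?_)
  · rw [det_map]
    exact Ideal.mem_map_of_mem _ (det_submatrix_mem_minorIdeal F f g)
  · rw [Ideal.mem_comap, ← det_map]
    exact det_submatrix_mem_minorIdeal _ f g

lemma minorIdeal_map_eq_span {F : Matrix l m A} {k : ℕ} {d : A}
    (h : minorIdeal F k = Ideal.span {d}) (φ : A →+* B) :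
    minorIdeal (F.map φ) k = Ideal.span {φ d} := by
  rw [minorIdeal_map, h, Ideal.map_span, Set.image_singleton]

lemma minorIdeal_smul (c : A) (F : Matrix l m A) (k : ℕ) :
    minorIdeal (c • F) k = Ideal.span {c ^ k} * minorIdeal F k := by
  have det_smul' (f : Fin k → l) (g : Fin k → m) :
      ((c • F).submatrix f g).det = c ^ k * (F.submatrix f g).det :=
    (det_smul (F.submatrix f g) c).trans (by rw [Fintype.card_fin])
  refine le_antisymm (minorIdeal_le_iff.2 fun f g => ?_) ?_
  · rw [det_smul']
    exact Ideal.mul_mem_mul (Ideal.mem_span_singleton_self _) (det_submatrix_mem_minorIdeal F f g)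
  · rw [minorIdeal, Ideal.span_mul_span', Ideal.span_le]
    rintro _ ⟨_, rfl, _, ⟨f, g, rfl⟩, rfl⟩
    simp only [← det_smul']
    exact det_submatrix_mem_minorIdeal _ f g

lemma apply_mem_minorIdeal_one (F : Matrix l m A) (i : l) (j : m) : F i j ∈ minorIdeal F 1 := by
  simpa using det_submatrix_mem_minorIdeal F (k := 1) (fun _ => i) (fun _ => j)

lemma minorIdeal_succ_le_mul (F : Matrix l m A) (k : ℕ) :
    minorIdeal F (k + 1) ≤ minorIdeal F 1 * minorIdeal F k := by
  refine minorIdeal_le_iff.2 fun f g => ?_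
  rw [det_succ_row_zero]
  refine Ideal.sum_mem _ fun j _ => ?_
  rw [mul_assoc]
  exact Ideal.mul_mem_left _ _ <| Ideal.mul_mem_mul (apply_mem_minorIdeal_one F _ _)
    (det_submatrix_mem_minorIdeal F (f ∘ Fin.succ) (g ∘ j.succAbove))

lemma minorIdeal_succ_le (F : Matrix l m A) (k : ℕ) : minorIdeal F (k + 1) ≤ minorIdeal F k :=
  (minorIdeal_succ_le_mul F k).trans Ideal.mul_le_right

lemma minorIdeal_antitone (F : Matrix l m A) : Antitone (minorIdeal F) :=
  antitone_nat_of_succ_le (minorIdeal_succ_le F)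

lemma minorIdeal_zero (F : Matrix l m A) : minorIdeal F 0 = ⊤ := by
  rw [Ideal.eq_top_iff_one]
  simpa using det_submatrix_mem_minorIdeal F (k := 0) Fin.elim0 Fin.elim0

lemma minorIdeal_eq_span_det {r : ℕ} (G : Matrix (Fin r) (Fin r) A) :
    minorIdeal G r = Ideal.span {G.det} := by
  refine le_antisymm (minorIdeal_le_iff.2 fun f g => ?_) ?_
  · have selection : G.submatrix f g =
        (1 : Matrix _ _ A).submatrix f id * G * (1 : Matrix _ _ A).submatrix id g := by
      ext i j
      simp [Matrix.mul_apply, Matrix.one_apply]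
    rw [selection, det_mul, det_mul]
    exact Ideal.mul_mem_right _ _ (Ideal.mul_mem_left _ _ (Ideal.mem_span_singleton_self _))
  · rw [Ideal.span_singleton_le_iff_mem]
    simpa using det_submatrix_mem_minorIdeal G id id

lemma span_minorsSet {l m : ℕ} (F : Matrix (Fin l) (Fin m) A) (k : ℕ) :
    Ideal.span (minorsSet F k) = minorIdeal F k := by
  refine le_antisymm (Ideal.span_le.2 ?_) (minorIdeal_le_iff.2 fun f g => ?_)
  · rintro _ ⟨f, g, rfl⟩
    exact det_submatrix_mem_minorIdeal F f g
  by_cases hf : f.Injective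
  · by_cases hg : g.Injective
    · exact Ideal.subset_span ⟨⟨f, hf⟩, ⟨g, hg⟩, rfl⟩
    · obtain ⟨i, j, h, hne⟩ := Function.not_injective_iff.1 hg
      rw [det_zero_of_column_eq hne fun t => by simp [h]]
      exact Ideal.zero_mem _
  · obtain ⟨i, j, h, hne⟩ := Function.not_injective_iff.1 hf
    rw [det_zero_of_row_eq hne (by funext t; simp [h])]
    exact Ideal.zero_mem _

end MinorIdeal

section MatEquiv

variable {A B : Type*} [CommRing A] [CommRing B] {l m : ℕ} {F G H : Matrix (Fin l) (Fin m) A}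

lemma matEquiv_iff_exists_units : MatEquiv F G ↔
    ∃ (U : (Matrix (Fin l) (Fin l) A)ˣ) (V : (Matrix (Fin m) (Fin m) A)ˣ),
      F = U.val * G * V.val := by
  simp only [MatEquiv, ← isUnit_iff_isUnit_det]
  refine ⟨?_, fun ⟨U, V, h⟩ => ⟨U, V, U.isUnit, V.isUnit, h⟩⟩
  rintro ⟨_, _, ⟨U, rfl⟩, ⟨V, rfl⟩, h⟩
  exact ⟨U, V, h⟩

lemma matEquiv_units_mul (U : (Matrix (Fin l) (Fin l) A)ˣ) (F : Matrix (Fin l) (Fin m) A) :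
    MatEquiv (U.val * F) F :=
  matEquiv_iff_exists_units.2 ⟨U, 1, by simp⟩

lemma matEquiv_mul_units (F : Matrix (Fin l) (Fin m) A) (V : (Matrix (Fin m) (Fin m) A)ˣ) :
    MatEquiv (F * V.val) F :=
  matEquiv_iff_exists_units.2 ⟨1, V, by simp⟩

namespace MatEquiv

protected lemma refl (F : Matrix (Fin l) (Fin m) A) : MatEquiv F F :=
  matEquiv_iff_exists_units.2 ⟨1, 1, by simp⟩

protected lemma symm (h : MatEquiv F G) : MatEquiv G F := by
  obtain ⟨U, V, rfl⟩ := matEquiv_iff_exists_units.1 h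
  refine matEquiv_iff_exists_units.2 ⟨U⁻¹, V⁻¹, ?_⟩
  rw [Matrix.mul_assoc U.val, ← Matrix.mul_assoc, U.inv_mul, Matrix.one_mul,
    Matrix.mul_assoc, V.mul_inv, Matrix.mul_one]

protected lemma trans (h : MatEquiv F G) (h' : MatEquiv G H) : MatEquiv F H := by
  obtain ⟨U, V, hU, hV, rfl⟩ := h
  obtain ⟨U', V', hU', hV', rfl⟩ := h'
  refine ⟨U * U', V' * V, ?_, ?_, by simp only [Matrix.mul_assoc]⟩
  · rw [det_mul]; exact hU.mul hU'
  · rw [det_mul]; exact hV'.mul hV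

lemma minorIdeal_le (h : MatEquiv F G) (k : ℕ) : minorIdeal F k ≤ minorIdeal G k := by
  obtain ⟨U, V, -, -, rfl⟩ := h
  exact (minorIdeal_mul_le_left _ _ _).trans (minorIdeal_mul_le_right _ _ _)

lemma minorIdeal_eq (h : MatEquiv F G) (k : ℕ) : minorIdeal F k = minorIdeal G k :=
  (h.minorIdeal_le k).antisymm (h.symm.minorIdeal_le k)

protected lemma smul (h : MatEquiv F G) (c : A) : MatEquiv (c • F) (c • G) := by
  obtain ⟨U, V, hU, hV, rfl⟩ := h
  exact ⟨U, V, hU, hV, by simp⟩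

protected lemma map (φ : A →+* B) (h : MatEquiv F G) : MatEquiv (F.map φ) (G.map φ) := by
  obtain ⟨U, V, hU, hV, rfl⟩ := h
  refine ⟨U.map φ, V.map φ, ?_, ?_, by simp [Matrix.map_mul]⟩
  · simpa only [RingHom.map_det, RingHom.mapMatrix_apply] using hU.map φ
  · simpa only [RingHom.map_det, RingHom.mapMatrix_apply] using hV.map φ

end MatEquiv

end MatEquiv

section OneBordered

variable {A : Type*} [CommRing A] {r : ℕ}

/-- The block diagonal matrix `diag(1, M)`. -/
def oneBordered (M : Matrix (Fin r) (Fin r) A) : Matrix (Fin (r + 1)) (Fin (r + 1)) A :=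
  of (Fin.cons (Fin.cons 1 0) fun i => Fin.cons 0 (M i))

variable (M M' : Matrix (Fin r) (Fin r) A)

@[simp] lemma oneBordered_zero_zero : oneBordered M 0 0 = 1 := rfl

@[simp] lemma oneBordered_zero_succ (j : Fin r) : oneBordered M 0 j.succ = 0 := rfl

@[simp] lemma oneBordered_succ_zero (i : Fin r) : oneBordered M i.succ 0 = 0 := rfl

@[simp] lemma oneBordered_succ_succ (i j : Fin r) : oneBordered M i.succ j.succ = M i j := rfl

lemma oneBordered_mul : oneBordered (M * M') = oneBordered M * oneBordered M' := by
  ext i j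
  cases i using Fin.cases <;> cases j using Fin.cases <;>
    simp [Matrix.mul_apply, Fin.sum_univ_succ]

lemma oneBordered_diagonal (φ : Fin r → A) :
    oneBordered (diagonal φ) = diagonal (Fin.cons 1 φ : Fin (r + 1) → A) := by
  ext i j
  cases i using Fin.cases <;> cases j using Fin.cases <;>
    simp [diagonal_apply, Fin.succ_ne_zero, (Fin.succ_ne_zero _).symm]

@[simp] lemma det_oneBordered : (oneBordered M).det = M.det := by
  have minor_eq : (oneBordered M).submatrix Fin.succ Fin.succ = M := rfl
  simp [det_succ_row_zero, Fin.sum_univ_succ, minor_eq]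

lemma MatEquiv.oneBordered {M M' : Matrix (Fin r) (Fin r) A} (h : MatEquiv M M') :
    MatEquiv (oneBordered M) (oneBordered M') := by
  obtain ⟨U, V, hU, hV, rfl⟩ := h
  exact ⟨_, _, (det_oneBordered U).symm ▸ hU, (det_oneBordered V).symm ▸ hV,
    by simp only [oneBordered_mul]⟩

lemma det_submatrix_oneBordered_mem {k : ℕ} (f g : Fin k → Fin (r + 1)) (hf : ∀ i, f i ≠ 0) :
    ((oneBordered M).submatrix f g).det ∈ minorIdeal M k := by
  choose f' hf' using fun i => Fin.exists_succ_eq.2 (hf i)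
  obtain rfl : Fin.succ ∘ f' = f := funext hf'
  by_cases hg : ∃ j, g j = 0
  · obtain ⟨j, hj⟩ := hg
    rw [det_eq_zero_of_column_eq_zero j fun i => by simp [hj]]
    exact Ideal.zero_mem _
  · push Not at hg
    choose g' hg' using fun i => Fin.exists_succ_eq.2 (hg i)
    obtain rfl : Fin.succ ∘ g' = g := funext hg'
    exact det_submatrix_mem_minorIdeal M f' g'

lemma minorIdeal_oneBordered_le (k : ℕ) : minorIdeal (oneBordered M) (k + 1) ≤ minorIdeal M k := by
  refine minorIdeal_le_iff.2 fun f g => ?_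
  by_cases hf : f.Injective
  · obtain ⟨i, hi⟩ : ∃ i : Fin (k + 1), ∀ t, f (i.succAbove t) ≠ 0 := by
      by_cases h0 : ∃ i, f i = 0
      · obtain ⟨i, hi⟩ := h0
        exact ⟨i, fun t ht => Fin.succAbove_ne i t (hf (ht.trans hi.symm))⟩
      · exact ⟨0, fun t ht => h0 ⟨_, ht⟩⟩
    rw [det_succ_row _ i]
    refine Ideal.sum_mem _ fun j _ => Ideal.mul_mem_left _ _ ?_
    rw [submatrix_submatrix]
    exact det_submatrix_oneBordered_mem M _ _ hi
  · obtain ⟨i, j, h, hne⟩ := Function.not_injective_iff.1 hf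
    rw [det_zero_of_row_eq hne (by funext t; simp [h])]
    exact Ideal.zero_mem _

lemma minorIdeal_oneBordered (k : ℕ) : minorIdeal (oneBordered M) (k + 1) = minorIdeal M k := by
  refine (minorIdeal_oneBordered_le M k).antisymm (minorIdeal_le_iff.2 fun f g => ?_)
  have h := det_submatrix_mem_minorIdeal (oneBordered M)
    (Fin.cons 0 (Fin.succ ∘ f) : Fin (k + 1) → Fin (r + 1)) (Fin.cons 0 (Fin.succ ∘ g))
  rwa [show (oneBordered M).submatrix _ _ = oneBordered (M.submatrix f g) by
    ext i j
    cases i using Fin.cases <;> cases j using Fin.cases <;> simp, det_oneBordered] at h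

end OneBordered

section ColumnsModulo

variable {A B ι κ : Type*} [CommRing A] [CommRing B]

/-- The column `w` is unimodular modulo `π`: its entries together with `π` generate the unit
ideal. -/
def IsUnimodularMod (π : A) (w : ι → A) : Prop :=
  Ideal.span (Set.range w) ⊔ Ideal.span {π} = ⊤

lemma isUnimodularMod_zero {w : ι → A} :
    IsUnimodularMod 0 w ↔ Ideal.span (Set.range w) = ⊤ := by
  rw [IsUnimodularMod, Ideal.span_singleton_eq_bot.2 rfl, sup_bot_eq]

lemma IsUnimodularMod.of_dvd {π π' : A} {w : ι → A} (h : IsUnimodularMod π w) (hd : π' ∣ π) :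
    IsUnimodularMod π' w :=
  top_le_iff.1 <| h.symm.le.trans <|
    sup_le_sup_left (Ideal.span_singleton_le_span_singleton.2 hd) _

lemma IsUnimodularMod.map {π : A} {w : ι → A} (h : IsUnimodularMod π w) (φ : A →+* B) :
    IsUnimodularMod (φ π) (fun i => φ (w i)) := by
  have := congrArg (Ideal.map φ) h
  rwa [Ideal.map_sup, Ideal.map_span, Ideal.map_span, Ideal.map_top, ← Set.range_comp,
    Set.image_singleton] at this

lemma IsUnimodularMod.isUnit_of_forall_dvd {π p : A} {w : ι → A} (h : IsUnimodularMod π w)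
    (hp : p ∣ π) (hw : ∀ i, p ∣ w i) : IsUnit p := by
  rw [← Ideal.span_singleton_eq_top, ← top_le_iff, ← h]
  refine sup_le (Ideal.span_le.2 ?_) (Ideal.span_singleton_le_span_singleton.2 hp)
  rintro _ ⟨i, rfl⟩
  exact Ideal.mem_span_singleton.2 (hw i)

lemma dvd_mulVec [Fintype ι] {π : A} {w : ι → A} (γ : Matrix κ ι A) (h : ∀ i, π ∣ w i) (i : κ) :
    π ∣ (γ *ᵥ w) i :=
  Finset.dvd_sum fun j _ => (h j).mul_left _

variable [Fintype ι] [DecidableEq ι]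

/-- The columns `w` and `w'` are congruent modulo `π` up to the action of `GL(A)`. The matrix is
invertible over `A` itself, not merely over `A / π`. -/
def ColEquivMod (π : A) (w w' : ι → A) : Prop :=
  ∃ γ : (Matrix ι ι A)ˣ, ∀ i, π ∣ (γ.val *ᵥ w) i - w' i

namespace ColEquivMod

variable {π : A} {w w' w'' : ι → A}

lemma of_forall_dvd (h : ∀ i, π ∣ w i - w' i) : ColEquivMod π w w' :=
  ⟨1, by simpa using h⟩

protected lemma refl (π : A) (w : ι → A) : ColEquivMod π w w :=
  of_forall_dvd (by simp)

lemma of_mulVec_eq {γ : Matrix ι ι A} (hγ : IsUnit γ) (h : γ *ᵥ w = w') : ColEquivMod π w w' :=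
  ⟨hγ.unit, by simp [h]⟩

protected lemma trans (h : ColEquivMod π w w') (h' : ColEquivMod π w' w'') :
    ColEquivMod π w w'' := by
  obtain ⟨γ, h⟩ := h
  obtain ⟨γ', h'⟩ := h'
  refine ⟨γ' * γ, fun i => ?_⟩
  have split : (γ' * γ).val *ᵥ w - w'' =
      γ'.val *ᵥ (γ.val *ᵥ w - w') + (γ'.val *ᵥ w' - w'') := by
    rw [mulVec_sub, mulVec_mulVec, Units.val_mul]
    abel
  rw [← Pi.sub_apply, split]
  exact dvd_add (dvd_mulVec _ h i) (h' i)

protected lemma symm (h : ColEquivMod π w w') : ColEquivMod π w' w := by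
  obtain ⟨γ, h⟩ := h
  refine ⟨γ⁻¹, fun i => ?_⟩
  have swap : γ⁻¹.val *ᵥ w' - w = -(γ⁻¹.val *ᵥ (γ.val *ᵥ w - w')) := by
    rw [mulVec_sub, mulVec_mulVec, Units.inv_mul, one_mulVec]
    abel
  rw [← Pi.sub_apply, swap]
  exact (dvd_mulVec _ h i).neg_right

protected lemma map (h : ColEquivMod π w w') (φ : A →+* B) :
    ColEquivMod (φ π) (fun i => φ (w i)) (fun i => φ (w' i)) := by
  obtain ⟨γ, h⟩ := h
  refine ⟨Units.map φ.mapMatrix.toMonoidHom γ, fun i => ?_⟩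
  simpa [RingHom.map_mulVec, Function.comp_def] using map_dvd φ (h i)

lemma of_dvd {π' : A} (h : ColEquivMod π w w') (hd : π' ∣ π) : ColEquivMod π' w w' :=
  h.imp fun _ h i => hd.trans (h i)

lemma isUnimodularMod (hr : ColEquivMod π w w') (h : IsUnimodularMod π w) :
    IsUnimodularMod π w' := by
  obtain ⟨γ, hγ⟩ := hr.symm
  rw [IsUnimodularMod, eq_top_iff, ← h]
  refine sup_le (Ideal.span_le.2 ?_) le_sup_right
  rintro _ ⟨i, rfl⟩
  rw [← sub_sub_cancel ((γ.val *ᵥ w') i) (w i)]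
  refine Ideal.sub_mem _ (Ideal.mem_sup_left ?_)
    (Ideal.mem_sup_right (Ideal.mem_span_singleton.2 (hγ i)))
  exact Ideal.sum_mem _ fun j _ => Ideal.mul_mem_left _ _ (Ideal.subset_span ⟨j, rfl⟩)

lemma const_smul (c : A) (h : ColEquivMod π w w') : ColEquivMod π (c • w) (c • w') := by
  obtain ⟨γ, h⟩ := h
  refine ⟨γ, fun i => ?_⟩
  rw [mulVec_smul, Pi.smul_apply, Pi.smul_apply, ← smul_sub]
  exact (h i).mul_left c

lemma transvection (w u v : ι → A) (h : v ⬝ᵥ u = 0) :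
    ColEquivMod π w (w + (v ⬝ᵥ w) • u) := by
  refine of_mulVec_eq (γ := 1 + vecMulVec u v) ?_ ?_
  · rw [isUnit_iff_isUnit_det, vecMulVec_eq Unit, det_one_add_replicateCol_mul_replicateRow, h]
    simp
  · rw [add_mulVec, one_mulVec, vecMulVec_mulVec]
    simp

lemma update_add_dotProduct (w a : ι → A) {i₁ : ι} (h : a i₁ = 0) :
    ColEquivMod π w (Function.update w i₁ (w i₁ + a ⬝ᵥ w)) := by
  convert transvection (π := π) w (Pi.single i₁ 1) a (by simp [h]) using 1
  ext i
  obtain rfl | hi := eq_or_ne i i₁ <;> simp [*]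

lemma single_of_isUnit_of_ne {i₀ i₁ : ι} (hne : i₀ ≠ i₁) (h : IsUnit (w i₁)) :
    ColEquivMod π w (Pi.single i₀ 1) := by
  obtain ⟨u, hu⟩ := h
  set y := Function.update w i₀ 1 with hy
  have first : ColEquivMod π w y := by
    convert update_add_dotProduct (π := π) w (Pi.single i₁ ((1 - w i₀) * u⁻¹)) (i₁ := i₀)
      (by simp [hne]) using 2
    simp [← hu]
  convert first.trans (transvection y (Pi.single i₀ 1 - y) (Pi.single i₀ 1) (by simp [hy])) using 1
  simp [hy]

lemma single_of_isUnit (i₀ i₁ : ι) (h : IsUnit (w i₁)) : ColEquivMod π w (Pi.single i₀ 1) := by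
  obtain rfl | hne := eq_or_ne i₀ i₁
  · cases subsingleton_or_nontrivial ι with
    | inl _ =>
      obtain ⟨u, hu⟩ := h
      refine of_mulVec_eq (γ := scalar ι u⁻¹.val) (u⁻¹.isUnit.map _) (funext fun j => ?_)
      simp [Subsingleton.elim j i₀, ← hu]
    | inr _ =>
      obtain ⟨j, hj⟩ := exists_ne i₀
      exact (single_of_isUnit_of_ne hj h).trans (single_of_isUnit_of_ne (i₁ := j) hj.symm (by simp))
  · exact single_of_isUnit_of_ne hne h

lemma single_of_isCoprime [Nontrivial ι] (i₀ i₁ : ι) (h : IsCoprime π (w i₁)) :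
    ColEquivMod π w (Pi.single i₀ 1) := by
  obtain ⟨s, t, hst⟩ := h
  obtain ⟨j, hj⟩ := exists_ne i₁
  have first := update_add_dotProduct (π := π) w (Pi.single i₁ (t * (1 - w j))) (i₁ := j)
    (by simp [hj])
  refine first.trans (.trans (w' := Function.update w j 1) (of_forall_dvd fun i => ?_)
    (single_of_isUnit i₀ j (by simp)))
  obtain rfl | hi := eq_or_ne i j
  · rw [Function.update_self, Function.update_self, single_dotProduct]
    exact ⟨-s * (1 - w i), by linear_combination (1 - w i) * hst⟩
  · simp [hi]

end ColEquivMod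

lemma det_one_add_vecMulVec_add_vecMulVec (t x y z : ι → A) :
    (1 + (vecMulVec t y + vecMulVec x z)).det =
      (1 + y ⬝ᵥ t) * (1 + z ⬝ᵥ x) - (y ⬝ᵥ x) * (z ⬝ᵥ t) := by
  let U : Matrix ι (Fin 2) A := of fun i => ![t i, x i]
  let V : Matrix (Fin 2) ι A := of ![y, z]
  have factor : vecMulVec t y + vecMulVec x z = U * V := by
    ext i j
    simp [U, V, Matrix.mul_apply, vecMulVec_apply]
  rw [factor, det_one_add_mul_comm, det_fin_two]
  simp [U, V, dotProduct, vecMul]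

/-- The matrix is the identity plus a rank-two correction: its first summand moves `W` to `W'`,
the second one annihilates `W` and serves to make the determinant equal to `1`. -/
lemma colEquivMod_of_mul_add_mul_eq [IsDomain A] {π : A} {W W' t : ι → A} {c g₁ g₂ m₁ m₂ : A}
    {i₀ i₁ : ι} (hne : i₀ ≠ i₁) (hW : ∀ i, W' i = W i + c * t i)
    (h : g₁ * W i₀ + g₂ * W i₁ = c)
    (h' : (g₁ + c * m₁) * W' i₀ + (g₂ + c * m₂) * W' i₁ = c) : ColEquivMod π W W' := by
  obtain rfl | hc := eq_or_ne c 0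
  · exact ColEquivMod.of_forall_dvd fun i => by simp [hW]
  have linear : (m₁ * t i₀ + m₂ * t i₁) * c + (g₁ * t i₀ + g₂ * t i₁)
      + (m₁ * W i₀ + m₂ * W i₁) = 0 := by
    rw [hW, hW] at h'
    apply mul_left_cancel₀ hc
    linear_combination h' - h
  let x : ι → A := Pi.single i₀ (-m₂) + Pi.single i₁ m₁
  let y : ι → A := Pi.single i₀ g₁ + Pi.single i₁ g₂
  let z : ι → A := Pi.single i₀ (-W i₁) + Pi.single i₁ (W i₀)
  have hy (f : ι → A) : y ⬝ᵥ f = g₁ * f i₀ + g₂ * f i₁ := by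
    simp only [y, add_dotProduct, single_dotProduct]
  have hz (f : ι → A) : z ⬝ᵥ f = -W i₁ * f i₀ + W i₀ * f i₁ := by
    simp only [z, add_dotProduct, single_dotProduct]
  have hx₀ : x i₀ = -m₂ := by simp [x, hne]
  have hx₁ : x i₁ = m₁ := by simp [x, hne.symm]
  refine ColEquivMod.of_mulVec_eq (γ := 1 + (vecMulVec t y + vecMulVec x z)) ?_ ?_
  · rw [isUnit_iff_isUnit_det, det_one_add_vecMulVec_add_vecMulVec, hy, hy, hz, hz, hx₀, hx₁]
    refine isUnit_iff_exists_inv.2 ⟨1, ?_⟩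
    linear_combination linear + (m₁ * t i₀ + m₂ * t i₁) * h
  · ext i
    rw [add_mulVec, add_mulVec, one_mulVec, vecMulVec_mulVec, vecMulVec_mulVec, hy, hz, h, hW]
    simp only [Pi.add_apply, Pi.smul_apply, MulOpposite.smul_eq_mul_unop, MulOpposite.unop_op]
    ring

end ColumnsModulo

section StableRange

variable {P : Type*} [CommRing P] [IsDomain P] [IsPrincipalIdealRing P]

/-- The multiplier `s` is the product of the primes dividing `q` but not `a`. -/
lemma exists_isCoprime_add_mul {q a d : P} (hq : q ≠ 0)
    (h : ∀ p, Prime p → p ∣ q → p ∣ a → ¬ p ∣ d) : ∃ s, IsCoprime q (a + s * d) := by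
  classical
  let S := (UniqueFactorizationMonoid.factors q).filter fun p => ¬ p ∣ a
  have prime_of_mem {p : P} (hp : p ∈ S) : Prime p :=
    UniqueFactorizationMonoid.prime_of_factor p (Multiset.mem_filter.1 hp).1
  refine ⟨S.prod, isCoprime_of_prime_dvd (fun h => hq h.1) fun p hp hpq hpa => ?_⟩
  by_cases hdvd : p ∣ a
  · refine (hp.dvd_or_dvd ((dvd_add_right hdvd).1 hpa)).elim (fun hS => ?_) (h p hp hpq hdvd)
    obtain ⟨p', hp', hpp'⟩ := hp.exists_mem_multiset_dvd hS
    exact (Multiset.mem_filter.1 hp').2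
      ((hp.associated_of_dvd (prime_of_mem hp') hpp').symm.dvd.trans hdvd)
  · obtain ⟨p', hp', hpp'⟩ :=
      UniqueFactorizationMonoid.exists_mem_factors_of_dvd hq hp.irreducible hpq
    have hS : p ∣ S.prod := hpp'.dvd.trans <| Multiset.dvd_prod <|
      Multiset.mem_filter.2 ⟨hp', fun h => hdvd (hpp'.dvd.trans h)⟩
    exact hdvd ((dvd_add_left (hS.mul_right d)).1 hpa)

lemma IsUnimodularMod.exists_isCoprime_add_dotProduct {ι : Type*} [Fintype ι] {q : P}
    {c : ι → P} (h : IsUnimodularMod q c) (hq : q ≠ 0) (i₀ : ι) :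
    ∃ a : ι → P, a i₀ = 0 ∧ IsCoprime q (c i₀ + a ⬝ᵥ c) := by
  classical
  let I : Ideal P := Ideal.span (Set.range (Function.update c i₀ 0))
  obtain ⟨d, hd : I = Ideal.span {d}⟩ := (IsPrincipalIdealRing.principal I).principal
  obtain ⟨a, ha⟩ := Ideal.mem_span_range_iff_exists_fun.1 (hd ▸ Ideal.mem_span_singleton_self d)
  obtain ⟨s, hs⟩ := exists_isCoprime_add_mul (a := c i₀) (d := d) hq fun p hp hpq hpc hpd => by
    refine hp.not_isUnit (h.isUnit_of_forall_dvd hpq fun j => ?_)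
    obtain rfl | hj := eq_or_ne j i₀
    · exact hpc
    · have : c j ∈ I := Ideal.subset_span ⟨j, by simp [hj]⟩
      exact hpd.trans (Ideal.mem_span_singleton.1 (hd ▸ this))
  refine ⟨fun j => s * Function.update a i₀ 0 j, by simp, ?_⟩
  convert hs using 2
  rw [← ha, Finset.mul_sum]
  refine Finset.sum_congr rfl fun j _ => ?_
  obtain rfl | hj := eq_or_ne j i₀ <;> simp [*, mul_assoc]

end StableRange

section Suslin

variable {A ι : Type*} [CommRing A] [Fintype ι] [DecidableEq ι]

lemma sub_dvd_comp_sub_comp (p b b' : Polynomial A) : b' - b ∣ p.comp b' - p.comp b := by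
  simpa [Polynomial.eval_map, Polynomial.comp] using
    Polynomial.sub_dvd_eval_sub b' b (p.map Polynomial.C)

/-- If no constant of the ideal `(f, g)` were outside `m`, then by lying over for the integral
extension `A → A[X] / (f, g)` some prime containing `f` and `g` would lie over `m`. -/
lemma exists_notMem_C_mem_span_pair (m : Ideal A) [m.IsMaximal] {f g : Polynomial A}
    (hf : f.Monic)
    (h : IsCoprime (f.map (Ideal.Quotient.mk m)) (g.map (Ideal.Quotient.mk m))) :
    ∃ c ∉ m, Polynomial.C c ∈ Ideal.span {f, g} := by
  set I : Ideal (Polynomial A) := Ideal.span {f, g}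
  by_contra! hI
  have : Module.Finite A (Polynomial A ⧸ I) := by
    have := hf.finite_quotient
    have hle : Ideal.span {f} ≤ I := Ideal.span_mono (by simp)
    exact Module.Finite.of_surjective (M := Polynomial A ⧸ Ideal.span {f})
      (Ideal.Quotient.factorₐ A hle).toLinearMap (Ideal.Quotient.factor_surjective hle)
  obtain ⟨Q, -, hQ, hQm⟩ := Ideal.exists_ideal_over_prime_of_isIntegral
    (S := Polynomial A ⧸ I) m ⊥ fun c hc => by
      by_contra hcm
      exact hI c hcm (Ideal.Quotient.eq_zero_iff_mem.1 hc)
  obtain ⟨p, q, hpq⟩ := h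
  obtain ⟨p, rfl⟩ := Polynomial.map_surjective _ Ideal.Quotient.mk_surjective p
  obtain ⟨q, rfl⟩ := Polynomial.map_surjective _ Ideal.Quotient.mk_surjective q
  have near_one : p * f + q * g - 1 ∈ m.map Polynomial.C := by
    rw [Ideal.mem_map_C_iff]
    intro n
    rw [← Ideal.Quotient.eq_zero_iff_mem, ← Polynomial.coeff_map]
    simp [hpq]
  have map_le : m.map Polynomial.C ≤ Q.comap (Ideal.Quotient.mk I) :=
    Ideal.map_le_iff_le_comap.2 (by rw [Ideal.comap_comap]; exact hQm.ge)
  have hmem : Ideal.Quotient.mk I (p * f + q * g) = 0 :=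
    Ideal.Quotient.eq_zero_iff_mem.2 (Ideal.mem_span_pair.2 ⟨p, q, rfl⟩)
  refine hQ.ne_top (Q.eq_top_iff_one.2 ?_)
  simpa [hmem] using map_le near_one

/-- The ideal of all `c` such that the values of `w` at any two polynomials congruent modulo `c`
are related by `ColEquivMod π`. -/
def suslinIdeal (π : A) (w : ι → Polynomial A) : Ideal A where
  carrier := {c | ∀ b b' : Polynomial A, Polynomial.C c ∣ b' - b →
    ColEquivMod (Polynomial.C π) (fun i => (w i).comp b) (fun i => (w i).comp b')}
  zero_mem' b b' h := by
    rw [map_zero, zero_dvd_iff, sub_eq_zero] at h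
    rw [h]
    exact .refl _ _
  add_mem' {c d} hc hd b b' h := by
    obtain ⟨s, hs⟩ := h
    refine (hc b (b + Polynomial.C c * s) (by simp)).trans (hd _ b' ⟨s, ?_⟩)
    rw [map_add] at hs
    linear_combination hs
  smul_mem' a c hc b b' h := hc b b' (dvd_trans (by simp) h)

lemma self_mem_suslinIdeal (π : A) (w : ι → Polynomial A) : π ∈ suslinIdeal π w := by
  refine fun b b' h => .of_forall_dvd fun i => ?_
  rw [← dvd_neg, neg_sub]
  exact h.trans (sub_dvd_comp_sub_comp _ _ _)

lemma mem_suslinIdeal_of_mem_span_pair [IsDomain A] {π c : A} {w : ι → Polynomial A} {i₀ i₁ : ι}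
    (hne : i₀ ≠ i₁) (h : Polynomial.C c ∈ Ideal.span {w i₀, w i₁}) : c ∈ suslinIdeal π w := by
  intro b b' hb
  obtain ⟨p, q, hpq⟩ := Ideal.mem_span_pair.1 h
  have comp_eq (f : Polynomial A) : ∃ t, f.comp b' = f.comp b + Polynomial.C c * t := by
    obtain ⟨t, ht⟩ := hb.trans (sub_dvd_comp_sub_comp f b b')
    exact ⟨t, by linear_combination ht⟩
  have bezout (b : Polynomial A) :
      p.comp b * (w i₀).comp b + q.comp b * (w i₁).comp b = Polynomial.C c := by
    simpa using congrArg (Polynomial.comp · b) hpq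
  choose t ht using fun i => comp_eq (w i)
  obtain ⟨m₁, hm₁⟩ := comp_eq p
  obtain ⟨m₂, hm₂⟩ := comp_eq q
  exact colEquivMod_of_mul_add_mul_eq hne ht (bezout b) (by rw [← hm₁, ← hm₂, bezout])

lemma suslinIdeal_update_le (π : A) (w a : ι → Polynomial A) {i₁ : ι} (ha : a i₁ = 0) :
    suslinIdeal π (Function.update w i₁ (w i₁ + a ⬝ᵥ w)) ≤ suslinIdeal π w := by
  have rowOperation (b : Polynomial A) : ColEquivMod (Polynomial.C π) (fun i => (w i).comp b)
      fun i => (Function.update w i₁ (w i₁ + a ⬝ᵥ w) i).comp b := by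
    convert ColEquivMod.update_add_dotProduct (fun i => (w i).comp b) (fun i => (a i).comp b)
      (i₁ := i₁) (by simp [ha]) using 1
    ext1 i
    obtain rfl | hi := eq_or_ne i i₁
    · simp [dotProduct, Polynomial.sum_comp]
    · simp [hi]
  exact fun c hc b b' hb => (rowOperation b).trans ((hc b b' hb).trans (rowOperation b').symm)

lemma exists_notMem_mem_suslinIdeal [IsDomain A] [Nontrivial ι] {π : A} {w : ι → Polynomial A}
    {i₀ : ι} (hw : (w i₀).Monic) (h : IsUnimodularMod (Polynomial.C π) w) (m : Ideal A)
    [m.IsMaximal] (hπ : π ∈ m) : ∃ c ∉ m, c ∈ suslinIdeal π w := by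
  let : Field (A ⧸ m) := Ideal.Quotient.field m
  obtain ⟨i₁, hne⟩ := exists_ne i₀
  have hzero : Polynomial.mapRingHom (Ideal.Quotient.mk m) (Polynomial.C π) = 0 := by
    simp [Ideal.Quotient.eq_zero_iff_mem.2 hπ]
  have unimodular := hzero ▸ h.map (Polynomial.mapRingHom (Ideal.Quotient.mk m))
  obtain ⟨a, ha, hcop⟩ := (unimodular.of_dvd (dvd_zero _)).exists_isCoprime_add_dotProduct
    (hw.map (Ideal.Quotient.mk m)).ne_zero i₁
  obtain ⟨a, ha₁, rfl⟩ : ∃ a' : ι → Polynomial A, a' i₁ = 0 ∧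
      (fun i => (a' i).map (Ideal.Quotient.mk m)) = a := by
    choose a' ha' using fun i => Polynomial.map_surjective _ Ideal.Quotient.mk_surjective (a i)
    refine ⟨Function.update a' i₁ 0, by simp, funext fun i => ?_⟩
    obtain rfl | hi := eq_or_ne i i₁ <;> simp [*]
  obtain ⟨c, hc, hmem⟩ := exists_notMem_C_mem_span_pair m (g := w i₁ + a ⬝ᵥ w) hw <| by
    simpa [dotProduct, Polynomial.map_sum] using hcop
  refine ⟨c, hc, suslinIdeal_update_le π w a ha₁ (mem_suslinIdeal_of_mem_span_pair hne.symm ?_)⟩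
  simpa [hne.symm] using hmem

/-- Suslin's lemma. -/
theorem colEquivMod_comp_of_monic [IsDomain A] [Nontrivial ι] {π : A} {w : ι → Polynomial A}
    {i₀ : ι} (hw : (w i₀).Monic) (h : IsUnimodularMod (Polynomial.C π) w) (b b' : Polynomial A) :
    ColEquivMod (Polynomial.C π) (fun i => (w i).comp b) (fun i => (w i).comp b') := by
  suffices hJ : suslinIdeal π w = ⊤ from
    (hJ ▸ Submodule.mem_top : (1 : A) ∈ suslinIdeal π w) b b' (by simp)
  by_contra hJ
  obtain ⟨m, hm, hle⟩ := Ideal.exists_le_maximal _ hJ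
  obtain ⟨c, hc, hmem⟩ := exists_notMem_mem_suslinIdeal hw h m (hle (self_mem_suslinIdeal π w))
  exact hc (hle hmem)

lemma colEquivMod_comp_of_dvd_sub_monic [IsDomain A] [Nontrivial ι] {π u u' : A}
    {w : ι → Polynomial A} {i₀ : ι} {f : Polynomial A} (hu : π ∣ u * u' - 1) (hf : f.Monic)
    (hw : Polynomial.C π ∣ Polynomial.C u * w i₀ - f) (h : IsUnimodularMod (Polynomial.C π) w)
    (b b' : Polynomial A) :
    ColEquivMod (Polynomial.C π) (fun i => (w i).comp b) (fun i => (w i).comp b') := by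
  let w' : ι → Polynomial A := Function.update (Polynomial.C u • w) i₀ f
  have hw' (i : ι) : Polynomial.C π ∣ (Polynomial.C u • w) i - w' i := by
    obtain rfl | hi := eq_or_ne i i₀
    · simpa [w'] using hw
    · simp [w', hi]
  have hw'' (i : ι) : Polynomial.C π ∣ w i - (Polynomial.C u' • w') i := by
    have hu' : Polynomial.C π ∣ Polynomial.C (u * u' - 1) := map_dvd _ hu
    convert dvd_sub ((hw' i).mul_left (Polynomial.C u')) (hu'.mul_left (w i)) using 1
    simp only [Pi.smul_apply, smul_eq_mul, map_sub, map_mul, map_one]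
    ring
  have unimodular : IsUnimodularMod (Polynomial.C π) w' := by
    rw [IsUnimodularMod, eq_top_iff, ← (ColEquivMod.of_forall_dvd hw'').isUnimodularMod h]
    refine sup_le (Ideal.span_le.2 ?_) le_sup_right
    rintro _ ⟨i, rfl⟩
    exact Ideal.mul_mem_left _ _ (Ideal.mem_sup_left (Ideal.subset_span ⟨i, rfl⟩))
  have comp_equiv (b : Polynomial A) : ColEquivMod (Polynomial.C π) (fun i => (w i).comp b)
      (Polynomial.C u' • fun i => (w' i).comp b) := .of_forall_dvd fun i => by
    obtain ⟨s, hs⟩ := hw'' i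
    exact ⟨s.comp b, by simpa using congrArg (Polynomial.comp · b) hs⟩
  exact (comp_equiv b).trans (.trans (.const_smul _ (colEquivMod_comp_of_monic
    (i₀ := i₀) (by simpa [w'] using hf) unimodular b b')) (comp_equiv b').symm)

end Suslin

section Coordinates

lemma exists_leadingCoeff_sum_C_mul_eq {A ι : Type*} [CommRing A] {s : Finset ι}
    (hs : s.Nonempty) {c : ι → A} (hc : ∀ v ∈ s, c v ≠ 0) {M : ι → Polynomial A}
    (hM : ∀ v ∈ s, (M v).Monic) (hinj : Set.InjOn (fun v => (M v).natDegree) s) :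
    ∃ v ∈ s, (∑ v ∈ s, Polynomial.C (c v) * M v).leadingCoeff = c v := by
  classical
  obtain ⟨v, hv, hmax⟩ := s.exists_max_image (fun v => (M v).natDegree) hs
  have degree_eq (w : ι) (hw : w ∈ s) : (Polynomial.C (c w) * M w).degree = (M w).degree := by
    rw [(hM w hw).degree_mul, Polynomial.degree_C (hc w hw), zero_add]
  have : Nontrivial A := ⟨_, _, hc v hv⟩
  refine ⟨v, hv, ?_⟩
  rw [← Finset.add_sum_erase s _ hv, add_comm, Polynomial.leadingCoeff_add_of_degree_lt,
    Polynomial.leadingCoeff_mul_monic (hM v hv), Polynomial.leadingCoeff_C]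
  refine (Polynomial.degree_sum_le _ _).trans_lt ((Finset.sup_lt_iff ?_).2 fun w hw => ?_)
  · rw [degree_eq v hv, bot_lt_iff_ne_bot, Polynomial.degree_ne_bot]
    exact (hM v hv).ne_zero
  · obtain ⟨hne, hws⟩ := Finset.mem_erase.1 hw
    rw [degree_eq w hws, degree_eq v hv]
    exact Polynomial.degree_lt_degree ((hmax w hws).lt_of_ne fun h => hne (hinj hws hv h))

variable {k : Type*} [CommRing k] {n : ℕ}

/-- The endomorphism `X₀ ↦ X₀`, `Xᵢ₊₁ ↦ Xᵢ₊₁ + c X₀ ^ (e i)` of a polynomial ring. -/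
noncomputable def shearHom (c : k) (e : Fin n → ℕ) :
    MvPolynomial (Fin (n + 1)) k →ₐ[k] MvPolynomial (Fin (n + 1)) k :=
  aeval (Fin.cons (X 0) fun i => X i.succ + C c * X 0 ^ e i)

lemma shearHom_comp_shearHom {c c' : k} (h : c + c' = 0) (e : Fin n → ℕ) :
    (shearHom c e).comp (shearHom c' e) = AlgHom.id k _ := by
  refine MvPolynomial.algHom_ext fun i => ?_
  cases i using Fin.cases with
  | zero => simp [shearHom]
  | succ i => simp [shearHom, algHom_C, add_assoc, ← add_mul, ← C_add, h]

/-- Nagata's change of coordinates: after the substitution `Xᵢ₊₁ ↦ Xᵢ₊₁ + X₀ ^ (e i)`, a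
polynomial is viewed as a polynomial in `X₀` over the other variables. -/
noncomputable def nagataEquiv (e : Fin n → ℕ) :
    MvPolynomial (Fin (n + 1)) k ≃ₐ[k] Polynomial (MvPolynomial (Fin n) k) :=
  (AlgEquiv.ofAlgHom (shearHom 1 e) (shearHom (-1) e) (shearHom_comp_shearHom (by simp) e)
    (shearHom_comp_shearHom (by simp) e)).trans (finSuccEquiv k n)

@[simp]
lemma nagataEquiv_C (e : Fin n → ℕ) (a : k) : nagataEquiv e (C a) = Polynomial.C (C a) :=
  (nagataEquiv e).commutes a

@[simp]
lemma nagataEquiv_X_zero (e : Fin n → ℕ) :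
    nagataEquiv (k := k) e (X 0) = Polynomial.X := by
  simp [nagataEquiv, shearHom, finSuccEquiv_X_zero]

@[simp]
lemma nagataEquiv_X_succ (e : Fin n → ℕ) (i : Fin n) :
    nagataEquiv (k := k) e (X i.succ) = Polynomial.X ^ e i + Polynomial.C (X i) := by
  simp [nagataEquiv, shearHom, finSuccEquiv_X_zero, finSuccEquiv_X_succ, add_comm]

lemma nagataEquiv_map {k' : Type*} [CommRing k'] (φ : k →+* k') (e : Fin n → ℕ)
    (f : MvPolynomial (Fin (n + 1)) k) :
    nagataEquiv e (map φ f) = (nagataEquiv e f).map (map φ) := by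
  induction f using MvPolynomial.induction_on with
  | C a => simp
  | add p q hp hq => simp [hp, hq]
  | mul_X p i hp =>
    have hX : nagataEquiv e (X i) = (nagataEquiv (k := k) e (X i)).map (map φ) := by
      cases i using Fin.cases <;> simp
    simp [hp, hX]

lemma nagataEquiv_monomial (e : Fin n → ℕ) (v : Fin (n + 1) →₀ ℕ) (a : k) :
    nagataEquiv e (monomial v a) = Polynomial.C (C a) * (Polynomial.X ^ v 0 *
      ∏ i : Fin n, (Polynomial.X ^ e i + Polynomial.C (X i)) ^ v i.succ) := by
  simp [monomial_eq, Finsupp.prod_pow, Fin.prod_univ_succ]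

lemma sum_mul_pow_injOn (d : ℕ) (s : Set (Fin n →₀ ℕ)) (hs : ∀ v ∈ s, ∀ i, v i < d) :
    Set.InjOn (fun v : Fin n →₀ ℕ => ∑ i, v i * d ^ (i : ℕ)) s := by
  intro v hv w hw h
  have := finFunctionFinEquiv.injective (a₁ := fun i => (⟨v i, hs v hv i⟩ : Fin d))
    (a₂ := fun i => ⟨w i, hs w hw i⟩) (Fin.ext (by simpa [finFunctionFinEquiv_apply] using h))
  exact Finsupp.ext fun i => congrArg Fin.val (congrFun this i)

lemma exists_leadingCoeff_nagataEquiv_eq_C {k : Type*} [Field k]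
    {f : MvPolynomial (Fin (n + 1)) k} (hf : f ≠ 0) :
    ∃ (e : Fin n → ℕ) (a : k), a ≠ 0 ∧ (nagataEquiv e f).leadingCoeff = C a := by
  let d := f.totalDegree + 1
  let e : Fin n → ℕ := fun i => d ^ (i.succ : ℕ)
  let M : (Fin (n + 1) →₀ ℕ) → Polynomial (MvPolynomial (Fin n) k) := fun v =>
    Polynomial.X ^ v 0 * ∏ i : Fin n, (Polynomial.X ^ e i + Polynomial.C (X i)) ^ v i.succ
  have factor_monic (i : Fin n) : (Polynomial.X ^ e i + Polynomial.C (X (R := k) i)).Monic :=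
    Polynomial.monic_X_pow_add_C _ (by positivity)
  have prod_monic (v : Fin (n + 1) →₀ ℕ) :
      (∏ i : Fin n, (Polynomial.X ^ e i + Polynomial.C (X (R := k) i)) ^ v i.succ).Monic :=
    Polynomial.monic_prod_of_monic _ _ fun i _ => (factor_monic i).pow _
  have natDegree_M (v : Fin (n + 1) →₀ ℕ) : (M v).natDegree = ∑ i, v i * d ^ (i : ℕ) := by
    rw [(Polynomial.monic_X_pow _).natDegree_mul (prod_monic v),
      Polynomial.natDegree_prod_of_monic _ _ fun i _ => (factor_monic i).pow _]
    simp [Fin.sum_univ_succ, e]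
  have exponent_lt (v : Fin (n + 1) →₀ ℕ) (hv : v ∈ f.support) (i : Fin (n + 1)) : v i < d :=
    Nat.lt_succ_of_le ((monomial_le_degreeOf i hv).trans (degreeOf_le_totalDegree f i))
  obtain ⟨v, hv, hlc⟩ := exists_leadingCoeff_sum_C_mul_eq (support_nonempty.2 hf)
    (c := fun v => C (coeff v f)) (M := M) (by simp)
    (fun v _ => (Polynomial.monic_X_pow _).mul (prod_monic v))
    (by simpa only [natDegree_M] using sum_mul_pow_injOn d _ exponent_lt)
  refine ⟨e, coeff v f, mem_support_iff.1 hv, ?_⟩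
  rw [← hlc]
  conv_lhs => rw [← f.support_sum_monomial_coeff, map_sum]
  simp only [nagataEquiv_monomial, M]

variable {B : Type*} [CommRing B]

lemma exists_nagataEquiv_dvd_sub_monic {π : B} [hπ : (Ideal.span {π}).IsMaximal]
    {f : MvPolynomial (Fin (n + 1)) B} (hf : ¬ C π ∣ f) :
    ∃ (e : Fin n → ℕ) (u u' : B) (q : Polynomial (MvPolynomial (Fin n) B)), π ∣ u * u' - 1 ∧
      q.Monic ∧ Polynomial.C (C π) ∣ Polynomial.C (C u) * nagataEquiv e f - q := by
  let : Field (B ⧸ Ideal.span {π}) := Ideal.Quotient.field _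
  let mk := Ideal.Quotient.mk (Ideal.span {π})
  have mk_eq_zero (b : B) : mk b = 0 ↔ π ∣ b := Ideal.Quotient.eq_zero_iff_dvd π b
  rw [C_dvd_iff_map_hom_eq_zero mk π mk_eq_zero] at hf
  obtain ⟨e, a, ha, hlc⟩ := exists_leadingCoeff_nagataEquiv_eq_C hf
  obtain ⟨u', rfl⟩ := Ideal.Quotient.mk_surjective a
  obtain ⟨u, hu⟩ := Ideal.Quotient.mk_surjective (mk u')⁻¹
  have monic : ((Polynomial.C (C u) * nagataEquiv e f).map (map mk)).Monic := by
    rw [Polynomial.map_mul, ← nagataEquiv_map, Polynomial.Monic, Polynomial.leadingCoeff_mul, hlc]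
    simp only [Polynomial.map_C, map_C, Polynomial.leadingCoeff_C, ← C_mul]
    rw [hu, inv_mul_cancel₀ ha, C_1]
  obtain ⟨q, hq, -, hqm⟩ := Polynomial.lifts_and_natDegree_eq_and_monic
    ((Polynomial.mem_lifts _).2 ⟨_, rfl⟩) monic
  refine ⟨e, u, u', q, ?_, hqm, ?_⟩
  · rw [← mk_eq_zero, map_sub, map_mul, hu, inv_mul_cancel₀ ha, map_one, sub_self]
  · refine (Polynomial.C_dvd_iff_dvd_coeff _ _).2 fun i => ?_
    rw [C_dvd_iff_map_hom_eq_zero mk π mk_eq_zero, ← Polynomial.coeff_map, Polynomial.map_sub, hq,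
      sub_self, Polynomial.coeff_zero]

variable {ι : Type*} [Fintype ι] [DecidableEq ι]

lemma exists_colEquivMod_C [IsDomain B] [Nontrivial ι] {π : B} [hπ : (Ideal.span {π}).IsMaximal]
    {w : ι → MvPolynomial (Fin n) B} (h : IsUnimodularMod (C π) w) :
    ∃ v : ι → B, ColEquivMod (C π) w fun i => C (v i) := by
  induction n with
  | zero =>
    refine ⟨fun i => (w i).coeff 0, .of_forall_dvd fun i => ?_⟩
    rw [← eq_C_of_isEmpty, sub_self]
    exact dvd_zero _
  | succ n ih =>
    obtain ⟨i₀, hi₀⟩ : ∃ i₀, ¬ C π ∣ w i₀ := by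
      by_contra! hdvd
      have hunit := (h.isUnit_of_forall_dvd dvd_rfl hdvd).map constantCoeff
      rw [constantCoeff_C] at hunit
      exact hπ.ne_top (Ideal.span_singleton_eq_top.2 hunit)
    obtain ⟨e, u, u', q, hu, hq, hdvd⟩ := exists_nagataEquiv_dvd_sub_monic hi₀
    have unimodular : IsUnimodularMod (Polynomial.C (C π)) fun i => nagataEquiv e (w i) := by
      rw [← nagataEquiv_C e]
      exact h.map (nagataEquiv e).toRingEquiv.toRingHom
    have hC : (C π : MvPolynomial (Fin n) B) ∣ C u * C u' - 1 := by simpa using map_dvd C hu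
    have eval_zero := colEquivMod_comp_of_dvd_sub_monic
      (w := fun i => nagataEquiv e (w i)) hC hq hdvd unimodular Polynomial.X 0
    simp only [Polynomial.comp_X, Polynomial.comp_zero] at eval_zero
    obtain ⟨v, hv⟩ := ih (w := fun i => (nagataEquiv e (w i)).eval 0) <| by
      simpa using unimodular.map (Polynomial.evalRingHom 0)
    have symm_C (b : B) : (nagataEquiv e).symm (Polynomial.C (C b)) = C b := by
      rw [AlgEquiv.symm_apply_eq, nagataEquiv_C]
    have := (eval_zero.trans (hv.map Polynomial.C)).map (nagataEquiv e).symm.toRingEquiv.toRingHom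
    refine ⟨v, ?_⟩
    simpa [symm_C] using this

end Coordinates

section Hermite

/-- A commutative ring is Hermite if every unimodular column can be completed to an invertible
matrix, that is, moved to a standard basis vector by an invertible matrix. -/
def IsHermiteRing (A : Type*) [CommRing A] : Prop :=
  ∀ (n : ℕ) (w : Fin n → A) (i : Fin n), Ideal.span (Set.range w) = ⊤ →
    ∃ γ : (Matrix (Fin n) (Fin n) A)ˣ, γ.val *ᵥ w = Pi.single i 1

lemma IsHermiteRing.of_ringEquiv {A B : Type*} [CommRing A] [CommRing B] (e : A ≃+* B)
    (h : IsHermiteRing A) : IsHermiteRing B := by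
  intro n w i hw
  obtain ⟨γ, hγ⟩ := h n (e.symm ∘ w) i <| by
    simpa [Ideal.map_span, ← Set.range_comp, Ideal.map_top] using congrArg (Ideal.map e.symm) hw
  refine ⟨Units.map (e : A →+* B).mapMatrix.toMonoidHom γ, funext fun j => ?_⟩
  have := congrArg e (congrFun hγ j)
  simpa [mulVec, dotProduct, Pi.single_apply, apply_ite e] using this

lemma isHermiteRing_mvPolynomial_fin (K : Type*) [Field K] (N : ℕ) :
    IsHermiteRing (MvPolynomial (Fin N) K) := by
  intro n w i hw
  have hw₀ : IsUnimodularMod 0 w := isUnimodularMod_zero.2 hw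
  suffices h : ColEquivMod 0 w (Pi.single i 1) from
    h.imp fun γ hγ => funext fun j => sub_eq_zero.1 (zero_dvd_iff.1 (hγ j))
  have : (Ideal.span {(0 : K)}).IsMaximal := by
    rw [Ideal.span_singleton_zero]
    exact Ideal.bot_isMaximal
  cases subsingleton_or_nontrivial (Fin n) with
  | inl _ =>
    refine .single_of_isUnit i i (hw₀.isUnit_of_forall_dvd (dvd_zero _) fun j => ?_)
    rw [Subsingleton.elim i j]
  | inr _ =>
    obtain ⟨v, hv⟩ := exists_colEquivMod_C (π := (0 : K)) (by simpa using hw₀)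
    rw [C_0] at hv
    obtain ⟨j, hj⟩ : ∃ j, v j ≠ 0 := by
      by_contra! hzero
      have := isUnimodularMod_zero.1 (hv.isUnimodularMod hw₀)
      simp [hzero] at this
    exact hv.trans (.single_of_isUnit i j (hj.isUnit.map C))

end Hermite

section StablyFree

lemma schanuel {A P Q M : Type*} [CommRing A] [AddCommGroup P] [AddCommGroup Q] [AddCommGroup M]
    [Module A P] [Module A Q] [Module A M] [Module.Projective A P] [Module.Projective A Q]
    {f : P →ₗ[A] M} {g : Q →ₗ[A] M} (hf : Function.Surjective f) (hg : Function.Surjective g) :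
    Nonempty ((LinearMap.ker f × Q) ≃ₗ[A] LinearMap.ker g × P) := by
  obtain ⟨s, hs⟩ := Module.projective_lifting_property f g hf
  obtain ⟨t, ht⟩ := Module.projective_lifting_property g f hg
  have hs' (q : Q) : f (s q) = g q := LinearMap.congr_fun hs q
  have ht' (p : P) : g (t p) = f p := LinearMap.congr_fun ht p
  let u : (LinearMap.ker f × Q) →ₗ[A] LinearMap.ker g :=
    (LinearMap.snd A _ Q - t ∘ₗ (LinearMap.ker f).subtype.coprod s).codRestrict _ <| by
      rintro ⟨⟨p, hp⟩, q⟩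
      simp [hs', ht', LinearMap.mem_ker.1 hp]
  let v : (LinearMap.ker g × P) →ₗ[A] LinearMap.ker f :=
    (LinearMap.snd A _ P - s ∘ₗ (LinearMap.ker g).subtype.coprod t).codRestrict _ <| by
      rintro ⟨⟨q, hq⟩, p⟩
      simp [hs', ht', LinearMap.mem_ker.1 hq]
  refine ⟨LinearEquiv.ofLinearMap (u.prod ((LinearMap.ker f).subtype.coprod s))
    (v.prod ((LinearMap.ker g).subtype.coprod t)) ?_ ?_⟩ <;>
  ext x <;> simp [u, v]

lemma span_range_eq_top_of_apply_eq_one {A M ι : Type*} [CommRing A] [AddCommGroup M] [Module A M]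
    [Finite ι] (e : M ≃ₗ[A] (ι → A)) {f : M →ₗ[A] A} {x : M} (hx : f x = 1) :
    Ideal.span (Set.range (e x)) = ⊤ := by
  classical
  have := Fintype.ofFinite ι
  have f_eq_sum := LinearMap.pi_apply_eq_sum_univ (f ∘ₗ e.symm.toLinearMap) (e x)
  simp only [LinearMap.comp_apply, LinearEquiv.coe_coe, LinearEquiv.symm_apply_apply, hx]
    at f_eq_sum
  refine (Ideal.eq_top_iff_one _).2 (Set.mem_of_eq_of_mem f_eq_sum ?_)
  exact Ideal.sum_mem _ fun i _ => Ideal.mul_mem_right _ _ (Ideal.subset_span ⟨i, rfl⟩)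

lemma ker_funLeft_val_ne {A ι : Type*} [CommRing A] [DecidableEq ι] (i : ι) :
    LinearMap.ker (LinearMap.funLeft A A (Subtype.val : {j // j ≠ i} → ι)) =
      Submodule.span A {Pi.single i 1} := by
  ext v
  rw [LinearMap.mem_ker, Submodule.mem_span_singleton]
  refine ⟨fun hv => ⟨v i, funext fun j => ?_⟩, ?_⟩
  · obtain rfl | hj := eq_or_ne j i
    · simp
    · simpa [hj] using (congrFun hv ⟨j, hj⟩).symm
  · rintro ⟨a, rfl⟩
    ext ⟨j, hj⟩
    simp [hj]

lemma IsHermiteRing.free_of_free_prod {A : Type*} [CommRing A] (hA : IsHermiteRing A)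
    (P : Type*) [AddCommGroup P] [Module A P] [Module.Finite A P] [Module.Free A (P × A)] :
    Module.Free A P := by
  obtain _ | _ := subsingleton_or_nontrivial A
  · have := Module.subsingleton A P
    infer_instance
  let e := (Module.finBasis A (P × A)).equivFun
  have unimodular : Ideal.span (Set.range (e (0, 1))) = ⊤ :=
    span_range_eq_top_of_apply_eq_one e (f := LinearMap.snd A P A) rfl
  obtain ⟨i⟩ : Nonempty (Fin (Module.finrank A (P × A))) := by
    by_contra hempty
    have := not_nonempty_iff.1 hempty
    rw [Set.range_eq_empty, Ideal.span_empty] at unimodular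
    exact bot_ne_top unimodular
  obtain ⟨γ, hγ⟩ := hA _ _ i unimodular
  let e' := e.trans (Matrix.toLin'OfInv γ.inv_mul γ.mul_inv)
  let forget := LinearMap.funLeft A A (Subtype.val : {j // j ≠ i} → _)
  have ker_fst : LinearMap.ker (LinearMap.fst A P A) = Submodule.span A {(0, 1)} := by
    ext ⟨p, a⟩
    simp [Submodule.mem_span_singleton, eq_comm]
  have map_ker : (LinearMap.ker (LinearMap.fst A P A)).map (e' : (P × A) →ₗ[A] _) =
      LinearMap.ker forget := by
    rw [ker_fst, ker_funLeft_val_ne, Submodule.map_span, Set.image_singleton]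
    exact congrArg (fun v => Submodule.span A {v}) hγ
  exact .of_equiv <| (LinearMap.quotKerEquivOfSurjective forget
    (LinearMap.funLeft_surjective_of_injective A A _ Subtype.val_injective)).symm.trans <|
      (Submodule.Quotient.equiv _ _ e' map_ker).symm.trans <|
        LinearMap.quotKerEquivOfSurjective _ LinearMap.fst_surjective

lemma IsHermiteRing.free_of_free_prod_pi {A : Type*} [CommRing A] (hA : IsHermiteRing A) (k : ℕ)
    (P : Type*) [AddCommGroup P] [Module A P] [Module.Finite A P]
    (h : Module.Free A (P × (Fin k → A))) : Module.Free A P := by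
  induction k with
  | zero => exact .of_equiv (LinearEquiv.prodUnique (R := A) (M := P) (M₂ := Fin 0 → A))
  | succ k ih =>
    have : Module.Free A ((P × (Fin k → A)) × A) := .of_equiv <|
      ((LinearEquiv.refl A P).prodCongr ((Fin.consLinearEquiv A fun _ : Fin (k + 1) => A).symm.trans
        (LinearEquiv.prodComm A _ _))).trans (LinearEquiv.prodAssoc A P (Fin k → A) A).symm
    exact ih (hA.free_of_free_prod (P × (Fin k → A)))

theorem IsHermiteRing.free_of_isStablyFree {A : Type*} [CommRing A] (hA : IsHermiteRing A)
    (P : Type*) [AddCommGroup P] [Module A P] [Module.Finite A P] [Module.IsStablyFree A P] :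
    Module.Free A P := by
  obtain _ | _ := subsingleton_or_nontrivial A
  · have := Module.subsingleton A P
    infer_instance
  obtain ⟨N, _, _, _, _, _⟩ := Module.IsStablyFree.exist_free_prod A P
  have : Module.Free A (P × (Fin (Module.finrank A N) → A)) :=
    .of_equiv ((LinearEquiv.refl A P).prodCongr (Module.finBasis A N).equivFun)
  exact hA.free_of_free_prod_pi (Module.finrank A N) P this

end StablyFree

section CharacteristicSequence

variable {A M κ : Type*} [CommRing A] [AddCommGroup M] [Module A M] [Module (Polynomial A) M]
  [IsScalarTower A (Polynomial A) M] [Fintype κ] [DecidableEq κ]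

lemma polynomial_smul_mem {S : Submodule A M}
    (hX : ∀ m ∈ S, (Polynomial.X : Polynomial A) • m ∈ S) (p : Polynomial A) {m : M}
    (hm : m ∈ S) : p • m ∈ S := by
  induction p using Polynomial.induction_on generalizing m with
  | C a =>
    rw [← Polynomial.algebraMap_eq, algebraMap_smul]
    exact S.smul_mem a hm
  | add p q hp hq =>
    rw [add_smul]
    exact S.add_mem (hp hm) (hq hm)
  | monomial n a h =>
    rw [pow_succ, ← mul_assoc, mul_smul]
    exact h (hX m hm)

lemma charmatrix_mulVec (T : Matrix κ κ A) (q : κ → Polynomial A) :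
    charmatrix T *ᵥ q = (Polynomial.X : Polynomial A) • q - T.map Polynomial.C *ᵥ q := by
  rw [charmatrix, sub_mulVec, scalar_apply, ← smul_one_eq_diagonal, smul_mulVec, one_mulVec]
  rfl

lemma exists_eq_charmatrix_mulVec_add_C (T : Matrix κ κ A) (f : κ → Polynomial A) :
    ∃ (q : κ → Polynomial A) (c : κ → A), f = charmatrix T *ᵥ q + Polynomial.C ∘ c := by
  let S : Submodule A (κ → Polynomial A) :=
    (LinearMap.range (charmatrix T).mulVecLin).restrictScalars A ⊔
      LinearMap.range ((Algebra.linearMap A (Polynomial A)).compLeft κ)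
  have mem_S (f : κ → Polynomial A) :
      f ∈ S ↔ ∃ q c, f = charmatrix T *ᵥ q + Polynomial.C ∘ c := by
    simp only [S, Submodule.mem_sup, Submodule.restrictScalars_mem, LinearMap.mem_range,
      exists_exists_eq_and, mulVecLin_apply, eq_comm (a := f)]
    rfl
  have X_smul_mem : ∀ f ∈ S, (Polynomial.X : Polynomial A) • f ∈ S := by
    intro f hf
    obtain ⟨q, c, rfl⟩ := (mem_S f).1 hf
    have C_mulVec : Polynomial.C ∘ (T *ᵥ c) = T.map Polynomial.C *ᵥ (Polynomial.C ∘ c) :=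
      funext fun i => RingHom.map_mulVec Polynomial.C T c i
    refine (mem_S _).2 ⟨(Polynomial.X : Polynomial A) • q + Polynomial.C ∘ c, T *ᵥ c, ?_⟩
    rw [mulVec_add, mulVec_smul, charmatrix_mulVec T (Polynomial.C ∘ c), C_mulVec, smul_add]
    abel
  rw [← mem_S, pi_eq_sum_univ' f]
  refine S.sum_mem fun j _ => polynomial_smul_mem X_smul_mem _ ?_
  exact (mem_S _).2 ⟨0, Pi.single j 1, by
    ext1 i
    simp [Pi.single_apply, apply_ite Polynomial.C]⟩

/-- This is the characteristic sequence `0 → A[X]^k → A[X]^k → M → 0`. -/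
lemma exists_surjective_ker_equiv [IsDomain A] [Module.Free A M] [Module.Finite A M] :
    ∃ (k : ℕ) (ψ : (Fin k → Polynomial A) →ₗ[Polynomial A] M), Function.Surjective ψ ∧
      Nonempty ((Fin k → Polynomial A) ≃ₗ[Polynomial A] LinearMap.ker ψ) := by
  let b := Module.finBasis A M
  let T := LinearMap.toMatrix b b (Algebra.lsmul A A M (Polynomial.X : Polynomial A))
  let D := (charmatrix T).mulVecLin
  let ψ := Fintype.linearCombination (Polynomial A) b
  have ψ_C (c : Fin _ → A) : ψ (Polynomial.C ∘ c) = ∑ i, c i • b i := by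
    simp only [ψ, Fintype.linearCombination_apply, Function.comp_apply,
      ← Polynomial.algebraMap_eq, algebraMap_smul]
  have ψ_comp_D : ψ ∘ₗ D = 0 := by
    refine LinearMap.pi_ext' fun j => LinearMap.ext_ring ?_
    have column : T.map Polynomial.C *ᵥ Pi.single j 1 = Polynomial.C ∘ T.col j := by
      rw [mulVec_single_one]
      rfl
    have ψ_single : ψ (Pi.single j 1) = b j := by
      simp [ψ, Fintype.linearCombination_apply_single]
    have ψ_column : ψ (Polynomial.C ∘ T.col j) = (Polynomial.X : Polynomial A) • b j := by
      rw [ψ_C]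
      simp only [T, col_apply, LinearMap.toMatrix_apply]
      exact b.sum_repr _
    change ψ (charmatrix T *ᵥ Pi.single j 1) = 0
    rw [charmatrix_mulVec, map_sub, map_smul, column, ψ_column, ψ_single, sub_self]
  have D_injective : Function.Injective D :=
    (injective_iff_map_eq_zero D).2 fun _ =>
      eq_zero_of_mulVec_eq_zero (charpoly_monic T).ne_zero
  have range_D : LinearMap.range D = LinearMap.ker ψ := by
    refine le_antisymm (LinearMap.range_le_ker_iff.2 ψ_comp_D) fun f hf => ?_
    obtain ⟨q, c, rfl⟩ := exists_eq_charmatrix_mulVec_add_C T f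
    have hD : ψ (charmatrix T *ᵥ q) = 0 := LinearMap.congr_fun ψ_comp_D q
    rw [LinearMap.mem_ker, map_add, hD, zero_add, ψ_C] at hf
    refine ⟨q, ?_⟩
    have hc := Fintype.linearIndependent_iff.1 b.linearIndependent c hf
    ext1 i
    simp [D, hc]
  refine ⟨_, ψ, fun m => ⟨Polynomial.C ∘ b.repr m, ?_⟩,
    ⟨(LinearEquiv.ofInjective D D_injective).trans (LinearEquiv.ofEq _ _ range_D)⟩⟩
  rw [ψ_C, b.sum_repr]

end CharacteristicSequence

section ProjectiveFree

variable {A B : Type*} [CommRing A] [CommRing B] {m : ℕ}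

/-- The idempotent matrix `E` is the projection onto a free direct summand: it factors as `a * b`
with `b * a` an identity matrix. -/
def HasFreeImage (E : Matrix (Fin m) (Fin m) A) : Prop :=
  ∃ (t : ℕ) (a : Matrix (Fin m) (Fin t) A) (b : Matrix (Fin t) (Fin m) A), a * b = E ∧ b * a = 1

lemma HasFreeImage.map {E : Matrix (Fin m) (Fin m) A} (h : HasFreeImage E) (φ : A →+* B) :
    HasFreeImage (E.map φ) := by
  obtain ⟨t, a, b, rfl, hba⟩ := h
  refine ⟨t, a.map φ, b.map φ, (Matrix.map_mul ..).symm, ?_⟩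
  rw [← Matrix.map_mul, hba]
  exact Matrix.map_one _ (map_zero φ) (map_one φ)

lemma hasFreeImage_map_ringEquiv (e : A ≃+* B) {E : Matrix (Fin m) (Fin m) A} :
    HasFreeImage (E.map e) ↔ HasFreeImage E := by
  refine ⟨fun h => ?_, fun h => h.map (e : A →+* B)⟩
  have := h.map (e.symm : B →+* A)
  simpa [Matrix.map_map, ← RingEquiv.coe_trans] using this

lemma hasFreeImage_of_free [Nontrivial A] {E : Matrix (Fin m) (Fin m) A} (hE : E * E = E)
    (h : Module.Free A (LinearMap.range E.mulVecLin)) : HasFreeImage E := by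
  let e := (Module.finBasis A (LinearMap.range E.mulVecLin)).equivFun
  have rangeRestrict_coe (p : LinearMap.range E.mulVecLin) :
      E.mulVecLin.rangeRestrict p = p := by
    obtain ⟨_, x, rfl⟩ := p
    exact Subtype.ext (by simp [hE])
  refine ⟨_, LinearMap.toMatrix' ((LinearMap.range E.mulVecLin).subtype ∘ₗ e.symm.toLinearMap),
    LinearMap.toMatrix' (e.toLinearMap ∘ₗ E.mulVecLin.rangeRestrict), ?_, ?_⟩
  · refine (LinearMap.toMatrix'_comp _ _).symm.trans (Eq.trans ?_ (LinearMap.toMatrix'_toLin' E))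
    congr 1
    ext
    simp
  · rw [← LinearMap.toMatrix'_comp, ← LinearMap.toMatrix'_id]
    congr 1
    ext
    simp [rangeRestrict_coe]

/-- Every finitely generated projective `A`-module is free, phrased through the idempotent matrices
whose images are these modules. -/
def IsProjectiveFree (A : Type*) [CommRing A] : Prop :=
  ∀ (m : ℕ) (E : Matrix (Fin m) (Fin m) A), E * E = E → HasFreeImage E

lemma IsProjectiveFree.free (hA : IsProjectiveFree A) (P : Type*) [AddCommGroup P] [Module A P]
    [Module.Finite A P] [Module.Projective A P] : Module.Free A P := by
  obtain ⟨n, π, hπ⟩ := Module.Finite.exists_fin' A P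
  obtain ⟨σ, hσ⟩ := Module.projective_lifting_property π LinearMap.id hπ
  have hσ' (p : P) : π (σ p) = p := LinearMap.congr_fun hσ p
  obtain ⟨t, a, b, hab, hba⟩ := hA n (LinearMap.toMatrix' (σ ∘ₗ π)) <| by
    rw [← LinearMap.toMatrix'_comp]
    congr 1
    ext
    simp [hσ']
  have mulVec_ab (v : Fin n → A) : a *ᵥ (b *ᵥ v) = σ (π v) := by
    rw [mulVec_mulVec, hab, LinearMap.toMatrix'_mulVec, LinearMap.comp_apply]
  have mulVec_ba (v : Fin t → A) : b *ᵥ (a *ᵥ v) = v := by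
    rw [mulVec_mulVec, hba, one_mulVec]
  refine .of_equiv (LinearEquiv.ofLinearMap (π ∘ₗ a.mulVecLin) (b.mulVecLin ∘ₗ σ) ?_ ?_)
  · ext p
    simp [mulVec_ab, hσ']
  · refine LinearMap.ext fun v => ?_
    simp only [LinearMap.comp_apply, mulVecLin_apply, LinearMap.id_apply]
    rw [← mulVec_ab, mulVec_ba, mulVec_ba]

lemma IsProjectiveFree.of_ringEquiv (e : A ≃+* B) (h : IsProjectiveFree A) :
    IsProjectiveFree B := by
  intro m E hE
  exact (hasFreeImage_map_ringEquiv e.symm).1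
    (h m (E.map (e.symm : B →+* A)) (by rw [← Matrix.map_mul, hE]))

lemma isProjectiveFree_field (K : Type*) [Field K] : IsProjectiveFree K := fun _ _ hE =>
  hasFreeImage_of_free hE inferInstance

end ProjectiveFree

section MonicTorsion

variable {A : Type*} [CommRing A] {g : Polynomial A}

/-- The quotient of Euclidean division by a monic polynomial, as a map of modules over the
coefficient ring. -/
noncomputable def divByMonicHom (hg : g.Monic) : Polynomial A →ₗ[A] Polynomial A where
  toFun p := p /ₘ g
  map_add' p q := hg.isRegular.left <| by
    linear_combination Polynomial.modByMonic_add_div (p + q) g -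
      Polynomial.modByMonic_add_div p g - Polynomial.modByMonic_add_div q g -
      Polynomial.add_modByMonic p q (q := g)
  map_smul' a p := hg.isRegular.left <| by
    have := Polynomial.smul_modByMonic a p (q := g)
    have h₁ := Polynomial.modByMonic_add_div (a • p) g
    have h₂ := congrArg (a • ·) (Polynomial.modByMonic_add_div p g)
    simp only [smul_add, ← mul_smul_comm] at h₂
    simpa [this] using h₁.trans h₂.symm

lemma finite_of_monic_smul_eq_zero {M : Type*} [AddCommGroup M] [Module A M]
    [Module (Polynomial A) M] [IsScalarTower A (Polynomial A) M] [Module.Finite (Polynomial A) M]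
    (hg : g.Monic) (h : ∀ m : M, g • m = 0) : Module.Finite A M := by
  obtain _ | _ := subsingleton_or_nontrivial A
  · have := Module.subsingleton A M
    infer_instance
  obtain ⟨n, π, hπ⟩ := Module.Finite.exists_fin' (Polynomial A) M
  have : Module.Finite A (Polynomial.degreeLT A g.natDegree) :=
    .equiv (Polynomial.degreeLTEquiv A g.natDegree).symm
  refine .of_surjective (π.restrictScalars A ∘ₗ
    (Polynomial.degreeLT A g.natDegree).subtype.compLeft (Fin n)) fun m => ?_
  obtain ⟨x, rfl⟩ := hπ m
  have division : x = (fun i => x i %ₘ g) + g • fun i => x i /ₘ g :=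
    funext fun i => (Polynomial.modByMonic_add_div (x i) g).symm
  have degree_lt (i : Fin n) : x i %ₘ g ∈ Polynomial.degreeLT A g.natDegree := by
    rw [Polynomial.mem_degreeLT, ← Polynomial.degree_eq_natDegree hg.ne_zero]
    exact Polynomial.degree_modByMonic_lt _ hg
  refine ⟨fun i => ⟨x i %ₘ g, degree_lt i⟩, ?_⟩
  conv_rhs => rw [division, map_add, map_smul, h, add_zero]
  rfl

variable {P : Type*} [AddCommGroup P] [Module A P] [Module (Polynomial A) P]
  [IsScalarTower A (Polynomial A) P] {t : ℕ} {i : (Fin t → Polynomial A) →ₗ[Polynomial A] P}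
  {j : P →ₗ[Polynomial A] (Fin t → Polynomial A)}

lemma projective_restrictScalars_polynomial [Module.Finite (Polynomial A) P]
    [Module.Projective (Polynomial A) P] : Module.Projective A P := by
  obtain ⟨n, π, hπ⟩ := Module.Finite.exists_fin' (Polynomial A) P
  obtain ⟨σ, hσ⟩ := Module.projective_lifting_property π LinearMap.id hπ
  exact .of_split (σ.restrictScalars A) (π.restrictScalars A)
    (LinearMap.ext fun p => LinearMap.congr_fun hσ p)

lemma projective_quotient_range (hg : g.Monic) [Module.Projective A P]
    (hji : j ∘ₗ i = g • LinearMap.id) :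
    Module.Projective A (P ⧸ LinearMap.range i) := by
  have retraction : ((divByMonicHom hg).compLeft (Fin t) ∘ₗ j.restrictScalars A) ∘ₗ
      i.restrictScalars A = LinearMap.id := by
    refine LinearMap.ext fun v => funext fun k => ?_
    have : j (i v) = g • v := LinearMap.congr_fun hji v
    simp [this, divByMonicHom, Polynomial.mul_divByMonic_cancel_left _ hg]
  have exact : Function.Exact (i.restrictScalars A)
      ((LinearMap.range i).mkQ.restrictScalars A) := i.exact_map_mkQ_range
  obtain ⟨s, hs⟩ := (((exact.split_tfae' (R := A)).out 1 0 rfl rfl).1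
    ⟨(LinearMap.range i).mkQ_surjective, _, retraction⟩).2
  exact .of_split s _ hs

theorem isStablyFree_of_comp_eq_monic_smul [IsDomain A] (hA : IsProjectiveFree A)
    [Module.Finite (Polynomial A) P] [Module.Projective (Polynomial A) P] (hg : g.Monic)
    (hij : i ∘ₗ j = g • LinearMap.id) (hji : j ∘ₗ i = g • LinearMap.id) :
    Module.IsStablyFree (Polynomial A) P := by
  have smul_eq_zero (m : P ⧸ LinearMap.range i) : g • m = 0 := by
    obtain ⟨p, rfl⟩ := (LinearMap.range i).mkQ_surjective m
    rw [← map_smul, ← LinearMap.id_apply (R := Polynomial A) p, ← LinearMap.smul_apply, ← hij]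
    simp
  have := finite_of_monic_smul_eq_zero hg smul_eq_zero
  have : Module.Projective A P := projective_restrictScalars_polynomial
  have := projective_quotient_range hg hji
  have := hA.free (P ⧸ LinearMap.range i)
  obtain ⟨k, ψ, hψ, ⟨kerψ⟩⟩ := exists_surjective_ker_equiv (A := A) (M := P ⧸ LinearMap.range i)
  obtain ⟨e⟩ := schanuel (LinearMap.range i).mkQ_surjective hψ
  have i_injective : Function.Injective i := (injective_iff_map_eq_zero i).2 fun v hv => by
    have : j (i v) = g • v := LinearMap.congr_fun hji v
    rw [hv, map_zero, eq_comm, smul_eq_zero_iff_right hg.ne_zero] at this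
    exact this
  let kerQ : (Fin t → Polynomial A) ≃ₗ[Polynomial A] LinearMap.ker (LinearMap.range i).mkQ :=
    (LinearEquiv.ofInjective i i_injective).trans
      (LinearEquiv.ofEq _ _ (Submodule.ker_mkQ _).symm)
  have : Module.Free (Polynomial A) ((Fin k → Polynomial A) × P) :=
    .of_equiv ((kerQ.prodCongr (LinearEquiv.refl _ (Fin k → Polynomial A))).trans
      (e.trans (kerψ.symm.prodCongr (LinearEquiv.refl _ P))))
  exact .of_free_prod' _ _ (Fin k → Polynomial A)

end MonicTorsion

section QuillenSuslin

lemma exists_map_eq_smul_of_fractionRing {R : Type*} [CommRing R] [IsDomain R] {m n : Type*}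
    [Finite m] [Finite n] (a : Matrix m n (FractionRing R)) :
    ∃ (g : R) (U : Matrix m n R), g ≠ 0 ∧
      U.map (algebraMap R (FractionRing R)) = algebraMap R (FractionRing R) g • a := by
  obtain ⟨g, hg⟩ := IsLocalization.exist_integer_multiples_of_finite (nonZeroDivisors R)
    fun p : m × n => a p.1 p.2
  choose U hU using hg
  refine ⟨g, Matrix.of fun i j => U (i, j), nonZeroDivisors.coe_ne_zero g, ?_⟩
  ext i j
  rw [Matrix.map_apply, Matrix.of_apply, Matrix.smul_apply, hU, smul_eq_mul, Algebra.smul_def]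

lemma exists_mul_eq_smul_of_idempotent {R : Type*} [CommRing R] [IsDomain R] {m : ℕ}
    {E : Matrix (Fin m) (Fin m) R} (hE : E * E = E) :
    ∃ (t : ℕ) (U : Matrix (Fin m) (Fin t) R) (V : Matrix (Fin t) (Fin m) R) (g : R),
      g ≠ 0 ∧ U * V = g • E ∧ V * U = g • 1 := by
  let φ := algebraMap R (FractionRing R)
  have φ_injective : Function.Injective φ := IsFractionRing.injective R (FractionRing R)
  obtain ⟨t, a, b, hab, hba⟩ := isProjectiveFree_field (FractionRing R) m (E.map φ)
    (by rw [← Matrix.map_mul, hE])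
  obtain ⟨g₁, U, hg₁, hU⟩ := exists_map_eq_smul_of_fractionRing a
  obtain ⟨g₂, V, hg₂, hV⟩ := exists_map_eq_smul_of_fractionRing b
  refine ⟨t, U, V, g₁ * g₂, mul_ne_zero hg₁ hg₂, ?_, ?_⟩ <;> apply Matrix.map_injective φ_injective
  · calc (U * V).map φ = (φ g₁ * φ g₂) • (a * b) := by
          rw [Matrix.map_mul, hU, hV, Matrix.smul_mul, Matrix.mul_smul, smul_smul]
      _ = ((g₁ * g₂) • E).map φ := by
          rw [hab, ← map_mul]
          ext
          simp [φ]
  · calc (V * U).map φ = (φ g₁ * φ g₂) • (b * a) := by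
          rw [Matrix.map_mul, hU, hV, Matrix.smul_mul, Matrix.mul_smul, smul_smul, mul_comm]
      _ = ((g₁ * g₂) • (1 : Matrix _ _ R)).map φ := by
          rw [hba, ← map_mul, smul_one_eq_diagonal, smul_one_eq_diagonal,
            Matrix.diagonal_map (map_zero φ)]

lemma hasFreeImage_of_mul_eq_monic_smul {A : Type*} [CommRing A] [IsDomain A]
    (hA : IsProjectiveFree A) (hH : IsHermiteRing (Polynomial A)) {m t : ℕ}
    {E : Matrix (Fin m) (Fin m) (Polynomial A)} (hE : E * E = E)
    {U : Matrix (Fin m) (Fin t) (Polynomial A)} {V : Matrix (Fin t) (Fin m) (Polynomial A)}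
    {g : Polynomial A} (hg : g.Monic) (hUV : U * V = g • E) (hVU : V * U = g • 1) :
    HasFreeImage E := by
  let P := LinearMap.range E.mulVecLin
  have E_mul_U : E * U = U := smul_right_injective _ hg.ne_zero <| by
    change g • (E * U) = g • U
    rw [← Matrix.smul_mul, ← hUV, Matrix.mul_assoc, hVU, Matrix.mul_smul, Matrix.mul_one]
  have E_mulVec (p : P) : E *ᵥ p = p := by
    obtain ⟨_, x, rfl⟩ := p
    simp [hE]
  let i : (Fin t → Polynomial A) →ₗ[Polynomial A] P :=
    U.mulVecLin.codRestrict P fun v => ⟨U *ᵥ v, by simp [E_mul_U]⟩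
  let j : P →ₗ[Polynomial A] (Fin t → Polynomial A) := V.mulVecLin ∘ₗ P.subtype
  have hij : i ∘ₗ j = g • LinearMap.id := LinearMap.ext fun p => Subtype.ext <| by
    change U *ᵥ (V *ᵥ p) = g • (p : Fin m → Polynomial A)
    rw [mulVec_mulVec, hUV, smul_mulVec, E_mulVec]
  have hji : j ∘ₗ i = g • LinearMap.id := LinearMap.ext fun v => by
    change V *ᵥ (U *ᵥ v) = g • v
    rw [mulVec_mulVec, hVU, smul_mulVec, one_mulVec]
  have : Module.Projective (Polynomial A) P :=
    .of_split P.subtype E.mulVecLin.rangeRestrict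
      (LinearMap.ext fun p => Subtype.ext (E_mulVec p))
  have := isStablyFree_of_comp_eq_monic_smul hA hg hij hji
  exact hasFreeImage_of_free hE (hH.free_of_isStablyFree P)

/-- The Quillen–Suslin theorem. -/
theorem isProjectiveFree_mvPolynomial_fin (K : Type*) [Field K] (N : ℕ) :
    IsProjectiveFree (MvPolynomial (Fin N) K) := by
  induction N with
  | zero => exact (isProjectiveFree_field K).of_ringEquiv (isEmptyRingEquiv K (Fin 0)).symm
  | succ N ih =>
    intro m E hE
    obtain ⟨t, U, V, g, hg, hUV, hVU⟩ := exists_mul_eq_smul_of_idempotent hE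
    obtain ⟨e, a, ha, hlead⟩ := exists_leadingCoeff_nagataEquiv_eq_C hg
    let φ : MvPolynomial (Fin (N + 1)) K →+* Polynomial (MvPolynomial (Fin N) K) :=
      (nagataEquiv e).toRingEquiv.toRingHom
    let c : Polynomial (MvPolynomial (Fin N) K) := Polynomial.C (C a⁻¹)
    have monic : (c * φ g).Monic := by
      rw [Polynomial.Monic, Polynomial.leadingCoeff_mul, Polynomial.leadingCoeff_C]
      exact (congrArg (C a⁻¹ * ·) hlead).trans (by simp [← C_mul, ha])
    have map_smul_E : (g • E).map φ = φ g • E.map φ := by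
      ext
      simp
    have hH : IsHermiteRing (Polynomial (MvPolynomial (Fin N) K)) :=
      (isHermiteRing_mvPolynomial_fin K (N + 1)).of_ringEquiv (nagataEquiv e).toRingEquiv
    refine (hasFreeImage_map_ringEquiv (nagataEquiv e).toRingEquiv).1 ?_
    refine hasFreeImage_of_mul_eq_monic_smul (E := E.map φ) (U := U.map φ) (V := c • V.map φ)
      ih hH ?_ monic ?_ ?_
    · rw [← Matrix.map_mul, hE]
    · rw [Matrix.mul_smul, ← Matrix.map_mul, hUV, map_smul_E, smul_smul]
    · rw [Matrix.smul_mul, ← Matrix.map_mul, hVU, mul_smul, smul_one_eq_diagonal,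
        smul_one_eq_diagonal, Matrix.diagonal_map (map_zero φ)]

end QuillenSuslin

section RankReduction

variable {A : Type*} [CommRing A]

lemma adjugate_bordered_eq [IsDomain A] {l m : Type*} {F : Matrix l m A} {r : ℕ}
    (h : minorIdeal F (r + 1) = ⊥) {f : Fin r → l} {g : Fin r → m}
    (hd : (F.submatrix f g).det ≠ 0) (i : l) (j : m) :
    (fun k => F i (g k)) ⬝ᵥ ((F.submatrix f g).adjugate *ᵥ fun q => F (f q) j) =
      (F.submatrix f g).det * F i j := by
  let a := F.submatrix f g
  let b : Matrix (Fin r) (Fin 1) A := of fun q _ => F (f q) j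
  let c : Matrix (Fin 1) (Fin r) A := of fun _ k => F i (g k)
  let e : Matrix (Fin 1) (Fin 1) A := of fun _ _ => F i j
  have det_bordered : (fromBlocks a b c e).det = 0 := by
    have bordered : fromBlocks a b c e =
        F.submatrix (Sum.elim f fun _ => i) (Sum.elim g fun _ => j) := by
      ext (x | x) (y | y) <;> rfl
    have mem := det_submatrix_mem_minorIdeal F
      ((Sum.elim f fun _ => i) ∘ (finSumFinEquiv (m := r) (n := 1)).symm)
      ((Sum.elim g fun _ => j) ∘ (finSumFinEquiv (m := r) (n := 1)).symm)
    rwa [← submatrix_submatrix, det_submatrix_equiv_self, ← bordered, h, Ideal.mem_bot] at mem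
  have elimination : fromBlocks a b c e * fromBlocks 1 (-(a.adjugate * b)) 0 (a.det • 1) =
      fromBlocks a 0 c (a.det • e - c * (a.adjugate * b)) := by
    rw [fromBlocks_multiply]
    congr 1
    · simp
    · rw [Matrix.mul_neg, ← Matrix.mul_assoc, mul_adjugate]
      simp
    · simp
    · rw [Matrix.mul_neg, Matrix.mul_smul, Matrix.mul_one]
      abel
  have det_eq := congrArg det elimination
  rw [det_mul, det_bordered, zero_mul, det_fromBlocks_zero₁₂] at det_eq
  have schur := (mul_eq_zero.1 det_eq.symm).resolve_left hd
  rw [det_fin_one, Matrix.sub_apply, Matrix.smul_apply, sub_eq_zero, smul_eq_mul] at schur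
  exact schur.symm

lemma submatrix_mul_adjugate_apply {l m : Type*} (F : Matrix l m A) {r : ℕ} (f : Fin r → l)
    (g : Fin r → m) (i : l) (q : Fin r) :
    (F.submatrix id g * (F.submatrix f g).adjugate) i q =
      (F.submatrix (Function.update f q i) g).det := by
  have update : F.submatrix (Function.update f q i) g =
      (F.submatrix f g).updateRow q fun k => F i (g k) := by
    ext x y
    obtain rfl | hx := eq_or_ne x q
    · simp
    · simp [hx, updateRow_ne]
  rw [update, ← cramer_transpose_apply, cramer_eq_adjugate_mulVec, ← adjugate_transpose,
    mulVec_transpose]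
  rfl

variable {l m : Type*} [Fintype l] [Fintype m]

lemma exists_mul_mul_eq_det_smul [IsDomain A] {F : Matrix l m A} {r : ℕ}
    (h : minorIdeal F (r + 1) = ⊥) (f : Fin r → l) (g : Fin r → m) :
    ∃ Y : Matrix m l A, (∀ i j, (F * Y) i j ∈ minorIdeal F r) ∧
      F * Y * F = (F.submatrix f g).det • F := by
  classical
  by_cases hd : (F.submatrix f g).det = 0
  · exact ⟨0, by simp, by simp [hd]⟩
  have pick_cols : F * (1 : Matrix m m A).submatrix id g = F.submatrix id g :=
    mul_submatrix_one (Equiv.refl m) g F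
  have pick_rows : (1 : Matrix l l A).submatrix f id * F = F.submatrix f id :=
    one_submatrix_mul f (Equiv.refl l) F
  refine ⟨(1 : Matrix m m A).submatrix id g * (F.submatrix f g).adjugate *
    (1 : Matrix l l A).submatrix f id, fun i j => ?_, ?_⟩
  · rw [← Matrix.mul_assoc, ← Matrix.mul_assoc, pick_cols, Matrix.mul_apply]
    refine Ideal.sum_mem _ fun q _ => Ideal.mul_mem_right _ _ ?_
    rw [submatrix_mul_adjugate_apply]
    exact det_submatrix_mem_minorIdeal F _ g
  · rw [← Matrix.mul_assoc, ← Matrix.mul_assoc, pick_cols, Matrix.mul_assoc, pick_rows,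
      Matrix.mul_assoc]
    ext i j
    exact adjugate_bordered_eq h hd i j

lemma exists_mul_mul_eq_smul [IsDomain A] {F : Matrix l m A} {r : ℕ}
    (h : minorIdeal F (r + 1) = ⊥) {x : A} (hx : x ∈ minorIdeal F r) :
    ∃ Y : Matrix m l A, (∀ i j, (F * Y) i j ∈ minorIdeal F r) ∧ F * Y * F = x • F := by
  induction hx using Submodule.span_induction with
  | zero => exact ⟨0, by simp, by simp⟩
  | add x y _ _ hx hy =>
    obtain ⟨Y, hY, hYF⟩ := hx
    obtain ⟨Z, hZ, hZF⟩ := hy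
    refine ⟨Y + Z, fun i j => ?_, by rw [Matrix.mul_add, Matrix.add_mul, hYF, hZF, add_smul]⟩
    rw [Matrix.mul_add]
    exact Ideal.add_mem _ (hY i j) (hZ i j)
  | smul a x _ hx =>
    obtain ⟨Y, hY, hYF⟩ := hx
    refine ⟨a • Y, fun i j => ?_, by
      rw [Matrix.mul_smul, Matrix.smul_mul, hYF, smul_smul, smul_eq_mul]⟩
    rw [Matrix.mul_smul]
    exact Ideal.mul_mem_left _ _ (hY i j)
  | mem x hx =>
    obtain ⟨f, g, rfl⟩ := hx
    exact exists_mul_mul_eq_det_smul h f g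

/-- When the maximal minors of `F` generate a principal ideal, the column space of `F` generates a
direct summand after division by that generator: `E` is the projection onto it. -/
lemma exists_idempotent_mul_eq_self [IsDomain A] {F : Matrix l m A} {r : ℕ} {d : A} (hd : d ≠ 0)
    (hr : minorIdeal F r = Ideal.span {d}) (h : minorIdeal F (r + 1) = ⊥) :
    ∃ (E : Matrix l l A) (Y : Matrix m l A), E * E = E ∧ E * F = F ∧ d • E = F * Y := by
  obtain ⟨Y, hY, hYF⟩ := exists_mul_mul_eq_smul h (hr ▸ Ideal.mem_span_singleton_self d)
  simp only [hr, Ideal.mem_span_singleton] at hY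
  choose E hE using hY
  have smul_E : d • of E = F * Y := by
    ext i j
    rw [Matrix.smul_apply, of_apply, smul_eq_mul, hE]
  have E_mul_F : of E * F = F := smul_right_injective _ hd <| by
    change d • (of E * F) = d • F
    rw [← Matrix.smul_mul, smul_E, hYF]
  refine ⟨of E, Y, smul_right_injective _ hd ?_, E_mul_F, smul_E⟩
  change d • (of E * of E) = d • of E
  rw [← Matrix.mul_smul, smul_E, ← Matrix.mul_assoc, E_mul_F]

end RankReduction

section ZeroPadding

variable {A : Type*} [CommRing A] {l m r : ℕ}

lemma minorIdeal_eq_bot_of_lt {n : Type*} {k : ℕ} (G : Matrix (Fin r) n A) (h : r < k) :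
    minorIdeal G k = ⊥ := by
  rw [eq_bot_iff]
  refine minorIdeal_le_iff.2 fun f g => ?_
  obtain ⟨x, y, hxy, hf⟩ := Fintype.exists_ne_map_eq_of_card_lt f (by simpa using h)
  rw [Ideal.mem_bot]
  exact det_zero_of_row_eq hxy (funext fun j => by simp [hf])

lemma smithDiag_one_transpose :
    (smithDiag 1 : Matrix (Fin l) (Fin r) A)ᵀ = smithDiag 1 := by
  ext i j
  simp [smithDiag, eq_comm]

lemma mul_smithDiag_one {n : Type*} (h : r ≤ l) (M : Matrix n (Fin l) A) :
    M * (smithDiag 1 : Matrix (Fin l) (Fin r) A) = M.submatrix id (Fin.castLE h) := by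
  ext i j
  rw [Matrix.mul_apply, Finset.sum_eq_single (Fin.castLE h j)]
  · simp [smithDiag]
  · intro k _ hk
    have : (k : ℕ) ≠ j := fun h' => hk (Fin.ext h')
    simp [smithDiag, this]
  · simp

lemma smithDiag_one_mul_smithDiag_one (h : r ≤ l) :
    (smithDiag 1 : Matrix (Fin r) (Fin l) A) * (smithDiag 1 : Matrix (Fin l) (Fin r) A) = 1 := by
  rw [mul_smithDiag_one h]
  ext i j
  simp [smithDiag, Matrix.one_apply, Fin.ext_iff]

lemma minorIdeal_smithDiag_one_mul {n : Type*} (h : r ≤ l) (G : Matrix (Fin r) n A) (k : ℕ) :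
    minorIdeal ((smithDiag 1 : Matrix (Fin l) (Fin r) A) * G) k = minorIdeal G k := by
  refine (minorIdeal_mul_le_right _ _ _).antisymm ?_
  conv_lhs => rw [← Matrix.one_mul G, ← smithDiag_one_mul_smithDiag_one h, Matrix.mul_assoc]
  exact minorIdeal_mul_le_right _ _ _

/-- The `l × m` matrix with the `r × r` matrix `G` in its top left corner and zeros elsewhere. -/
def zeroPadded (l m : ℕ) (G : Matrix (Fin r) (Fin r) A) : Matrix (Fin l) (Fin m) A :=
  (smithDiag 1 : Matrix (Fin l) (Fin r) A) * G * (smithDiag 1 : Matrix (Fin r) (Fin m) A)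

lemma minorIdeal_zeroPadded (hl : r ≤ l) (hm : r ≤ m) (G : Matrix (Fin r) (Fin r) A) (k : ℕ) :
    minorIdeal (zeroPadded l m G) k = minorIdeal G k := by
  rw [zeroPadded, Matrix.mul_assoc, minorIdeal_smithDiag_one_mul hl, ← minorIdeal_transpose,
    transpose_mul, smithDiag_one_transpose, minorIdeal_smithDiag_one_mul hm, minorIdeal_transpose]

lemma exists_unit_mul_smithDiag_one [Nontrivial A] {a : Matrix (Fin l) (Fin r) A}
    {b : Matrix (Fin r) (Fin l) A} (hba : b * a = 1) (h : HasFreeImage (1 - a * b)) :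
    r ≤ l ∧ ∃ U : (Matrix (Fin l) (Fin l) A)ˣ,
      U.val * (smithDiag 1 : Matrix (Fin l) (Fin r) A) = a := by
  obtain ⟨t, a', b', hab', hba'⟩ := h
  have b_mul_a' : b * a' = 0 := by
    rw [← Matrix.mul_one a', ← hba', ← Matrix.mul_assoc, ← Matrix.mul_assoc, Matrix.mul_assoc b,
      hab', Matrix.mul_sub, ← Matrix.mul_assoc, hba, Matrix.one_mul, Matrix.mul_one, sub_self,
      Matrix.zero_mul]
  have b'_mul_a : b' * a = 0 := by
    rw [← Matrix.one_mul b', ← hba', Matrix.mul_assoc, Matrix.mul_assoc, ← Matrix.mul_assoc a',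
      hab', Matrix.sub_mul, Matrix.mul_assoc, hba, Matrix.one_mul, Matrix.mul_one, sub_self,
      Matrix.mul_zero]
  have mul_eq_one : fromCols a a' * fromRows b b' = 1 := by
    rw [fromCols_mul_fromRows, hab']
    abel
  have mul_eq_one' : fromRows b b' * fromCols a a' = 1 := by
    rw [fromRows_mul_fromCols, hba, hba', b_mul_a', b'_mul_a, fromBlocks_one]
  obtain rfl : l = r + t := by
    simpa using Matrix.square_of_invertible _ _ mul_eq_one mul_eq_one'
  refine ⟨Nat.le_add_right _ _, ⟨(fromCols a a').submatrix id finSumFinEquiv.symm,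
    (fromRows b b').submatrix finSumFinEquiv.symm id, ?_, ?_⟩, ?_⟩
  · rw [submatrix_mul_equiv, mul_eq_one, submatrix_one _ Function.injective_id]
  · rw [← submatrix_mul _ _ _ id _ Function.bijective_id, mul_eq_one', submatrix_one_equiv]
  · refine (mul_smithDiag_one (Nat.le_add_right r t) _).trans ?_
    ext i j
    exact congrArg (fromCols a a' i) (finSumFinEquiv_symm_apply_castAdd j)

lemma eq_of_mul_mul_eq_self [IsDomain A] {n : Type*} [Fintype n] {F : Matrix (Fin l) n A} {t : ℕ}
    {a : Matrix (Fin l) (Fin t) A} {b : Matrix (Fin t) (Fin l) A} {Z : Matrix n (Fin t) A} {d : A}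
    (hd : d ≠ 0) (hF : a * (b * F) = F) (hZ : d • (1 : Matrix (Fin t) (Fin t) A) = b * (F * Z))
    (hr : minorIdeal F r ≠ ⊥) (h : minorIdeal F (r + 1) = ⊥) : t = r := by
  refine le_antisymm (not_lt.1 fun hlt => ?_) (not_lt.1 fun hlt => hr ?_)
  · have vanish : minorIdeal (d • (1 : Matrix (Fin t) (Fin t) A)) t ≤ ⊥ := by
      rw [hZ, ← h]
      exact (minorIdeal_mul_le_right _ _ _).trans
        ((minorIdeal_mul_le_left _ _ _).trans (minorIdeal_antitone F hlt))
    rw [minorIdeal_eq_span_det, det_smul, det_one, mul_one, le_bot_iff,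
      Ideal.span_singleton_eq_bot] at vanish
    exact pow_ne_zero _ hd vanish
  · rw [← hF, eq_bot_iff]
    exact (minorIdeal_mul_le_right _ _ _).trans (minorIdeal_eq_bot_of_lt _ hlt).le

variable [IsDomain A] {d : A}

lemma exists_eq_unit_mul_smithDiag_one_mul {n : Type*} [Finite n] (hA : IsProjectiveFree A)
    {F : Matrix (Fin l) n A} (hd : d ≠ 0) (hr : minorIdeal F r = Ideal.span {d})
    (h : minorIdeal F (r + 1) = ⊥) :
    r ≤ l ∧ ∃ (U : (Matrix (Fin l) (Fin l) A)ˣ) (G : Matrix (Fin r) n A),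
      F = U.val * ((smithDiag 1 : Matrix (Fin l) (Fin r) A) * G) := by
  cases nonempty_fintype n
  obtain ⟨E, Y, hE, hEF, hEY⟩ := exists_idempotent_mul_eq_self hd hr h
  obtain ⟨t, a, b, rfl, hba⟩ := hA l E hE
  rw [Matrix.mul_assoc] at hEF
  have smul_one : d • (1 : Matrix (Fin t) (Fin t) A) = b * (F * (Y * a)) := by
    rw [← Matrix.mul_assoc F, ← hEY, Matrix.smul_mul, Matrix.mul_smul, Matrix.mul_assoc a, hba,
      Matrix.mul_one, hba]
  have hr_ne_bot : minorIdeal F r ≠ ⊥ := by rwa [hr, Ne, Ideal.span_singleton_eq_bot]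
  obtain rfl := eq_of_mul_mul_eq_self hd hEF smul_one hr_ne_bot h
  have complement : HasFreeImage (1 - a * b) :=
    hA l _ (IsIdempotentElem.one_sub hE)
  obtain ⟨hl, U, hU⟩ := exists_unit_mul_smithDiag_one hba complement
  exact ⟨hl, U, b * F, by rw [← Matrix.mul_assoc, hU, hEF]⟩

theorem exists_matEquiv_zeroPadded (hA : IsProjectiveFree A) {F : Matrix (Fin l) (Fin m) A}
    (hd : d ≠ 0) (hr : minorIdeal F r = Ideal.span {d}) (h : minorIdeal F (r + 1) = ⊥) :
    r ≤ l ∧ r ≤ m ∧ ∃ G : Matrix (Fin r) (Fin r) A, MatEquiv F (zeroPadded l m G) := by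
  obtain ⟨hl, U, G, rfl⟩ := exists_eq_unit_mul_smithDiag_one_mul hA hd hr h
  simp only [(matEquiv_units_mul U _).minorIdeal_eq, minorIdeal_smithDiag_one_mul hl] at hr h
  rw [← minorIdeal_transpose] at hr h
  obtain ⟨hm, V, H, hG⟩ := exists_eq_unit_mul_smithDiag_one_mul hA hd hr h
  refine ⟨hl, hm, Hᵀ, U.val, V.valᵀ, (isUnit_iff_isUnit_det _).1 U.isUnit, ?_, ?_⟩
  · rw [det_transpose]
    exact (isUnit_iff_isUnit_det _).1 V.isUnit
  · rw [← transpose_transpose G, hG, transpose_mul, transpose_mul, smithDiag_one_transpose]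
    simp only [zeroPadded, Matrix.mul_assoc]

end ZeroPadding

lemma exists_mul_mul_eq_one {A : Type*} [CommRing A] [IsDomain A] (hA : IsProjectiveFree A)
    {l m s : ℕ} {M : Matrix (Fin l) (Fin m) A} (hs : minorIdeal M s = ⊤)
    (h : minorIdeal M (s + 1) = ⊥) :
    ∃ (P : Matrix (Fin s) (Fin l) A) (Q : Matrix (Fin m) (Fin s) A), P * M * Q = 1 := by
  obtain ⟨hl, hm, G, hG⟩ := exists_matEquiv_zeroPadded hA one_ne_zero
    (hs.trans Ideal.span_singleton_one.symm) h
  have isUnit_G : IsUnit G := by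
    rw [isUnit_iff_isUnit_det, ← Ideal.span_singleton_eq_top, ← minorIdeal_eq_span_det,
      ← minorIdeal_zeroPadded hl hm, ← hG.minorIdeal_eq, hs]
  obtain ⟨G, rfl⟩ := isUnit_G
  obtain ⟨U, V, hUV⟩ := matEquiv_iff_exists_units.1 hG.symm
  refine ⟨(smithDiag 1 : Matrix (Fin s) (Fin l) A) * U.val,
    V.val * (smithDiag 1 : Matrix (Fin m) (Fin s) A) * (G⁻¹).val, ?_⟩
  calc
    _ = (smithDiag 1 : Matrix (Fin s) (Fin l) A) * (U.val * M * V.val) *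
        (smithDiag 1 : Matrix (Fin m) (Fin s) A) * (G⁻¹).val := by simp only [Matrix.mul_assoc]
    _ = ((smithDiag 1 : Matrix (Fin s) (Fin l) A) * (smithDiag 1 : Matrix (Fin l) (Fin s) A)) *
        G.val * ((smithDiag 1 : Matrix (Fin s) (Fin m) A) *
          (smithDiag 1 : Matrix (Fin m) (Fin s) A)) * (G⁻¹).val := by
      rw [← hUV, zeroPadded]
      simp only [Matrix.mul_assoc]
    _ = 1 := by
      rw [smithDiag_one_mul_smithDiag_one hl, smithDiag_one_mul_smithDiag_one hm, Matrix.one_mul,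
        Matrix.mul_one, Units.mul_inv]

lemma exists_dotProduct_mulVec_eq_one {A : Type*} [CommRing A] [IsDomain A]
    (hA : IsProjectiveFree A) {l m s : ℕ} {M : Matrix (Fin l) (Fin m) A}
    (hs : minorIdeal M (s + 1) = ⊤) (h : minorIdeal M (s + 2) = ⊥) :
    ∃ y v, y ⬝ᵥ (M *ᵥ v) = 1 := by
  obtain ⟨P, Q, hPQ⟩ := exists_mul_mul_eq_one hA hs h
  refine ⟨P 0, fun j => Q j 0, ?_⟩
  rw [Matrix.mul_assoc] at hPQ
  exact congrFun (congrFun hPQ 0) 0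

section Congruences

variable {A : Type*} [CommRing A] {p : A}

lemma dvd_mul_add_mul_sub {a b : A} (ha : p ∣ a - 1) (hb : p ∣ b) (x y : A) :
    p ∣ a * x + b * y - x := by
  convert dvd_add (ha.mul_right x) (hb.mul_right y) using 1
  ring

lemma dvd_mulVec_sub_mulVec {ι κ : Type*} [Fintype κ] {M M' : Matrix ι κ A} {w w' : κ → A}
    (hM : ∀ i j, p ∣ M i j - M' i j) (hw : ∀ j, p ∣ w j - w' j) (i : ι) :
    p ∣ (M *ᵥ w) i - (M' *ᵥ w') i := by
  rw [mulVec, mulVec, dotProduct, dotProduct, ← Finset.sum_sub_distrib]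
  refine Finset.dvd_sum fun j _ => ?_
  convert dvd_add ((hM i j).mul_right (w j)) ((hw j).mul_left (M' i j)) using 1
  ring

lemma dvd_aeval_sub_aeval {B σ : Type*} [CommRing B] [Algebra B A] {x y : σ → A}
    (h : ∀ i, p ∣ x i - y i) (f : MvPolynomial σ B) : p ∣ aeval x f - aeval y f := by
  rw [← Ideal.mem_span_singleton, ← Ideal.Quotient.eq, ← Ideal.Quotient.mkₐ_eq_mk B,
    ← AlgHom.comp_apply, ← AlgHom.comp_apply, comp_aeval, comp_aeval]
  congr 2
  funext i
  exact Ideal.Quotient.eq.2 (Ideal.mem_span_singleton.2 (h i))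

end Congruences

section ConstantColumns

variable {σ B : Type*} [CommRing B]

/-- The substitution `X i ↦ a X i`. -/
noncomputable def scaleVars (a : B) : MvPolynomial σ B →ₐ[B] MvPolynomial σ B :=
  aeval fun i => C a * X i

lemma scaleVars_one (f : MvPolynomial σ B) : scaleVars 1 f = f := by
  simp [scaleVars]

lemma scaleVars_zero (f : MvPolynomial σ B) : scaleVars 0 f = C (constantCoeff f) := by
  simp only [scaleVars, C_0, zero_mul]
  exact aeval_zero' f

lemma dvd_scaleVars_sub_scaleVars {a b ϖ : B} (h : ϖ ∣ a - b) (f : MvPolynomial σ B) :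
    C ϖ ∣ scaleVars a f - scaleVars b f := by
  refine dvd_aeval_sub_aeval (fun i => ?_) f
  rw [← sub_mul, ← C_sub]
  exact (map_dvd C h).mul_right _

variable {ι : Type*} [Fintype ι] {G : Matrix ι ι (MvPolynomial σ B)} {ϖ π : B}

lemma dvd_mulVec_mulVec_sub_C {γ γ' : Matrix ι ι (MvPolynomial σ B)} {v v' : ι → MvPolynomial σ B}
    {c c' : ι → B} (h : ∀ i, C ϖ ∣ (γ *ᵥ (G *ᵥ v)) i - C (c i))
    (hγ : ∀ i j, C ϖ ∣ γ' i j - γ i j) (hv : ∀ i, C ϖ ∣ v' i - v i) (hc : ∀ i, ϖ ∣ c' i - c i)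
    (i : ι) : C ϖ ∣ (γ' *ᵥ (G *ᵥ v')) i - C (c' i) := by
  have mulVec_near := dvd_mulVec_sub_mulVec hγ
    (dvd_mulVec_sub_mulVec (M := G) (M' := G) (by simp) hv) i
  convert (dvd_add mulVec_near (h i)).sub (map_dvd C (hc i)) using 1
  rw [C_sub]
  ring

variable [DecidableEq ι]

/-- The column space of `G` contains a column which, modulo `ϖ`, is equivalent to a unimodular
column of constants. This is the statement that gets patched over the prime divisors `ϖ`. -/
def HasConstantColumnMod (G : Matrix ι ι (MvPolynomial σ B)) (ϖ : B) : Prop :=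
  ∃ (v : ι → MvPolynomial σ B) (c : ι → B),
    IsUnimodularMod ϖ c ∧ ColEquivMod (C ϖ) (G *ᵥ v) fun i => C (c i)

namespace HasConstantColumnMod

lemma one (G : Matrix ι ι (MvPolynomial σ B)) : HasConstantColumnMod G 1 :=
  ⟨0, 0, by simp [IsUnimodularMod], .of_forall_dvd (by simp)⟩

lemma exists_constantCoeff_eq_one (h : HasConstantColumnMod G ϖ) :
    ∃ (v : ι → MvPolynomial σ B) (c : ι → B) (γ : (Matrix ι ι (MvPolynomial σ B))ˣ),
      IsUnimodularMod ϖ c ∧ γ.val.map constantCoeff = 1 ∧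
      ∀ i, C ϖ ∣ (γ.val *ᵥ (G *ᵥ v)) i - C (c i) := by
  obtain ⟨v, c, hc, γ, h⟩ := h
  let δ := (Units.map (constantCoeff (R := B)).mapMatrix.toMonoidHom γ)⁻¹
  let δ' := Units.map (C (σ := σ)).mapMatrix.toMonoidHom δ
  refine ⟨v, δ.val *ᵥ c, δ' * γ, ?_, ?_, fun i => ?_⟩
  · exact (ColEquivMod.of_mulVec_eq δ.isUnit rfl).isUnimodularMod hc
  · have constantCoeff_δ' : δ'.val.map constantCoeff = δ.val := by
      ext i j
      exact constantCoeff_C _ _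
    rw [Units.val_mul, Matrix.map_mul, constantCoeff_δ']
    exact Units.inv_mul (Units.map (constantCoeff (R := B)).mapMatrix.toMonoidHom γ)
  · convert dvd_mulVec δ'.val h i using 1
    rw [← Pi.sub_def, mulVec_sub, Units.val_mul, ← mulVec_mulVec, Pi.sub_apply]
    congr 1
    exact RingHom.map_mulVec C δ.val c i

lemma dvd_map_scaleVars_mul_sub {a b : B} (ha : ϖ ∣ a - 1) (hb : ϖ ∣ b)
    (γ γ' : Matrix ι ι (MvPolynomial σ B)) (hγ' : γ'.map constantCoeff = 1) (i j : ι) :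
    C ϖ ∣ (γ.map (scaleVars a) * γ'.map (scaleVars b)) i j - γ i j := by
  have near_γ (i j) : C ϖ ∣ γ.map (scaleVars a) i j - γ i j := by
    simpa [scaleVars_one] using dvd_scaleVars_sub_scaleVars ha (γ i j)
  have near_one (i j) : C ϖ ∣ γ'.map (scaleVars b) i j - (1 : Matrix ι ι _) i j := by
    have const : C (constantCoeff (γ' i j)) = (1 : Matrix ι ι (MvPolynomial σ B)) i j := by
      have := congrFun (congrFun hγ' i) j
      rw [map_apply] at this
      rw [this, Matrix.one_apply, Matrix.one_apply, apply_ite C, C_1, C_0]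
    rw [← const, ← scaleVars_zero]
    exact dvd_scaleVars_sub_scaleVars (by rwa [sub_zero]) _
  have := dvd_mulVec_sub_mulVec (w := fun k => γ'.map (scaleVars b) k j)
    (w' := fun k => (1 : Matrix ι ι (MvPolynomial σ B)) k j) near_γ (fun k => near_one k j) i
  change _ ∣ _ - (γ * (1 : Matrix ι ι (MvPolynomial σ B))) i j at this
  rwa [Matrix.mul_one] at this

lemma dvd_map_scaleVars_mul_sub' {a b : B} (ha : ϖ ∣ a - 1) (hb : ϖ ∣ b)
    (γ γ' : Matrix ι ι (MvPolynomial σ B)) (hγ' : γ'.map constantCoeff = 1) (i j : ι) :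
    C ϖ ∣ (γ'.map (scaleVars b) * γ.map (scaleVars a)) i j - γ i j := by
  have := dvd_map_scaleVars_mul_sub ha hb γᵀ γ'ᵀ (by rw [transpose_map, hγ', transpose_one]) j i
  rwa [transpose_map, transpose_map, ← transpose_mul] at this

/-- With `a ≡ 1, b ≡ 0` modulo `ϖ` and `a ≡ 0, b ≡ 1` modulo `π`, the matrix `γ₁(aX) γ₂(bX)`
interpolates between `γ₁` and `γ₂`, since both are normalised to be `1` at the origin. -/
lemma mul (h₁ : HasConstantColumnMod G ϖ) (h₂ : HasConstantColumnMod G π) (h : IsCoprime ϖ π) :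
    HasConstantColumnMod G (ϖ * π) := by
  obtain ⟨v₁, c₁, γ₁, hc₁, hγ₁, hd₁⟩ := h₁.exists_constantCoeff_eq_one
  obtain ⟨v₂, c₂, γ₂, hc₂, hγ₂, hd₂⟩ := h₂.exists_constantCoeff_eq_one
  obtain ⟨x, y, hxy⟩ := id h
  let b := x * ϖ
  let a := y * π
  have ha₁ : ϖ ∣ a - 1 := ⟨-x, by linear_combination hxy⟩
  have hb₁ : ϖ ∣ b := dvd_mul_left _ _
  have ha₂ : π ∣ a := dvd_mul_left _ _
  have hb₂ : π ∣ b - 1 := ⟨-y, by linear_combination hxy⟩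
  have C_dvd_sub_one {p q : B} (h : p ∣ q - 1) : (C p : MvPolynomial σ B) ∣ C q - 1 := by
    simpa using map_dvd (C (σ := σ)) h
  let c : ι → B := fun i => a * c₁ i + b * c₂ i
  let v : ι → MvPolynomial σ B := fun i => C a * v₁ i + C b * v₂ i
  let scaled (q : B) (γ : (Matrix ι ι (MvPolynomial σ B))ˣ) : (Matrix ι ι (MvPolynomial σ B))ˣ :=
    Units.map (scaleVars q).toRingHom.mapMatrix.toMonoidHom γ
  have near_c₁ (i) : ϖ ∣ c i - c₁ i := dvd_mul_add_mul_sub ha₁ hb₁ _ _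
  have near_c₂ (i) : π ∣ c i - c₂ i := by
    simpa only [c, add_comm] using dvd_mul_add_mul_sub hb₂ ha₂ (c₂ i) (c₁ i)
  have near_v₁ (i) : C ϖ ∣ v i - v₁ i :=
    dvd_mul_add_mul_sub (C_dvd_sub_one ha₁) (map_dvd C hb₁) _ _
  have near_v₂ (i) : C π ∣ v i - v₂ i := by
    simpa only [v, add_comm] using
      dvd_mul_add_mul_sub (C_dvd_sub_one hb₂) (map_dvd C ha₂) (v₂ i) (v₁ i)
  have hc_ϖ : IsUnimodularMod ϖ c := (ColEquivMod.of_forall_dvd near_c₁).symm.isUnimodularMod hc₁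
  have hc_π : IsUnimodularMod π c := (ColEquivMod.of_forall_dvd near_c₂).symm.isUnimodularMod hc₂
  refine ⟨v, c, ?_, scaled a γ₁ * scaled b γ₂, fun i => ?_⟩
  · rw [IsUnimodularMod, ← Ideal.span_singleton_mul_span_singleton,
      Ideal.sup_mul_eq_of_coprime_left hc_ϖ, hc_π]
  rw [C_mul]
  exact (h.map C).mul_dvd
    (dvd_mulVec_mulVec_sub_C hd₁ (dvd_map_scaleVars_mul_sub ha₁ hb₁ _ _ hγ₂) near_v₁ near_c₁ i)
    (dvd_mulVec_mulVec_sub_C hd₂ (dvd_map_scaleVars_mul_sub' hb₂ ha₂ _ _ hγ₁) near_v₂ near_c₂ i)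

lemma exists_dvd_pow [IsDomain B] [IsPrincipalIdealRing B]
    {h : B} (hh : h ≠ 0) (hp : ∀ π : B, Prime π → π ∣ h → HasConstantColumnMod G π) :
    ∃ ϖ, HasConstantColumnMod G ϖ ∧ ϖ ∣ h ∧ ∃ n : ℕ, h ∣ ϖ ^ n := by
  induction h using UniqueFactorizationMonoid.induction_on_prime with
  | h₁ => exact absurd rfl hh
  | h₂ x hx => exact ⟨1, one G, one_dvd _, 0, by simpa using hx.dvd⟩
  | h₃ a p ha hprime ih =>
    obtain ⟨ϖ, hϖ, hdvd, n, hn⟩ := ih ha fun π hπ hπa => hp π hπ (hπa.mul_left p)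
    by_cases hpϖ : p ∣ ϖ
    · refine ⟨ϖ, hϖ, hdvd.mul_left _, n + 1, ?_⟩
      rw [pow_succ, mul_comm p]
      exact mul_dvd_mul hn hpϖ
    · refine ⟨p * ϖ, (hp p hprime (dvd_mul_right _ _)).mul hϖ
        (hprime.irreducible.coprime_iff_not_dvd.2 hpϖ), mul_dvd_mul_left _ hdvd, n + 1, ?_⟩
      rw [mul_pow]
      exact mul_dvd_mul (dvd_pow_self _ n.succ_ne_zero) (hn.trans (pow_dvd_pow _ n.le_succ))

end HasConstantColumnMod

end ConstantColumns

section UnimodularColumns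

variable {A ι : Type*} [CommRing A] [Fintype ι]

lemma isUnimodularMod_of_dvd_dotProduct_sub_one {π : A} {w y : ι → A} (h : π ∣ y ⬝ᵥ w - 1) :
    IsUnimodularMod π w := by
  rw [IsUnimodularMod, Ideal.eq_top_iff_one, ← sub_sub_cancel (y ⬝ᵥ w) 1]
  refine Ideal.sub_mem _ (Ideal.mem_sup_left ?_)
    (Ideal.mem_sup_right (Ideal.mem_span_singleton.2 h))
  exact Ideal.sum_mem _ fun i _ => Ideal.mul_mem_left _ _ (Ideal.subset_span ⟨i, rfl⟩)

variable [DecidableEq ι]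

lemma exists_mulVec_eq_of_colEquivMod_det {G : Matrix ι ι A} {v w : ι → A}
    (h : ColEquivMod G.det (G *ᵥ v) w) :
    ∃ (δ : (Matrix ι ι A)ˣ) (v' : ι → A), δ.val *ᵥ (G *ᵥ v') = w := by
  obtain ⟨δ, hδ⟩ := h
  choose z hz using hδ
  have mulVec_v : δ.val *ᵥ (G *ᵥ v) = w + G.det • z := funext fun i => by
    rw [Pi.add_apply, Pi.smul_apply, smul_eq_mul, ← hz, add_sub_cancel]
  refine ⟨δ, v - G.adjugate *ᵥ ((δ⁻¹).val *ᵥ z), ?_⟩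
  rw [mulVec_sub, mulVec_sub, mulVec_v, mulVec_mulVec _ G, mul_adjugate, smul_mulVec, one_mulVec,
    mulVec_smul, mulVec_mulVec, Units.mul_inv, one_mulVec, add_sub_cancel_right]

end UnimodularColumns

section FirstColumn

variable {A : Type*} [CommRing A] {r : ℕ} {G : Matrix (Fin (r + 1)) (Fin (r + 1)) A}

lemma exists_matEquiv_oneBordered_of_mulVec_single (h : G *ᵥ Pi.single 0 1 = Pi.single 0 1) :
    ∃ M, MatEquiv G (oneBordered M) := by
  have first_col (i) : G i 0 = (Pi.single 0 1 : Fin (r + 1) → A) i := by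
    rw [← h, mulVec_single_one]
    rfl
  let t : Fin (r + 1) → A := Fin.cons 0 fun j => G 0 j.succ
  refine ⟨G.submatrix Fin.succ Fin.succ, 1, 1 + vecMulVec (Pi.single 0 1) t, by simp, ?_, ?_⟩
  · rw [vecMulVec_eq Unit, det_one_add_replicateCol_mul_replicateRow]
    simp [t]
  · rw [Matrix.one_mul, Matrix.mul_add, Matrix.mul_one, mul_vecMulVec]
    ext i j
    rw [Matrix.add_apply, vecMulVec_apply, mulVec_single_one]
    cases i using Fin.cases <;> cases j using Fin.cases <;> simp [first_col, t]

lemma IsHermiteRing.exists_matEquiv_oneBordered (hA : IsHermiteRing A)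
    {v : Fin (r + 1) → A} (h : ColEquivMod G.det (G *ᵥ v) (Pi.single 0 1)) :
    ∃ M, MatEquiv G (oneBordered M) := by
  obtain ⟨δ, v', hv'⟩ := exists_mulVec_eq_of_colEquivMod_det h
  have unimodular : IsUnimodularMod 0 v' := isUnimodularMod_of_dvd_dotProduct_sub_one
    (y := Pi.single 0 1 ᵥ* (δ.val * G)) <| by
      rw [← dotProduct_mulVec, ← mulVec_mulVec, hv']
      simp
  obtain ⟨η, hη⟩ := hA _ v' 0 (isUnimodularMod_zero.1 unimodular)
  have v'_eq : (η⁻¹).val *ᵥ Pi.single 0 1 = v' := by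
    rw [← hη, mulVec_mulVec, Units.inv_mul, one_mulVec]
  obtain ⟨M, hM⟩ := exists_matEquiv_oneBordered_of_mulVec_single (G := δ.val * G * (η⁻¹).val) <| by
    rw [← mulVec_mulVec, v'_eq, ← mulVec_mulVec, hv']
  exact ⟨M, ((matEquiv_mul_units _ _).trans (matEquiv_units_mul _ _)).symm.trans hM⟩

end FirstColumn

section Content

variable {B : Type*} [CommRing B] [IsDomain B] {N r : ℕ} {Φ : ℕ → B}

lemma dvd_of_minorIdeal_eq_span_prod {l m : ℕ} {G : Matrix (Fin l) (Fin m) (MvPolynomial (Fin N) B)}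
    (hG : ∀ k ≤ r + 1, minorIdeal G k = Ideal.span {C (∏ j ∈ Finset.range k, Φ j)})
    (hΦ : ∀ i ≤ r, Φ i ≠ 0) {k : ℕ} (hk : k ≤ r) : Φ 0 ∣ Φ k := by
  have hle := minorIdeal_succ_le_mul G k
  rw [hG 1 (by lia), hG k (by lia), hG (k + 1) (by lia), Ideal.span_singleton_mul_span_singleton,
    Ideal.span_singleton_le_span_singleton, ← C_mul, C_dvd_iff_dvd_coeff] at hle
  have dvd := hle 0
  rw [coeff_zero_C, Finset.prod_range_one, Finset.prod_range_succ, mul_comm] at dvd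
  refine (mul_dvd_mul_iff_left (Finset.prod_ne_zero_iff.2 fun i hi => hΦ i ?_)).1 dvd
  have := Finset.mem_range.1 hi
  lia

lemma exists_eq_smul_of_minorIdeal_eq_span_prod
    {G : Matrix (Fin (r + 1)) (Fin (r + 1)) (MvPolynomial (Fin N) B)}
    (hG : ∀ k ≤ r + 1, minorIdeal G k = Ideal.span {C (∏ j ∈ Finset.range k, Φ j)})
    (hΦ : ∀ i ≤ r, Φ i ≠ 0) :
    ∃ (G' : Matrix (Fin (r + 1)) (Fin (r + 1)) (MvPolynomial (Fin N) B)) (Ψ : ℕ → B),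
      G = (C (Φ 0) : MvPolynomial (Fin N) B) • G' ∧ (∀ k ≤ r, Φ k = Φ 0 * Ψ k) ∧
      ∀ k ≤ r + 1, minorIdeal G' k = Ideal.span {C (∏ j ∈ Finset.range k, Ψ j)} := by
  have dvd_entry (i j) : C (Φ 0) ∣ G i j := by
    have := apply_mem_minorIdeal_one G i j
    rwa [hG 1 (by lia), Finset.prod_range_one, Ideal.mem_span_singleton] at this
  choose G' hG' using dvd_entry
  choose! Ψ hΨ using fun k (hk : k ≤ r) => dvd_of_minorIdeal_eq_span_prod hG hΦ hk
  obtain rfl : G = (C (Φ 0) : MvPolynomial (Fin N) B) • of G' := by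
    ext1 i j
    exact hG' i j
  refine ⟨of G', Ψ, rfl, hΨ, fun k hk => ?_⟩
  have prod_eq : ∏ j ∈ Finset.range k, Φ j = Φ 0 ^ k * ∏ j ∈ Finset.range k, Ψ j := by
    rw [Finset.prod_congr rfl fun j hj => hΨ j (by have := Finset.mem_range.1 hj; lia),
      Finset.prod_mul_distrib, Finset.prod_const, Finset.card_range]
  have hGk := hG k hk
  rw [minorIdeal_smul, prod_eq, C_mul, ← Ideal.span_singleton_mul_span_singleton, C_pow] at hGk
  have : (C (Φ 0) : MvPolynomial (Fin N) B) ≠ 0 := by simpa using hΦ 0 r.zero_le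
  exact (Ideal.span_singleton_mul_right_inj (pow_ne_zero k this)).1 hGk

end Content

section SquareSmithForm

variable {B : Type*} [CommRing B] [IsDomain B] [IsPrincipalIdealRing B] {N : ℕ}

lemma exists_isUnimodularMod_mulVec {l m k : ℕ}
    {G : Matrix (Fin l) (Fin m) (MvPolynomial (Fin N) B)} {a b π : B} (hπ : Prime π)
    (ha : minorIdeal G (k + 1) = Ideal.span {C a}) (hb : minorIdeal G (k + 2) = Ideal.span {C b})
    (hπa : ¬ π ∣ a) (hπb : π ∣ b) : ∃ v, IsUnimodularMod (C π) (G *ᵥ v) := by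
  have : (Ideal.span {π}).IsMaximal :=
    PrincipalIdealRing.isMaximal_of_irreducible hπ.irreducible
  let : Field (B ⧸ Ideal.span {π}) := Ideal.Quotient.field _
  let mk := Ideal.Quotient.mk (Ideal.span {π})
  have mk_eq_zero (b : B) : mk b = 0 ↔ π ∣ b := Ideal.Quotient.eq_zero_iff_dvd π b
  let φ : MvPolynomial (Fin N) B →+* MvPolynomial (Fin N) (B ⧸ Ideal.span {π}) := map mk
  have hφ : Function.Surjective φ := map_surjective _ Ideal.Quotient.mk_surjective
  have top : minorIdeal (G.map φ) (k + 1) = ⊤ := by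
    rw [minorIdeal_map_eq_span ha, Ideal.span_singleton_eq_top, map_C]
    exact (IsUnit.mk0 _ ((mk_eq_zero a).not.2 hπa)).map C
  have bot : minorIdeal (G.map φ) (k + 2) = ⊥ := by
    rw [minorIdeal_map_eq_span hb, Ideal.span_singleton_eq_bot, map_C, (mk_eq_zero b).2 hπb, C_0]
  obtain ⟨y, v, hyv⟩ :=
    exists_dotProduct_mulVec_eq_one (isProjectiveFree_mvPolynomial_fin _ N) top bot
  obtain ⟨y, rfl⟩ := hφ.comp_left y
  obtain ⟨v, rfl⟩ := hφ.comp_left v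
  refine ⟨v, isUnimodularMod_of_dvd_dotProduct_sub_one (y := y) ?_⟩
  rw [C_dvd_iff_map_hom_eq_zero mk π mk_eq_zero, map_sub, map_one, sub_eq_zero, ← hyv,
    RingHom.map_dotProduct]
  exact congrArg _ (funext fun i => RingHom.map_mulVec φ G v i)

variable {r : ℕ} {Φ : ℕ → B}

lemma hasConstantColumnMod_of_prime {l : ℕ} [Nontrivial (Fin l)]
    {G : Matrix (Fin l) (Fin l) (MvPolynomial (Fin N) B)}
    (hG : ∀ k ≤ l, minorIdeal G k = Ideal.span {C (∏ j ∈ Finset.range k, Φ j)})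
    (hΦ : Φ 0 = 1) {π : B} (hπ : Prime π) (hdvd : π ∣ ∏ j ∈ Finset.range l, Φ j) :
    HasConstantColumnMod G π := by
  classical
  have exists_dvd : ∃ k, π ∣ ∏ j ∈ Finset.range k, Φ j := ⟨l, hdvd⟩
  obtain ⟨k, hk⟩ : ∃ k, Nat.find exists_dvd = k + 2 := by
    refine ⟨Nat.find exists_dvd - 2, (Nat.sub_add_cancel ?_).symm⟩
    refine (Nat.le_find_iff _ _).2 fun k hk => ?_
    interval_cases k <;> simpa [hΦ, ← isUnit_iff_dvd_one] using hπ.not_isUnit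
  have hle : k + 2 ≤ l := hk ▸ Nat.find_min' exists_dvd hdvd
  obtain ⟨v, hv⟩ := exists_isUnimodularMod_mulVec hπ (hG (k + 1) (by lia)) (hG (k + 2) hle)
    (Nat.find_min exists_dvd (by lia)) (hk ▸ Nat.find_spec exists_dvd)
  have := PrincipalIdealRing.isMaximal_of_irreducible hπ.irreducible
  obtain ⟨c, hc⟩ := exists_colEquivMod_C hv
  refine ⟨v, c, ?_, hc⟩
  simpa using (hc.isUnimodularMod hv).map constantCoeff

lemma ColEquivMod.single_of_C {ι : Type*} [Fintype ι] [DecidableEq ι] [Nontrivial ι]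
    {w : ι → MvPolynomial (Fin N) B} {c : ι → B} {ϖ h : B} {n : ℕ} (hϖ : ϖ ≠ 0)
    (hc : IsUnimodularMod ϖ c) (hw : ColEquivMod (C ϖ) w fun i => C (c i)) (hn : h ∣ ϖ ^ n)
    (i₀ : ι) : ColEquivMod (C h) w (Pi.single i₀ 1) := by
  obtain ⟨a, ha, hcop⟩ := hc.exists_isCoprime_add_dotProduct hϖ i₀
  obtain ⟨γ, hγ⟩ := hw.trans (.update_add_dotProduct _ (fun i => C (a i)) (i₁ := i₀) (by simp [ha]))
  refine (ColEquivMod.of_mulVec_eq γ.isUnit rfl).trans (.single_of_isCoprime i₀ i₀ ?_)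
  have coprime_ϖ : IsCoprime (C ϖ) ((γ.val *ᵥ w) i₀) := by
    obtain ⟨z, hz⟩ := hγ i₀
    have entry : (γ.val *ᵥ w) i₀ = C (c i₀ + a ⬝ᵥ c) + C ϖ * z := by
      rw [← hz, Function.update_self, C_add, RingHom.map_dotProduct]
      exact (add_sub_cancel _ _).symm
    rw [entry]
    exact (hcop.map C).add_mul_left_right z
  refine (coprime_ϖ.pow_left (m := n)).of_isCoprime_of_dvd_left ?_
  rw [← C_pow]
  exact map_dvd C hn

lemma exists_colEquivMod_single {G : Matrix (Fin (r + 1)) (Fin (r + 1)) (MvPolynomial (Fin N) B)}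
    (hG : ∀ k ≤ r + 1, minorIdeal G k = Ideal.span {C (∏ j ∈ Finset.range k, Φ j)})
    (hΦ : Φ 0 = 1) (hΦ_ne : ∀ i ≤ r, Φ i ≠ 0) :
    ∃ v, ColEquivMod (C (∏ j ∈ Finset.range (r + 1), Φ j)) (G *ᵥ v) (Pi.single 0 1) := by
  obtain rfl | hr := r.eq_zero_or_pos
  · exact ⟨0, .of_forall_dvd fun i => by simp [hΦ]⟩
  have : Nontrivial (Fin (r + 1)) := Fin.nontrivial_iff_two_le.2 (by lia)
  have prod_ne : ∏ j ∈ Finset.range (r + 1), Φ j ≠ 0 :=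
    Finset.prod_ne_zero_iff.2 fun i hi => hΦ_ne i (by simpa [Nat.lt_succ_iff] using hi)
  obtain ⟨ϖ, ⟨v, c, hc, hv⟩, hϖ, n, hn⟩ := HasConstantColumnMod.exists_dvd_pow prod_ne
    fun π hπ hdvd => hasConstantColumnMod_of_prime hG hΦ hπ hdvd
  exact ⟨v, .single_of_C (ne_zero_of_dvd_ne_zero prod_ne hϖ) hc hv hn 0⟩

lemma exists_matEquiv_oneBordered (hB : IsHermiteRing (MvPolynomial (Fin N) B))
    {G : Matrix (Fin (r + 1)) (Fin (r + 1)) (MvPolynomial (Fin N) B)}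
    (hG : ∀ k ≤ r + 1, minorIdeal G k = Ideal.span {C (∏ j ∈ Finset.range k, Φ j)})
    (hΦ : Φ 0 = 1) (hΦ_ne : ∀ i ≤ r, Φ i ≠ 0) : ∃ M, MatEquiv G (oneBordered M) := by
  obtain ⟨v, hv⟩ := exists_colEquivMod_single hG hΦ hΦ_ne
  have det_dvd := (minorIdeal_eq_span_det G).symm.trans (hG _ le_rfl)
  exact hB.exists_matEquiv_oneBordered <|
    hv.of_dvd (Ideal.span_singleton_le_span_singleton.1 det_dvd.ge)

theorem matEquiv_diagonal_of_minorIdeal (hB : IsHermiteRing (MvPolynomial (Fin N) B))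
    {G : Matrix (Fin r) (Fin r) (MvPolynomial (Fin N) B)}
    (hG : ∀ k ≤ r, minorIdeal G k = Ideal.span {C (∏ j ∈ Finset.range k, Φ j)})
    (hΦ : ∀ i < r, Φ i ≠ 0) : MatEquiv G (diagonal fun i : Fin r => C (Φ i)) := by
  induction r generalizing Φ with
  | zero =>
    rw [show G = diagonal fun i : Fin 0 => C (Φ i) by ext i; exact i.elim0]
    exact .refl _
  | succ r ih =>
    obtain ⟨G', Ψ, rfl, hΨ, hG'⟩ :=
      exists_eq_smul_of_minorIdeal_eq_span_prod hG fun i hi => hΦ i (Nat.lt_succ_of_le hi)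
    have hΨ_zero : Ψ 0 = 1 :=
      mul_left_cancel₀ (hΦ 0 r.succ_pos) ((hΨ 0 r.zero_le).symm.trans (mul_one _).symm)
    have hΨ_ne (i) (hi : i ≤ r) : Ψ i ≠ 0 :=
      right_ne_zero_of_mul (hΨ i hi ▸ hΦ i (Nat.lt_succ_of_le hi))
    obtain ⟨M, hM⟩ := exists_matEquiv_oneBordered hB hG' hΨ_zero hΨ_ne
    have hM_minors (k) (hk : k ≤ r) :
        minorIdeal M k = Ideal.span {C (∏ j ∈ Finset.range k, Ψ (j + 1))} := by
      rw [← minorIdeal_oneBordered, ← hM.minorIdeal_eq, hG' (k + 1) (by lia),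
        Finset.prod_range_succ', hΨ_zero, mul_one]
    have hM_diag := (ih hM_minors fun i hi => hΨ_ne (i + 1) hi).oneBordered
    convert (hM.trans hM_diag).smul (C (Φ 0)) using 1
    rw [oneBordered_diagonal, ← diagonal_smul]
    congr 1
    funext i
    rw [hΨ i (Nat.lt_succ_iff.1 i.isLt), C_mul]
    cases i using Fin.cases <;> simp [hΨ_zero]

end SquareSmithForm

section ZeroPadded

variable {A : Type*} [CommRing A] {l m r : ℕ}

lemma exists_mul_smithDiag_one_eq (h : r ≤ l) {U : Matrix (Fin r) (Fin r) A} (hU : IsUnit U.det) :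
    ∃ W : Matrix (Fin l) (Fin l) A, IsUnit W.det ∧
      W * (smithDiag 1 : Matrix (Fin l) (Fin r) A) =
        (smithDiag 1 : Matrix (Fin l) (Fin r) A) * U := by
  have left_inv := smithDiag_one_mul_smithDiag_one (A := A) h
  refine ⟨1 + (smithDiag 1 : Matrix (Fin l) (Fin r) A) *
    ((U - 1) * (smithDiag 1 : Matrix (Fin r) (Fin l) A)), ?_, ?_⟩
  · rwa [det_one_add_mul_comm, Matrix.mul_assoc, left_inv, Matrix.mul_one, add_sub_cancel]
  · rw [Matrix.add_mul, Matrix.one_mul, Matrix.mul_assoc, Matrix.mul_assoc, left_inv,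
      Matrix.mul_one, Matrix.mul_sub, Matrix.mul_one, add_sub_cancel]

lemma MatEquiv.zeroPadded {G H : Matrix (Fin r) (Fin r) A} (h : MatEquiv G H) (hl : r ≤ l)
    (hm : r ≤ m) : MatEquiv (zeroPadded l m G) (zeroPadded l m H) := by
  obtain ⟨U, V, hU, hV, rfl⟩ := h
  obtain ⟨W, hW, hWU⟩ := exists_mul_smithDiag_one_eq hl hU
  obtain ⟨W', hW', hWV⟩ := exists_mul_smithDiag_one_eq hm (U := Vᵀ) (by rwa [det_transpose])
  have hVW := congrArg transpose hWV
  rw [transpose_mul, transpose_mul, smithDiag_one_transpose, transpose_transpose] at hVW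
  refine ⟨W, W'ᵀ, hW, by rwa [det_transpose], ?_⟩
  simp only [_root_.zeroPadded, Matrix.mul_assoc, hVW]
  simp only [← Matrix.mul_assoc, hWU]

lemma zeroPadded_diagonal (φ : ℕ → A) :
    zeroPadded l m (diagonal fun i : Fin r => φ i) =
      smithDiag fun i : Fin l => if (i : ℕ) < r then φ i else 0 := by
  ext i j
  rw [zeroPadded, Matrix.mul_apply]
  simp only [mul_diagonal, smithDiag, of_apply, Pi.one_apply]
  split_ifs with hij hi
  · rw [Finset.sum_eq_single_of_mem ⟨i, hi⟩ (Finset.mem_univ _)]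
    · simp [hij]
    · intro k _ hk
      have : (i : ℕ) ≠ k := fun h => hk (Fin.ext h.symm)
      simp [this]
  · refine Finset.sum_eq_zero fun k _ => ?_
    have : (i : ℕ) ≠ k := fun h => hi (h ▸ k.isLt)
    simp [this]
  · refine Finset.sum_eq_zero fun k _ => ?_
    have : ¬((i : ℕ) = k ∧ (k : ℕ) = j) := by lia
    grind

end ZeroPadded

section ScaleLast

variable {A : Type*} [CommRing A] {s : ℕ}

/-- The diagonal matrix `diag(1, …, 1, p)`: multiplying by it on the left scales the last row. -/
def scaleLast (s : ℕ) (p : A) : Matrix (Fin (s + 1)) (Fin (s + 1)) A :=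
  diagonal (Function.update 1 (Fin.last s) p)

@[simp] lemma det_scaleLast (p : A) : (scaleLast s p).det = p := by
  simp [scaleLast, Finset.prod_update_of_mem]

lemma scaleLast_mul_apply_last (p : A) {n : Type*} (M : Matrix (Fin (s + 1)) n A) (j : n) :
    (scaleLast s p * M) (Fin.last s) j = p * M (Fin.last s) j := by
  simp [scaleLast]

lemma scaleLast_mul_apply_of_ne (p : A) {n : Type*} (M : Matrix (Fin (s + 1)) n A)
    {i : Fin (s + 1)} (hi : i ≠ Fin.last s) (j : n) : (scaleLast s p * M) i j = M i j := by
  simp [scaleLast, hi]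

lemma map_scaleLast {B : Type*} [CommRing B] (φ : A →+* B) (p : A) :
    (scaleLast s p).map φ = scaleLast s (φ p) := by
  rw [scaleLast, diagonal_map (map_zero φ), scaleLast]
  congr 1
  funext i
  by_cases hi : i = Fin.last s <;> simp [hi]

lemma smithDiag_eq_scaleLast_zero_mul_diagonal (φ : ℕ → A) :
    (smithDiag fun i : Fin (s + 1) => if (i : ℕ) < s then φ i else 0) =
      scaleLast s 0 * diagonal fun i : Fin (s + 1) => φ i := by
  rw [scaleLast, diagonal_mul_diagonal]
  ext i j
  rw [diagonal_apply, smithDiag, of_apply]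
  simp only [← Fin.ext_iff]
  cases i using Fin.lastCases <;> simp

end ScaleLast

section Singular

variable {B : Type*} [CommRing B] [IsDomain B] [IsPrincipalIdealRing B] {N s : ℕ} {Φ : ℕ → B}

lemma matEquiv_scaleLast_zero_mul_diagonal (hB : IsHermiteRing (MvPolynomial (Fin N) B))
    (hB' : IsProjectiveFree (MvPolynomial (Fin N) B))
    {H : Matrix (Fin (s + 1)) (Fin (s + 1)) (MvPolynomial (Fin N) B)}
    (hH : ∀ k ≤ s, minorIdeal H k = Ideal.span {C (∏ j ∈ Finset.range k, Φ j)})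
    (hdet : minorIdeal H (s + 1) = ⊥) (hΦ : ∀ i < s, Φ i ≠ 0) :
    MatEquiv H (scaleLast s 0 * diagonal fun i : Fin (s + 1) => C (Φ i)) := by
  have prod_ne : (C (∏ j ∈ Finset.range s, Φ j) : MvPolynomial (Fin N) B) ≠ 0 :=
    C_ne_zero.2 <| Finset.prod_ne_zero_iff.2 fun i hi => hΦ i (Finset.mem_range.1 hi)
  obtain ⟨hs, -, G, hG⟩ := exists_matEquiv_zeroPadded hB' prod_ne (hH s le_rfl) hdet
  have hG_minors (k) (hk : k ≤ s) :
      minorIdeal G k = Ideal.span {C (∏ j ∈ Finset.range k, Φ j)} := by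
    rw [← minorIdeal_zeroPadded hs hs, ← hG.minorIdeal_eq, hH k hk]
  have hG_diag := matEquiv_diagonal_of_minorIdeal hB hG_minors hΦ
  rw [← smithDiag_eq_scaleLast_zero_mul_diagonal fun i => C (Φ i),
    ← zeroPadded_diagonal fun i => C (Φ i)]
  exact hG.trans (hG_diag.zeroPadded hs hs)

end Singular

section CommutingRetractions

variable {Γ X ι : Type*} [Group Γ] [MulAction Γ X] {τ : ι → Γ →* Γ} {σ : ι → X → X} {S : Finset ι}

lemma exists_smul_eq_of_forall_retract_eq (τ_idem : ∀ i g, τ i (τ i g) = τ i g)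
    (τ_comm : ∀ i j g, τ i (τ j g) = τ j (τ i g)) (hσ : ∀ i (g : Γ) x, σ i (g • x) = τ i g • σ i x)
    {x y : X} (hx : ∀ i ∈ S, σ i x = y) (hy : ∀ i ∈ S, σ i y = y)
    (h : x ∈ MulAction.orbit Γ y) : ∃ g : Γ, g • y = x ∧ ∀ i ∈ S, τ i g = 1 := by
  classical
  induction S using Finset.induction_on with
  | empty =>
    obtain ⟨g, hg⟩ := h
    exact ⟨g, hg, by simp⟩
  | insert j S _ ih =>
    rw [Finset.forall_mem_insert] at hx hy
    obtain ⟨g, rfl, hg⟩ := ih hx.2 hy.2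
    have fixed : τ j g • y = y := by simpa only [hσ, hy.1] using hx.1
    refine ⟨g * (τ j g)⁻¹, by rw [mul_smul, inv_smul_eq_iff.2 fixed.symm],
      Finset.forall_mem_insert .. |>.2 ⟨?_, fun i hi => ?_⟩⟩
    · rw [map_mul, map_inv, τ_idem, mul_inv_cancel]
    · rw [map_mul, map_inv, τ_comm, hg i hi, map_one, inv_one, mul_one]

lemma exists_mem_orbit_forall_retract_eq (τ_idem : ∀ i g, τ i (τ i g) = τ i g)
    (τ_comm : ∀ i j g, τ i (τ j g) = τ j (τ i g)) (hσ : ∀ i (g : Γ) x, σ i (g • x) = τ i g • σ i x)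
    (σ_idem : ∀ i x, σ i (σ i x) = σ i x) (σ_comm : ∀ i j x, σ i (σ j x) = σ j (σ i x))
    {x y : X} (hy : ∀ i ∈ S, σ i y = y) (h : ∀ i ∈ S, σ i x ∈ MulAction.orbit Γ y) :
    ∃ x' ∈ MulAction.orbit Γ x, ∀ i ∈ S, σ i x' = y := by
  classical
  induction S using Finset.induction_on with
  | empty => exact ⟨x, MulAction.mem_orbit_self x, by simp⟩
  | insert j S _ ih =>
    rw [Finset.forall_mem_insert] at hy h
    obtain ⟨_, ⟨a, rfl⟩, ha⟩ := ih hy.2 h.2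
    dsimp only at ha
    have retract_mem : σ j (a • x) ∈ MulAction.orbit Γ y := by
      rw [hσ]
      exact MulAction.mem_orbit_of_mem_orbit _ h.1
    obtain ⟨g, hgy, hg⟩ := exists_smul_eq_of_forall_retract_eq τ_idem τ_comm hσ
      (fun i hi => by rw [σ_comm, ha i hi, hy.1]) hy.2 retract_mem
    refine ⟨(τ j g)⁻¹ • a • x, ⟨(τ j g)⁻¹ * a, mul_smul _ _ _⟩,
      Finset.forall_mem_insert .. |>.2 ⟨?_, fun i hi => ?_⟩⟩
    · rw [hσ, map_inv, τ_idem, inv_smul_eq_iff, ← σ_idem, ← hgy, hσ, hy.1]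
    · rw [hσ, map_inv, τ_comm, hg i hi, map_one, inv_one, one_smul, ha i hi]

end CommutingRetractions

section MatrixRetractions

open scoped MatrixGroups

variable {A : Type*} [CommRing A] {l m : ℕ}

/-- Matrix equivalence as a group action, `(U, V) • F = U * F * V⁻¹`: its orbits are the
equivalence classes of `MatEquiv`. -/
instance matEquivAction : MulAction (GL (Fin l) A × GL (Fin m) A) (Matrix (Fin l) (Fin m) A) where
  smul g F := g.1.val * F * g.2⁻¹.val
  one_smul F := by
    change (1 : GL (Fin l) A).val * F * (1⁻¹ : GL (Fin m) A).val = F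
    simp
  mul_smul g h F := by
    change (g.1 * h.1).val * F * (g.2 * h.2)⁻¹.val =
      g.1.val * (h.1.val * F * h.2⁻¹.val) * g.2⁻¹.val
    simp only [_root_.mul_inv_rev, Units.val_mul, Matrix.mul_assoc]

lemma prod_smul_matrix (g : GL (Fin l) A × GL (Fin m) A) (F : Matrix (Fin l) (Fin m) A) :
    g • F = g.1.val * F * g.2⁻¹.val := rfl

lemma matEquiv_iff_mem_orbit {F G : Matrix (Fin l) (Fin m) A} :
    MatEquiv F G ↔ F ∈ MulAction.orbit (GL (Fin l) A × GL (Fin m) A) G := by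
  rw [matEquiv_iff_exists_units]
  constructor
  · rintro ⟨U, V, rfl⟩
    exact ⟨(U, V⁻¹), by simp [prod_smul_matrix]⟩
  · rintro ⟨g, rfl⟩
    exact ⟨g.1, g.2⁻¹, rfl⟩

variable {ι : Type*} [Finite ι] {ρ : ι → A →+* A}

lemma map_smul_matrix (φ : A →+* A) (g : GL (Fin l) A × GL (Fin m) A)
    (F : Matrix (Fin l) (Fin m) A) : (g • F).map φ =
      ((GeneralLinearGroup.map φ).prodMap (GeneralLinearGroup.map φ) g) • F.map φ := by
  rw [prod_smul_matrix, Matrix.map_mul, Matrix.map_mul, prod_smul_matrix]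
  rfl

lemma MatEquiv.exists_map_eq_one (ρ_idem : ∀ i x, ρ i (ρ i x) = ρ i x)
    (ρ_comm : ∀ i j x, ρ i (ρ j x) = ρ j (ρ i x)) {M H : Matrix (Fin l) (Fin m) A}
    (h : MatEquiv M H) (hM : ∀ i, M.map (ρ i) = H) (hH : ∀ i, H.map (ρ i) = H) :
    ∃ (U : (Matrix (Fin l) (Fin l) A)ˣ) (V : (Matrix (Fin m) (Fin m) A)ˣ),
      M = U.val * H * V.val ∧ ∀ i, U.val.map (ρ i) = 1 := by
  cases nonempty_fintype ι
  obtain ⟨g, rfl, hg⟩ := exists_smul_eq_of_forall_retract_eq (S := Finset.univ)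
    (τ := fun i => (GeneralLinearGroup.map (ρ i)).prodMap (GeneralLinearGroup.map (ρ i)))
    (σ := fun i F => F.map (ρ i)) (fun i g => by ext <;> simp [ρ_idem])
    (fun i j g => by ext <;> simp [ρ_comm i j]) (fun i => map_smul_matrix (ρ i))
    (fun i _ => hM i) (fun i _ => hH i) (matEquiv_iff_mem_orbit.1 h)
  exact ⟨g.1, g.2⁻¹, rfl, fun i =>
    congrArg (fun g => g.1.val) (hg i (Finset.mem_univ i))⟩

lemma exists_matEquiv_forall_map_eq (ρ_idem : ∀ i x, ρ i (ρ i x) = ρ i x)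
    (ρ_comm : ∀ i j x, ρ i (ρ j x) = ρ j (ρ i x)) {G D : Matrix (Fin l) (Fin m) A}
    (hD : ∀ i, D.map (ρ i) = D) (h : ∀ i, MatEquiv (G.map (ρ i)) D) :
    ∃ G', MatEquiv G G' ∧ ∀ i, G'.map (ρ i) = D := by
  cases nonempty_fintype ι
  obtain ⟨G', hG', hD'⟩ := exists_mem_orbit_forall_retract_eq (S := Finset.univ)
    (τ := fun i => (GeneralLinearGroup.map (ρ i)).prodMap (GeneralLinearGroup.map (ρ i)))
    (σ := fun i F => F.map (ρ i)) (fun i g => by ext <;> simp [ρ_idem])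
    (fun i j g => by ext <;> simp [ρ_comm i j]) (fun i => map_smul_matrix (ρ i))
    (fun i F => by ext; simp [ρ_idem]) (fun i j F => by ext; simp [ρ_comm i j])
    (fun i _ => hD i) (fun i _ => matEquiv_iff_mem_orbit.1 (h i))
  exact ⟨G', (matEquiv_iff_mem_orbit.2 hG').symm, fun i => hD' i (Finset.mem_univ i)⟩

end MatrixRetractions

section KillVar

variable {R σ : Type*} [CommRing R] [DecidableEq σ]

/-- The substitution `X j ↦ 0`, as a retraction of the polynomial ring. -/
noncomputable def killVar (j : σ) : MvPolynomial σ R →+* MvPolynomial σ R :=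
  eval₂Hom C (Function.update X j 0)

@[simp] lemma killVar_C (j : σ) (a : R) : killVar j (C a) = C a := eval₂Hom_C _ _ _

@[simp] lemma killVar_X_self (j : σ) : killVar j (X j : MvPolynomial σ R) = 0 := by
  simp [killVar]

lemma killVar_X_of_ne {i j : σ} (h : i ≠ j) : killVar j (X i : MvPolynomial σ R) = X i := by
  simp [killVar, h]

lemma killVar_idem (j : σ) (f : MvPolynomial σ R) : killVar j (killVar j f) = killVar j f := by
  refine DFunLike.congr_fun (f := (killVar j).comp (killVar j))
    (ringHom_ext (by simp) fun i => ?_) f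
  obtain rfl | h := eq_or_ne i j <;> simp [killVar_X_of_ne, *]

lemma killVar_comm (i j : σ) (f : MvPolynomial σ R) :
    killVar i (killVar j f) = killVar j (killVar i f) := by
  refine DFunLike.congr_fun (f := (killVar i).comp (killVar j)) (g := (killVar j).comp (killVar i))
    (ringHom_ext (by simp) fun k => ?_) f
  obtain rfl | hi := eq_or_ne k i <;> obtain rfl | hj := eq_or_ne k j <;>
    simp [killVar_X_of_ne, *]

lemma X_dvd_sub_killVar (j : σ) (f : MvPolynomial σ R) : X j ∣ f - killVar j f := by
  rw [← Ideal.mem_span_singleton, ← Ideal.Quotient.eq]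
  refine DFunLike.congr_fun (f := Ideal.Quotient.mk _) (g := (Ideal.Quotient.mk _).comp (killVar j))
    (ringHom_ext (by simp) fun i => ?_) f
  obtain rfl | h := eq_or_ne i j
  · simp
  · simp [killVar_X_of_ne h]

lemma killVar_eq_zero_iff {j : σ} {f : MvPolynomial σ R} : killVar j f = 0 ↔ X j ∣ f := by
  refine ⟨fun h => by simpa [h] using X_dvd_sub_killVar j f, ?_⟩
  rintro ⟨g, rfl⟩
  simp

lemma C_dvd_of_C_dvd_prod_X_pow_mul {R σ : Type*} [CommRing R] {a : R} {S : Finset σ}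
    {f : MvPolynomial σ R} {k : ℕ} (h : C a ∣ (∏ j ∈ S, X j) ^ k * f) : C a ∣ f := by
  have pow_eq : (∏ j ∈ S, X j : MvPolynomial σ R) ^ k =
      monomial (k • ∑ j ∈ S, Finsupp.single j 1) 1 := by
    rw [show ∏ j ∈ S, X j = monomial (∑ j ∈ S, Finsupp.single j 1) (1 : R) from
      (monomial_sum_one _ _).symm, monomial_pow, one_pow]
  rw [pow_eq, C_dvd_iff_dvd_coeff] at h
  refine (C_dvd_iff_dvd_coeff _ _).2 fun u => ?_
  have dvd_coeff := h (k • ∑ j ∈ S, Finsupp.single j 1 + u)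
  rwa [coeff_monomial_mul, one_mul] at dvd_coeff

lemma exists_eq_C_mul_add_prod_X_mul {a : R} {S : Finset σ} {f : MvPolynomial σ R}
    (h : ∀ j ∈ S, C a ∣ killVar j f) : ∃ t y, f = C a * t + (∏ j ∈ S, X j) * y := by
  induction S using Finset.induction_on with
  | empty => exact ⟨0, f, by simp⟩
  | insert j S hj ih =>
    rw [Finset.forall_mem_insert] at h
    obtain ⟨t, y, rfl⟩ := ih h.2
    have killVar_prod : killVar j (∏ i ∈ S, X i : MvPolynomial σ R) = ∏ i ∈ S, X i := by
      rw [map_prod]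
      exact Finset.prod_congr rfl fun i hi => killVar_X_of_ne (ne_of_mem_of_not_mem hi hj)
    have C_dvd := h.1
    rw [map_add, map_mul, map_mul, killVar_C, killVar_prod,
      dvd_add_right (dvd_mul_right _ _)] at C_dvd
    obtain ⟨w, hw⟩ := C_dvd_of_C_dvd_prod_X_pow_mul (k := 1) (by rwa [pow_one])
    obtain ⟨z, hz⟩ := X_dvd_sub_killVar j y
    refine ⟨t + (∏ i ∈ S, X i) * w, z, ?_⟩
    rw [eq_add_of_sub_eq hz, hw, Finset.prod_insert hj]
    ring

lemma prod_X_dvd_of_forall_killVar_eq_zero {S : Finset σ} {f : MvPolynomial σ R}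
    (h : ∀ j ∈ S, killVar j f = 0) : (∏ j ∈ S, X j) ∣ f := by
  obtain ⟨t, y, rfl⟩ := exists_eq_C_mul_add_prod_X_mul (a := (0 : R)) (S := S) (f := f)
    fun j hj => by simp [h j hj]
  simp

end KillVar

section LastRow

variable {A : Type*} [CommRing A] {s : ℕ}

lemma exists_scaleLast_mul_eq_mul_scaleLast {p : A} {U : Matrix (Fin (s + 1)) (Fin (s + 1)) A}
    (h : ∀ a ≠ Fin.last s, p ∣ U a (Fin.last s)) :
    ∃ U' : Matrix (Fin (s + 1)) (Fin (s + 1)) A, scaleLast s p * U = U' * scaleLast s p := by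
  have dvd_col (a) : p ∣ (scaleLast s p * U) a (Fin.last s) := by
    obtain rfl | ha := eq_or_ne a (Fin.last s)
    · exact scaleLast_mul_apply_last p U _ ▸ dvd_mul_right _ _
    · exact scaleLast_mul_apply_of_ne p U ha _ ▸ h a ha
  choose w hw using dvd_col
  refine ⟨(scaleLast s p * U).updateCol (Fin.last s) w, ?_⟩
  ext a b
  rw [scaleLast, mul_diagonal, ← scaleLast]
  obtain rfl | hb := eq_or_ne b (Fin.last s)
  · rw [updateCol_self, Function.update_self, hw, mul_comm]
  · rw [updateCol_ne hb, Function.update_of_ne hb, Pi.one_apply, mul_one]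

lemma matEquiv_scaleLast_mul [IsDomain A] {p : A} (hp : p ≠ 0)
    {U : Matrix (Fin (s + 1)) (Fin (s + 1)) A} (hU : IsUnit U.det)
    (h : ∀ a ≠ Fin.last s, p ∣ U a (Fin.last s)) {m : ℕ} (F : Matrix (Fin (s + 1)) (Fin m) A) :
    MatEquiv (scaleLast s p * (U * F)) (scaleLast s p * F) := by
  obtain ⟨U', hU'⟩ := exists_scaleLast_mul_eq_mul_scaleLast h
  have det_eq : U'.det = U.det := by
    have det_mul_eq := congrArg det hU'
    rw [det_mul, det_mul, det_scaleLast, mul_comm] at det_mul_eq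
    exact (mul_right_cancel₀ hp det_mul_eq).symm
  refine ⟨U', 1, by rwa [det_eq], by simp, ?_⟩
  rw [← Matrix.mul_assoc, hU', Matrix.mul_one, Matrix.mul_assoc]

lemma det_eq_prod_mul_of_rows_diagonal {M : Matrix (Fin (s + 1)) (Fin (s + 1)) A} {φ : Fin s → A}
    (h : ∀ i j, M (Fin.castSucc i) j = if Fin.castSucc i = j then φ i else 0) :
    M.det = (∏ i, φ i) * M (Fin.last s) (Fin.last s) := by
  rw [det_of_isLowerTriangular, Fin.prod_univ_castSucc]
  · simp only [h, if_true]
  · intro i j (hij : i < j)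
    obtain ⟨i, rfl⟩ := Fin.exists_castSucc_eq.2 (Fin.ne_last_of_lt hij)
    rw [h, if_neg hij.ne]

lemma prod_mul_apply_last_mem_minorIdeal {M : Matrix (Fin (s + 1)) (Fin (s + 1)) A} {φ : ℕ → A}
    (h : ∀ i ≠ Fin.last s, ∀ j, M i j = diagonal (fun i : Fin (s + 1) => φ i) i j)
    (k : Fin (s + 1)) :
    (∏ i ∈ Finset.range k, φ i) * M (Fin.last s) k ∈ minorIdeal M (k + 1) := by
  let f : Fin (k + 1) → Fin (s + 1) :=
    Fin.lastCases (Fin.last s) fun i => Fin.castLE k.isLt.le i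
  let g : Fin (k + 1) → Fin (s + 1) := Fin.castLE k.isLt
  have minor := det_submatrix_mem_minorIdeal M f g
  rw [det_eq_prod_mul_of_rows_diagonal (φ := fun i : Fin k => φ i)] at minor
  · rw [← Fin.prod_univ_eq_prod_range]
    have corner : M.submatrix f g (Fin.last k) (Fin.last k) = M (Fin.last s) k := by
      simp only [submatrix_apply, f, g, Fin.lastCases_last]
      rfl
    rwa [corner] at minor
  · intro i j
    have hi : f i.castSucc ≠ Fin.last s := by
      simp only [f, Fin.lastCases_castSucc, ne_eq, Fin.ext_iff, Fin.val_castLE, Fin.val_last]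
      lia
    rw [submatrix_apply, h _ hi, diagonal_apply]
    simp [f, g, Fin.ext_iff]

lemma exists_isUnit_mul_map_eq_diagonal {ι : Type*} {ρ : ι → A →+* A}
    {M : Matrix (Fin (s + 1)) (Fin (s + 1)) A} {φ t : Fin (s + 1) → A}
    (h : ∀ i, ∀ a ≠ Fin.last s, ∀ b, ρ i (M a b) = diagonal φ a b)
    (h_last : ∀ i b, ρ i (M (Fin.last s) b) = diagonal φ (Fin.last s) b + φ b * ρ i (t b))
    (ht : t (Fin.last s) = 0) :
    ∃ E : Matrix (Fin (s + 1)) (Fin (s + 1)) A, IsUnit E.det ∧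
      (∀ a ≠ Fin.last s, E a (Fin.last s) = 0) ∧ ∀ i, (E * M).map (ρ i) = diagonal φ := by
  refine ⟨1 + vecMulVec (Pi.single (Fin.last s) 1) (-t), ?_, fun a ha => ?_, fun i => ?_⟩
  · rw [vecMulVec_eq Unit, det_one_add_replicateCol_mul_replicateRow]
    simp [ht]
  · simp [vecMulVec_apply, ha]
  · have vecMul_eq (b) : ρ i ((t ᵥ* M) b) = φ b * ρ i (t b) := by
      have term_eq (c) : ρ i (t c * M c b) = ρ i (t c) * diagonal φ c b := by
        obtain rfl | hc := eq_or_ne c (Fin.last s)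
        · simp [ht]
        · rw [map_mul, h i c hc]
      simp only [vecMul, dotProduct, map_sum, term_eq]
      rw [Finset.sum_eq_single b (fun c _ hc => by simp [hc]) (by simp), diagonal_apply_eq,
        mul_comm]
    ext a b
    rw [Matrix.add_mul, Matrix.one_mul, vecMulVec_mul, neg_vecMul, map_apply, Matrix.add_apply,
      vecMulVec_apply, map_add, Pi.neg_apply, mul_neg, map_neg, map_mul, vecMul_eq]
    obtain rfl | ha := eq_or_ne a (Fin.last s)
    · rw [h_last, Pi.single_eq_same, map_one]
      ring
    · rw [h i a ha, Pi.single_eq_of_ne ha, map_zero]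
      ring

lemma exists_det_scaleLast_mul_eq [IsDomain A] {M : Matrix (Fin (s + 1)) (Fin (s + 1)) A} {d : A}
    (h : minorIdeal M (s + 1) = Ideal.span {d}) :
    ∃ u : Aˣ, (scaleLast s u.val * M).det = d := by
  rw [minorIdeal_eq_span_det, Ideal.span_singleton_eq_span_singleton] at h
  obtain ⟨u, hu⟩ := h
  exact ⟨u, by rw [det_mul, det_scaleLast, mul_comm, hu]⟩

end LastRow

section SquareCase

variable {B : Type*} [CommRing B] {N s : ℕ} {Φ : ℕ → B}

lemma minorIdeal_eq_of_scaleLast_prod_X_mul {k : ℕ} {d : B}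
    {M : Matrix (Fin (s + 1)) (Fin (s + 1)) (MvPolynomial (Fin N) B)}
    (h : minorIdeal (scaleLast s (∏ i, X i) * M) k = Ideal.span {C d}) :
    minorIdeal M k = Ideal.span {C d} := by
  refine le_antisymm (fun x hx => ?_) (h ▸ minorIdeal_mul_le_right _ _ _)
  let p : MvPolynomial (Fin N) B := ∏ i, X i
  have smul_eq : p • M = diagonal (Function.update (fun _ => p) (Fin.last s) 1) *
      (scaleLast s p * M) := by
    ext a b
    rw [diagonal_mul, Matrix.smul_apply, smul_eq_mul]
    obtain rfl | ha := eq_or_ne a (Fin.last s)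
    · rw [scaleLast_mul_apply_last, Function.update_self, one_mul]
    · rw [scaleLast_mul_apply_of_ne p M ha, Function.update_of_ne ha]
  have pow_mul_mem : p ^ k * x ∈ minorIdeal (p • M) k :=
    minorIdeal_smul p M k ▸ Ideal.mul_mem_mul (Ideal.mem_span_singleton_self _) hx
  rw [smul_eq] at pow_mul_mem
  have mem := minorIdeal_mul_le_right _ _ _ pow_mul_mem
  rw [h, Ideal.mem_span_singleton] at mem
  exact Ideal.mem_span_singleton.2 (C_dvd_of_C_dvd_prod_X_pow_mul mem)

lemma killVar_prod_X (j : Fin N) : killVar j (∏ i, X i : MvPolynomial (Fin N) B) = 0 :=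
  killVar_eq_zero_iff.2 (Finset.dvd_prod_of_mem _ (Finset.mem_univ j))

lemma exists_eq_scaleLast_prod_X_mul
    {M H : Matrix (Fin (s + 1)) (Fin (s + 1)) (MvPolynomial (Fin N) B)}
    (h : ∀ j, M.map (killVar j) = scaleLast s 0 * H) :
    ∃ M', M = scaleLast s (∏ i, X i) * M' ∧
      ∀ j, ∀ a ≠ Fin.last s, ∀ b, killVar j (M' a b) = H a b := by
  have entry (j a b) : killVar j (M a b) = (scaleLast s 0 * H : Matrix _ _ _) a b := by
    rw [← h j, map_apply]
  have dvd_last (b) : (∏ i, X i) ∣ M (Fin.last s) b :=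
    prod_X_dvd_of_forall_killVar_eq_zero fun j _ => by
      rw [entry, scaleLast_mul_apply_last, zero_mul]
  choose w hw using dvd_last
  refine ⟨M.updateRow (Fin.last s) w, ?_, fun j a ha b => ?_⟩
  · ext a b
    obtain rfl | ha := eq_or_ne a (Fin.last s)
    · rw [scaleLast_mul_apply_last, updateRow_self, hw]
    · rw [scaleLast_mul_apply_of_ne _ _ ha, updateRow_ne ha]
  · rw [updateRow_ne ha, entry, scaleLast_mul_apply_of_ne _ _ ha]

variable [IsDomain B]

lemma exists_killVar_apply_last_eq {M : Matrix (Fin (s + 1)) (Fin (s + 1)) (MvPolynomial (Fin N) B)}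
    (hM : ∀ k ≤ s + 1, minorIdeal M k = Ideal.span {C (∏ j ∈ Finset.range k, Φ j)})
    (hdet : M.det = C (∏ j ∈ Finset.range (s + 1), Φ j)) (hΦ : ∀ i < s + 1, Φ i ≠ 0)
    (h : ∀ j, ∀ a ≠ Fin.last s, ∀ b,
      killVar j (M a b) = diagonal (fun i : Fin (s + 1) => C (Φ i)) a b) :
    ∃ t : Fin (s + 1) → MvPolynomial (Fin N) B, t (Fin.last s) = 0 ∧
      ∀ j b, killVar j (M (Fin.last s) b) =
        diagonal (fun i : Fin (s + 1) => C (Φ i)) (Fin.last s) b + C (Φ b) * killVar j (t b) := by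
  have prod_ne {k : ℕ} (hk : k ≤ s) :
      (C (∏ j ∈ Finset.range k, Φ j) : MvPolynomial (Fin N) B) ≠ 0 :=
    C_ne_zero.2 <| Finset.prod_ne_zero_iff.2 fun i hi => hΦ i (by grind)
  have corner (j) : killVar j (M (Fin.last s) (Fin.last s)) = C (Φ s) := by
    have det_map : (M.map (killVar j)).det = C (∏ j ∈ Finset.range (s + 1), Φ j) := by
      rw [← RingHom.mapMatrix_apply, ← RingHom.map_det, hdet, killVar_C]
    rw [det_eq_prod_mul_of_rows_diagonal (φ := fun i : Fin s => C (Φ i)),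
      Finset.prod_range_succ, C_mul, ← Fin.prod_univ_eq_prod_range, map_prod] at det_map
    · refine mul_left_cancel₀ ?_ det_map
      rw [← map_prod, Fin.prod_univ_eq_prod_range]
      exact prod_ne le_rfl
    · intro a b
      rw [map_apply, h j _ (Fin.castSucc_lt_last a).ne, diagonal_apply]
      rfl
  have C_dvd (j) (b : Fin (s + 1)) : C (Φ b) ∣ killVar j (M (Fin.last s) b) := by
    have mem := prod_mul_apply_last_mem_minorIdeal (M := M.map (killVar j))
      (φ := fun i => C (Φ i)) (h j) b
    rw [minorIdeal_map_eq_span (hM _ b.isLt), Ideal.mem_span_singleton, killVar_C,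
      Finset.prod_range_succ, C_mul, ← map_prod] at mem
    exact (mul_dvd_mul_iff_left (prod_ne (Nat.lt_succ_iff.1 b.isLt))).1 mem
  choose t y hty using fun b : Fin (s + 1) =>
    exists_eq_C_mul_add_prod_X_mul (S := Finset.univ) fun j _ => C_dvd j b
  refine ⟨Function.update t (Fin.last s) 0, Function.update_self .., fun j b => ?_⟩
  obtain rfl | hb := eq_or_ne b (Fin.last s)
  · simp [corner]
  · rw [Function.update_of_ne hb, diagonal_apply_ne _ hb.symm, zero_add, hty, map_add, map_mul,
      map_mul, killVar_C, killVar_prod_X, zero_mul, add_zero]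

lemma prod_X_ne_zero : (∏ i, X i : MvPolynomial (Fin N) B) ≠ 0 :=
  Finset.prod_ne_zero_iff.2 fun i _ => X_ne_zero i

lemma MatEquiv.scaleLast_prod_X_mul
    {M H : Matrix (Fin (s + 1)) (Fin (s + 1)) (MvPolynomial (Fin N) B)} (h : MatEquiv M H)
    (hM : ∀ j, M.map (killVar j) = H) (hH : ∀ j, H.map (killVar j) = H) :
    MatEquiv (scaleLast s (∏ i, X i) * M) (scaleLast s (∏ i, X i) * H) := by
  obtain ⟨U, V, rfl, hU⟩ := h.exists_map_eq_one killVar_idem killVar_comm hM hH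
  have hU_last (a) (ha : a ≠ Fin.last s) : (∏ i, X i) ∣ U.val a (Fin.last s) :=
    prod_X_dvd_of_forall_killVar_eq_zero fun j _ => by
      rw [← map_apply (f := killVar j), hU j, one_apply_ne ha]
  have clear_U := matEquiv_scaleLast_mul prod_X_ne_zero ((isUnit_iff_isUnit_det _).1 U.isUnit)
    hU_last (H * V.val)
  rw [← Matrix.mul_assoc U.val, ← Matrix.mul_assoc _ H] at clear_U
  exact clear_U.trans (matEquiv_mul_units _ V)

lemma exists_isUnit_mul_map_killVar_eq
    {M : Matrix (Fin (s + 1)) (Fin (s + 1)) (MvPolynomial (Fin N) B)}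
    (hM : ∀ k ≤ s + 1, minorIdeal M k = Ideal.span {C (∏ j ∈ Finset.range k, Φ j)})
    (hΦ : ∀ i < s + 1, Φ i ≠ 0)
    (h : ∀ j, ∀ a ≠ Fin.last s, ∀ b,
      killVar j (M a b) = diagonal (fun i : Fin (s + 1) => C (Φ i)) a b) :
    ∃ E : Matrix (Fin (s + 1)) (Fin (s + 1)) (MvPolynomial (Fin N) B), IsUnit E.det ∧
      (∀ a ≠ Fin.last s, E a (Fin.last s) = 0) ∧
      ∀ j, (E * M).map (killVar j) = diagonal fun i : Fin (s + 1) => C (Φ i) := by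
  obtain ⟨u, hu⟩ := exists_det_scaleLast_mul_eq (hM (s + 1) le_rfl)
  have isUnit_scale : IsUnit (scaleLast s u.val).det := by simp
  have scaled : MatEquiv (scaleLast s u.val * M) M :=
    ⟨_, 1, isUnit_scale, by simp, (Matrix.mul_one _).symm⟩
  have rows (j) (a) (ha : a ≠ Fin.last s) (b) : killVar j ((scaleLast s u.val * M) a b) =
      diagonal (fun i : Fin (s + 1) => C (Φ i)) a b := by
    rw [scaleLast_mul_apply_of_ne _ _ ha, h j a ha]
  obtain ⟨t, ht, ht_last⟩ := exists_killVar_apply_last_eq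
    (fun k hk => scaled.minorIdeal_eq k ▸ hM k hk) hu hΦ rows
  obtain ⟨E, hE, hE_last, hE_map⟩ := exists_isUnit_mul_map_eq_diagonal rows ht_last ht
  refine ⟨E * scaleLast s u.val, by rw [det_mul]; exact hE.mul isUnit_scale, fun a ha => ?_,
    fun j => by rw [Matrix.mul_assoc, hE_map]⟩
  rw [scaleLast, mul_diagonal, hE_last a ha, zero_mul]

variable [IsPrincipalIdealRing B]

lemma exists_matEquiv_map_killVar_eq (hB : IsHermiteRing (MvPolynomial (Fin N) B))
    (hB' : IsProjectiveFree (MvPolynomial (Fin N) B))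
    {G : Matrix (Fin (s + 1)) (Fin (s + 1)) (MvPolynomial (Fin N) B)}
    (hG : ∀ k ≤ s, minorIdeal G k = Ideal.span {C (∏ j ∈ Finset.range k, Φ j)})
    {d : MvPolynomial (Fin N) B} (hdet : minorIdeal G (s + 1) = Ideal.span {(∏ i, X i) * d})
    (hΦ : ∀ i < s, Φ i ≠ 0) :
    ∃ G', MatEquiv G G' ∧
      ∀ j, G'.map (killVar j) = scaleLast s 0 * diagonal fun i : Fin (s + 1) => C (Φ i) := by
  refine exists_matEquiv_forall_map_eq killVar_idem killVar_comm (fun j => ?_) fun j =>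
    matEquiv_scaleLast_zero_mul_diagonal hB hB' (fun k hk => ?_) ?_ hΦ
  · rw [Matrix.map_mul, map_scaleLast, map_zero, diagonal_map (map_zero _)]
    simp only [killVar_C]
  · rw [minorIdeal_map_eq_span (hG k hk), killVar_C]
  · rw [minorIdeal_map_eq_span hdet, map_mul, killVar_prod_X, zero_mul, Ideal.span_singleton_zero]

theorem matEquiv_scaleLast_prod_X_mul_diagonal (hB : IsHermiteRing (MvPolynomial (Fin N) B))
    (hB' : IsProjectiveFree (MvPolynomial (Fin N) B))
    {G : Matrix (Fin (s + 1)) (Fin (s + 1)) (MvPolynomial (Fin N) B)}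
    (hG : ∀ k ≤ s, minorIdeal G k = Ideal.span {C (∏ j ∈ Finset.range k, Φ j)})
    (hdet : minorIdeal G (s + 1) = Ideal.span {(∏ i, X i) * C (∏ j ∈ Finset.range (s + 1), Φ j)})
    (hΦ : ∀ i < s + 1, Φ i ≠ 0) :
    MatEquiv G (scaleLast s (∏ i, X i) * diagonal fun i : Fin (s + 1) => C (Φ i)) := by
  have p_ne := prod_X_ne_zero (B := B) (N := N)
  obtain ⟨G₁, hG₁, hG₁_map⟩ :=
    exists_matEquiv_map_killVar_eq hB hB' hG hdet fun i hi => hΦ i (by lia)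
  obtain ⟨G₂, rfl, hG₂_rows⟩ := exists_eq_scaleLast_prod_X_mul hG₁_map
  have hG₂ (k) (hk : k ≤ s + 1) :
      minorIdeal G₂ k = Ideal.span {C (∏ j ∈ Finset.range k, Φ j)} := by
    obtain rfl | hk := hk.eq_or_lt
    · rw [hG₁.minorIdeal_eq, minorIdeal_eq_span_det, det_mul, det_scaleLast,
        ← Ideal.span_singleton_mul_span_singleton, ← Ideal.span_singleton_mul_span_singleton,
        Ideal.span_singleton_mul_right_inj p_ne] at hdet
      rw [minorIdeal_eq_span_det, hdet]
    · exact minorIdeal_eq_of_scaleLast_prod_X_mul (hG₁.minorIdeal_eq k ▸ hG k (by lia))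
  obtain ⟨E, hE, hE_last, hE_map⟩ := exists_isUnit_mul_map_killVar_eq hG₂ hΦ hG₂_rows
  have diag : MatEquiv (E * G₂) (diagonal fun i : Fin (s + 1) => C (Φ i)) :=
    .trans ⟨E, 1, hE, by simp, (Matrix.mul_one _).symm⟩ (matEquiv_diagonal_of_minorIdeal hB hG₂ hΦ)
  have clear_E := matEquiv_scaleLast_mul p_ne hE (fun a ha => hE_last a ha ▸ dvd_zero _) G₂
  refine hG₁.trans (clear_E.symm.trans (diag.scaleLast_prod_X_mul hE_map fun j => ?_))
  rw [diagonal_map (map_zero _)]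
  simp only [killVar_C]

end SquareCase

section SmithForm

variable {A : Type*} [CommRing A] {l m k r : ℕ} {F : Matrix (Fin l) (Fin m) A}

lemma isGcdMinors_of_minorIdeal_eq_span {d : A} (h : minorIdeal F k = Ideal.span {d}) :
    IsGcdMinors F k d := by
  have dvd_minors_iff (e : A) : (∀ p ∈ minorsSet F k, e ∣ p) ↔ e ∣ d := by
    rw [← Ideal.span_singleton_le_span_singleton, ← h, ← span_minorsSet, Ideal.span_le]
    exact forall₂_congr fun _ _ => Ideal.mem_span_singleton.symm
  exact ⟨(dvd_minors_iff d).2 dvd_rfl, fun e => (dvd_minors_iff e).1⟩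

lemma IsGcdMinors.span_eq {d e : A} (hd : IsGcdMinors F k d) (he : IsGcdMinors F k e) :
    Ideal.span {d} = Ideal.span {e} :=
  le_antisymm (Ideal.span_singleton_le_span_singleton.2 (hd.2 e he.1))
    (Ideal.span_singleton_le_span_singleton.2 (he.2 d hd.1))

lemma span_mul_reducedIdeal {d : A} (h : ∀ p ∈ minorsSet F k, d ∣ p) :
    Ideal.span {d} * reducedIdeal F k d = minorIdeal F k := by
  rw [← span_minorsSet, reducedIdeal, Ideal.span_mul_span']
  congr 1
  ext p
  simp only [Set.singleton_mul, Set.mem_image, Set.mem_ofPred_eq]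
  refine ⟨?_, fun hp => ?_⟩
  · rintro ⟨v, hv, rfl⟩
    exact hv
  · obtain ⟨v, rfl⟩ := h p hp
    exact ⟨v, hp, rfl⟩

lemma JkUnit.exists_minorIdeal_eq_span (hJ : JkUnit F k) :
    ∃ d, IsGcdMinors F k d ∧ minorIdeal F k = Ideal.span {d} := by
  obtain ⟨d, hd, hdJ⟩ := hJ
  exact ⟨d, hd, by rw [← span_mul_reducedIdeal hd.1, hdJ, Ideal.mul_top]⟩

lemma IsGcdMinors.minorIdeal_eq_span {d : A} (hd : IsGcdMinors F k d) (hJ : JkUnit F k) :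
    minorIdeal F k = Ideal.span {d} := by
  obtain ⟨e, he, hFe⟩ := hJ.exists_minorIdeal_eq_span
  rw [hFe, he.span_eq hd]

lemma IsGcdMinors.jkUnit [IsDomain A] {d : A} (hd : IsGcdMinors F k d) (h0 : minorIdeal F k ≠ ⊥)
    (hmem : d ∈ minorIdeal F k) : JkUnit F k := by
  refine ⟨d, hd, (Ideal.eq_top_iff_one _).2 ?_⟩
  rw [← span_mul_reducedIdeal hd.1] at h0 hmem
  have d_ne_zero : d ≠ 0 := by
    rintro rfl
    simp at h0
  obtain ⟨v, hv, hdv⟩ := Ideal.mem_span_singleton_mul.1 hmem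
  rwa [(mul_eq_left₀ d_ne_zero).1 hdv] at hv

lemma HasRank.minorIdeal_succ_eq_bot (h : HasRank F r) : minorIdeal F (r + 1) = ⊥ := by
  rw [← span_minorsSet, Ideal.span_eq_bot]
  exact h.2

lemma HasRank.minorIdeal_ne_bot (h : HasRank F r) (hk : k ≤ r) : minorIdeal F k ≠ ⊥ := by
  obtain ⟨p, hp, hp0⟩ := h.1
  refine ne_bot_of_le_ne_bot (fun h0 => hp0 ?_) (minorIdeal_antitone F hk)
  rw [← span_minorsSet, Ideal.span_eq_bot] at h0
  exact h0 p hp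

lemma prod_Iic_eq_prod_castLE (Φ : Fin l → A) (i : Fin l) :
    ∏ j ∈ Finset.Iic i, Φ j = ∏ j : Fin (i + 1), Φ (j.castLE i.isLt) := by
  have Iic_eq_map : Finset.Iic i = Finset.univ.map (Fin.castLEEmb i.isLt) := by
    ext j
    simp only [Finset.mem_Iic, Finset.mem_map, Finset.mem_univ, true_and]
    exact ⟨fun h => ⟨⟨j, Nat.lt_succ_of_le h⟩, rfl⟩,
      fun ⟨x, hx⟩ => hx ▸ Nat.le_of_lt_succ x.isLt⟩
  rw [Iic_eq_map, Finset.prod_map]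
  rfl

lemma HasRank.le_left (h : HasRank F r) : r ≤ l := by
  obtain ⟨_, ⟨f, -, -⟩, -⟩ := h.1
  simpa using Fintype.card_le_of_embedding f

lemma HasRank.le_right (h : HasRank F r) : r ≤ m := by
  obtain ⟨_, ⟨-, g, -⟩, -⟩ := h.1
  simpa using Fintype.card_le_of_embedding g

lemma prod_Iic_mem_minorIdeal_smithDiag (Φ : Fin l → A) (i : Fin l) (him : (i : ℕ) < m) :
    ∏ j ∈ Finset.Iic i, Φ j ∈ minorIdeal (smithDiag Φ : Matrix (Fin l) (Fin m) A) (i + 1) := by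
  have leading_block : (smithDiag Φ : Matrix (Fin l) (Fin m) A).submatrix (Fin.castLE i.isLt)
      (Fin.castLE him) = diagonal fun x => Φ (x.castLE i.isLt) := by
    ext x y
    simp [smithDiag, diagonal_apply, Fin.ext_iff]
  rw [prod_Iic_eq_prod_castLE, ← det_diagonal, ← leading_block]
  exact det_submatrix_mem_minorIdeal _ _ _

theorem SmithEquivAt.jkUnit [IsDomain A] (hS : SmithEquivAt F r) (hrank : HasRank F r)
    (hk1 : 1 ≤ k) (hk : k ≤ r) : JkUnit F k := by
  obtain ⟨Φ, hgcd, -, hE⟩ := hS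
  obtain ⟨i, rfl⟩ : ∃ i, k = i + 1 := ⟨k - 1, by omega⟩
  let i' : Fin l := ⟨i, hk.trans hrank.le_left⟩
  refine (hgcd i' hk).jkUnit (hrank.minorIdeal_ne_bot hk) ?_
  rw [hE.minorIdeal_eq]
  exact prod_Iic_mem_minorIdeal_smithDiag Φ i' (hk.trans hrank.le_right)

lemma smithEquivAt_of_matEquiv_zeroPadded {Ψ : ℕ → A}
    (hΨ : ∀ k ≤ r, minorIdeal F k = Ideal.span {∏ j ∈ Finset.range k, Ψ j})
    (hE : MatEquiv F (zeroPadded l m (diagonal fun i : Fin r => Ψ i))) : SmithEquivAt F r := by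
  refine ⟨fun i => if (i : ℕ) < r then Ψ i else 0, fun i hi => ?_, fun i hi => ?_, ?_⟩
  · apply isGcdMinors_of_minorIdeal_eq_span
    rw [hΨ _ hi, prod_Iic_eq_prod_castLE, Finset.prod_range]
    congr 2
    refine Finset.prod_congr rfl fun j _ => (if_pos ?_).symm
    exact (Nat.le_of_lt_succ j.isLt).trans_lt hi
  · exact if_neg hi.not_gt
  · rwa [zeroPadded_diagonal] at hE

end SmithForm

lemma exists_prod_range_eq {M : Type*} [CommMonoid M] {δ : ℕ → M} {n : ℕ} (h0 : δ 0 = 1)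
    (hδ : ∀ k < n, δ k ∣ δ (k + 1)) : ∃ φ : ℕ → M, ∀ k ≤ n, ∏ j ∈ Finset.range k, φ j = δ k := by
  have exists_quotient (k : ℕ) : ∃ q, k < n → δ (k + 1) = δ k * q := by
    by_cases hk : k < n
    · obtain ⟨q, hq⟩ := hδ k hk
      exact ⟨q, fun _ => hq⟩
    · exact ⟨1, fun h => absurd h hk⟩
  choose φ hφ using exists_quotient
  refine ⟨φ, fun k hk => ?_⟩
  induction k with
  | zero => simp [h0]
  | succ k ih => rw [Finset.prod_range_succ, ih (by omega), hφ k hk]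

section InvariantFactors

variable {B : Type*} [CommRing B] [IsDomain B] {N s : ℕ}

lemma dvd_of_dvd_prod_X_mul {σ : Type*} {d c : MvPolynomial σ B} (hd : ∀ j, ¬ X j ∣ d)
    {S : Finset σ} (h : d ∣ (∏ j ∈ S, X j) * c) : d ∣ c := by
  classical
  induction S using Finset.induction_on with
  | empty => simpa using h
  | insert j S hj ih =>
    rw [Finset.prod_insert hj, mul_assoc] at h
    obtain ⟨e, he⟩ := h
    obtain hXd | ⟨e', rfl⟩ := (X_prime (R := B) (i := j)).dvd_or_dvd ⟨_, he.symm⟩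
    · exact absurd hXd (hd j)
    · refine ih ⟨e', mul_left_cancel₀ (X_ne_zero j) ?_⟩
      rw [he, mul_left_comm]

lemma pow_dvd_det_adjugate {A : Type*} [CommRing A] {G : Matrix (Fin (s + 1)) (Fin (s + 1)) A}
    {p : A} (h : minorIdeal G s ≤ Ideal.span {p}) : p ^ (s + 1) ∣ G.det ^ s := by
  have dvd_adjugate (i j) : p ∣ G.adjugate i j := by
    rw [adjugate_fin_succ_eq_det_submatrix]
    exact (Ideal.mem_span_singleton.1 (h (det_submatrix_mem_minorIdeal _ _ _))).mul_left _
  choose M hM using dvd_adjugate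
  have adjugate_eq : G.adjugate = p • of M := by
    ext i j : 2
    rw [hM]
    rfl
  have det_adj := det_adjugate G
  rw [adjugate_eq, det_smul, Fintype.card_fin, Nat.add_sub_cancel] at det_adj
  exact ⟨_, det_adj.symm⟩

lemma not_X_dvd_prod_erase_mul_C {σ : Type*} [DecidableEq σ] (S : Finset σ) (i : σ) {h : B}
    (h0 : h ≠ 0) : ¬ (X i : MvPolynomial σ B) ∣ (∏ j ∈ S.erase i, X j) * C h := by
  rw [← killVar_eq_zero_iff, map_mul, killVar_C, map_prod]
  refine mul_ne_zero (Finset.prod_ne_zero_iff.2 fun j hj => ?_) (C_ne_zero.2 h0)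
  rw [killVar_X_of_ne (Finset.ne_of_mem_erase hj)]
  exact X_ne_zero j

lemma not_X_dvd_of_minorIdeal_eq_span
    {G : Matrix (Fin (s + 1)) (Fin (s + 1)) (MvPolynomial (Fin N) B)}
    {d : MvPolynomial (Fin N) B} (hs : minorIdeal G s = Ideal.span {d}) {h : B} (h0 : h ≠ 0)
    (hdet : minorIdeal G (s + 1) = Ideal.span {(∏ i, X i) * C h}) (i : Fin N) : ¬ X i ∣ d := by
  intro hXd
  rw [minorIdeal_eq_span_det] at hdet
  set w : MvPolynomial (Fin N) B := (∏ j ∈ Finset.univ.erase i, X j) * C h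
  have det_dvd : G.det ∣ X i * w := by
    rw [← mul_assoc, Finset.mul_prod_erase _ _ (Finset.mem_univ i)]
    exact (Ideal.span_singleton_eq_span_singleton.1 hdet).dvd
  have pow_dvd : X i ^ (s + 1) ∣ X i ^ s * w ^ s := by
    rw [← mul_pow]
    refine (pow_dvd_det_adjugate ?_).trans (pow_dvd_pow_of_dvd det_dvd s)
    rwa [hs, Ideal.span_singleton_le_span_singleton]
  rw [pow_succ, mul_dvd_mul_iff_left (pow_ne_zero s (X_ne_zero i))] at pow_dvd
  exact not_X_dvd_prod_erase_mul_C _ i h0 (X_prime.dvd_of_dvd_pow pow_dvd)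

lemma exists_minorIdeal_eq_span_C
    {G : Matrix (Fin (s + 1)) (Fin (s + 1)) (MvPolynomial (Fin N) B)}
    (hG : ∀ k ≤ s, ∃ d, minorIdeal G k = Ideal.span {d}) {h : B} (h0 : h ≠ 0)
    (hdet : minorIdeal G (s + 1) = Ideal.span {(∏ i, X i) * C h}) {k : ℕ} (hk : k ≤ s) :
    ∃ δ, δ ∣ h ∧ minorIdeal G k = Ideal.span {C δ} := by
  obtain ⟨e, he⟩ := hG s le_rfl
  obtain ⟨d, hd⟩ := hG k hk
  have d_dvd_e : d ∣ e := by
    rw [← Ideal.span_singleton_le_span_singleton, ← he, ← hd]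
    exact minorIdeal_antitone G hk
  have e_dvd_C : e ∣ C h := by
    refine dvd_of_dvd_prod_X_mul (not_X_dvd_of_minorIdeal_eq_span he h0 hdet)
      (S := Finset.univ) ?_
    rw [← Ideal.span_singleton_le_span_singleton, ← he, ← hdet]
    exact minorIdeal_succ_le G s
  obtain ⟨δ, hδ, rfl⟩ := (dvd_C_iff_exists h0).1 (d_dvd_e.trans e_dvd_C)
  exact ⟨δ, hδ, hd⟩

lemma exists_invariantFactors
    {G : Matrix (Fin (s + 1)) (Fin (s + 1)) (MvPolynomial (Fin N) B)}
    (hG : ∀ k ≤ s, ∃ d, minorIdeal G k = Ideal.span {d}) {h : B} (h0 : h ≠ 0)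
    (hdet : minorIdeal G (s + 1) = Ideal.span {(∏ i, X i) * C h}) :
    ∃ Φ : ℕ → B, (∀ k ≤ s, minorIdeal G k = Ideal.span {C (∏ j ∈ Finset.range k, Φ j)}) ∧
      ∏ j ∈ Finset.range (s + 1), Φ j = h := by
  have exists_gcd (k : ℕ) : ∃ δ, (k = 0 → δ = 1) ∧ (k ≤ s → δ ∣ h) ∧ (s < k → δ = h) ∧
      (k ≤ s → minorIdeal G k = Ideal.span {C δ}) := by
    by_cases hk : k ≤ s
    · obtain rfl | hk0 := eq_or_ne k 0
      · exact ⟨1, fun _ => rfl, fun _ => one_dvd h, fun hs => absurd hk hs.not_ge,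
          fun _ => by rw [minorIdeal_zero, C_1, Ideal.span_singleton_one]⟩
      · obtain ⟨δ, hδh, hδ⟩ := exists_minorIdeal_eq_span_C hG h0 hdet hk
        exact ⟨δ, fun hk' => absurd hk' hk0, fun _ => hδh, fun hs => absurd hk hs.not_ge,
          fun _ => hδ⟩
    · exact ⟨h, by lia, fun hk' => absurd hk' hk, fun _ => rfl, fun hk' => absurd hk' hk⟩
  choose δ δ_zero δ_dvd δ_top hδ using exists_gcd
  have δ_dvd_succ (k : ℕ) (hk : k < s + 1) : δ k ∣ δ (k + 1) := by
    obtain hk' | rfl := Nat.lt_succ_iff_lt_or_eq.1 hk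
    · have : (C (δ k) : MvPolynomial (Fin N) B) ∣ C (δ (k + 1)) := by
        rw [← Ideal.span_singleton_le_span_singleton, ← hδ k hk'.le, ← hδ (k + 1) hk']
        exact minorIdeal_succ_le G k
      simpa using (C_dvd_iff_dvd_coeff _ _).1 this 0
    · rw [δ_top (k + 1) k.lt_succ_self]
      exact δ_dvd k le_rfl
  obtain ⟨Φ, hΦ⟩ := exists_prod_range_eq (δ_zero 0 rfl) δ_dvd_succ
  refine ⟨Φ, fun k hk => ?_, ?_⟩
  · rw [hΦ k (by omega), hδ k hk]
  · rw [hΦ (s + 1) le_rfl, δ_top (s + 1) s.lt_succ_self]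

end InvariantFactors

section Core

variable {B : Type*} [CommRing B] [IsDomain B] {N s l m : ℕ}

lemma scaleLast_mul_diagonal {A : Type*} [CommRing A] (p : A) (φ : ℕ → A) :
    (scaleLast s p * diagonal fun i : Fin (s + 1) => φ i) =
      diagonal fun i : Fin (s + 1) => if (i : ℕ) = s then p * φ i else φ i := by
  rw [scaleLast, diagonal_mul_diagonal]
  congr 1
  funext i
  simp only [Function.update_apply, Fin.ext_iff, Fin.val_last, Pi.one_apply, ite_mul, one_mul]

theorem exists_matEquiv_diagonal_of_minorIdeal [IsPrincipalIdealRing B]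
    (hB : IsHermiteRing (MvPolynomial (Fin N) B)) (hB' : IsProjectiveFree (MvPolynomial (Fin N) B))
    {F : Matrix (Fin l) (Fin m) (MvPolynomial (Fin N) B)}
    (hF : ∀ k ≤ s, ∃ d, minorIdeal F k = Ideal.span {d}) {h : B} (h0 : h ≠ 0)
    (hlast : minorIdeal F (s + 1) = Ideal.span {(∏ i, X i) * C h})
    (hbot : minorIdeal F (s + 2) = ⊥) :
    ∃ Ψ : ℕ → MvPolynomial (Fin N) B,
      (∀ k ≤ s + 1, minorIdeal F k = Ideal.span {∏ j ∈ Finset.range k, Ψ j}) ∧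
      MatEquiv F (zeroPadded l m (diagonal fun i : Fin (s + 1) => Ψ i)) := by
  obtain ⟨hl, hm, G, hFG⟩ :=
    exists_matEquiv_zeroPadded hB' (mul_ne_zero prod_X_ne_zero (C_ne_zero.2 h0)) hlast hbot
  have minorIdeal_eq (k : ℕ) : minorIdeal F k = minorIdeal G k := by
    rw [hFG.minorIdeal_eq, minorIdeal_zeroPadded hl hm]
  simp only [minorIdeal_eq] at hF hlast ⊢
  obtain ⟨Φ, hΦ, rfl⟩ := exists_invariantFactors hF h0 hlast
  have Φ_ne_zero (i : ℕ) (hi : i < s + 1) : Φ i ≠ 0 :=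
    Finset.prod_ne_zero_iff.1 h0 i (Finset.mem_range.2 hi)
  have hG := (matEquiv_scaleLast_prod_X_mul_diagonal hB hB' hΦ hlast Φ_ne_zero).zeroPadded hl hm
  rw [scaleLast_mul_diagonal _ fun i => C (Φ i)] at hG
  refine ⟨fun i => if i = s then (∏ j, X j) * C (Φ i) else C (Φ i), fun k hk => ?_, hFG.trans hG⟩
  have prod_of_le {k : ℕ} (hk : k ≤ s) : (∏ i ∈ Finset.range k,
      if i = s then (∏ j, X j) * C (Φ i) else C (Φ i) : MvPolynomial (Fin N) B) =
      C (∏ i ∈ Finset.range k, Φ i) := by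
    rw [map_prod]
    exact Finset.prod_congr rfl fun i hi =>
      if_neg ((Finset.mem_range.1 hi).trans_le hk).ne
  obtain hk | rfl := Nat.lt_succ_iff_lt_or_eq.1 (Nat.lt_succ_of_le hk)
  · rw [hΦ k (Nat.le_of_lt_succ hk), prod_of_le (Nat.le_of_lt_succ hk)]
  · dsimp only
    rw [hlast, Finset.prod_range_succ _ s, Finset.prod_range_succ _ s, prod_of_le le_rfl,
      if_pos rfl, C_mul, mul_left_comm]

end Core

section AffineCoordinates

lemma sum_mul_sum_mul_eq {ι K R : Type*} [Fintype ι] [DecidableEq ι] [CommRing K] [CommRing R]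
    (f : K →+* R) {a c : Matrix ι ι K} (h : c * a = 1) (x : ι → R) (j : ι) :
    ∑ k, f (c j k) * ∑ i, f (a k i) * x i = x j := by
  have map_mul_eq_one : c.map f * a.map f = 1 := by
    rw [← Matrix.map_mul, h, Matrix.map_one f f.map_zero f.map_one]
  have mulVec_mulVec_eq : c.map f *ᵥ (a.map f *ᵥ x) = x := by
    rw [mulVec_mulVec, map_mul_eq_one, one_mulVec]
  exact congrFun mulVec_mulVec_eq j

variable {K : Type*} [CommRing K] {N : ℕ}

/-- The affine change of coordinates expressing `z₁, …, z_N` through new variables `gᵢ`: when `c` is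
the inverse of the coefficient matrix of the `gᵢ`, it sends `gᵢ` to `X i`. The last variable becomes
the variable of the coefficient ring `K[X]`. -/
noncomputable def toAffineCoords (c : Matrix (Fin N) (Fin N) K) (b : Fin N → K) :
    MvPolynomial (Fin (N + 1)) K →+* MvPolynomial (Fin N) (Polynomial K) :=
  eval₂Hom (C.comp Polynomial.C) <| Fin.lastCases (C Polynomial.X)
    fun j => ∑ k, C (Polynomial.C (c j k)) * (X k - C (Polynomial.C (b k)))

/-- The substitution of the affine forms `gᵢ = ∑ⱼ aᵢⱼ zⱼ + bᵢ` for the variables `X i`, and of the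
last variable for the variable of the coefficient ring `K[X]`. -/
noncomputable def ofAffineCoords (a : Matrix (Fin N) (Fin N) K) (b : Fin N → K) :
    MvPolynomial (Fin N) (Polynomial K) →+* MvPolynomial (Fin (N + 1)) K :=
  eval₂Hom (Polynomial.eval₂RingHom C (X (Fin.last N)))
    fun i => (∑ j, C (a i j) * X j.castSucc) + C (b i)

variable (a c : Matrix (Fin N) (Fin N) K) (b : Fin N → K)

@[simp] lemma toAffineCoords_C (x : K) : toAffineCoords c b (C x) = C (Polynomial.C x) := by
  simp [toAffineCoords]

@[simp] lemma toAffineCoords_X_castSucc (j : Fin N) : toAffineCoords c b (X j.castSucc) =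
    ∑ k, C (Polynomial.C (c j k)) * (X k - C (Polynomial.C (b k))) := by
  simp [toAffineCoords]

@[simp] lemma toAffineCoords_X_last : toAffineCoords c b (X (Fin.last N)) = C Polynomial.X := by
  simp [toAffineCoords]

@[simp] lemma ofAffineCoords_C_C (x : K) : ofAffineCoords a b (C (Polynomial.C x)) = C x := by
  simp [ofAffineCoords]

@[simp] lemma ofAffineCoords_C_X : ofAffineCoords a b (C Polynomial.X) = X (Fin.last N) := by
  simp [ofAffineCoords]

@[simp] lemma ofAffineCoords_X (i : Fin N) :
    ofAffineCoords a b (X i) = (∑ j, C (a i j) * X j.castSucc) + C (b i) := by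
  simp [ofAffineCoords]

variable {a c}

lemma toAffineCoords_comp_ofAffineCoords (h : a * c = 1) :
    (toAffineCoords c b).comp (ofAffineCoords a b) = RingHom.id _ := by
  refine MvPolynomial.ringHom_ext' (Polynomial.ringHom_ext (fun x => by simp) (by simp)) fun i => ?_
  have := sum_mul_sum_mul_eq ((C : _ →+* MvPolynomial (Fin N) (Polynomial K)).comp Polynomial.C) h
    (fun k => X k - C (Polynomial.C (b k))) i
  simp only [RingHom.comp_apply] at this
  simp [this]

lemma ofAffineCoords_comp_toAffineCoords (h : c * a = 1) :
    (ofAffineCoords a b).comp (toAffineCoords c b) = RingHom.id _ := by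
  refine MvPolynomial.ringHom_ext (fun x => by simp) fun i => ?_
  refine Fin.lastCases (by simp) (fun j => ?_) i
  simpa using sum_mul_sum_mul_eq (C : K →+* MvPolynomial (Fin (N + 1)) K) h
    (fun k => X k.castSucc) j

/-- The affine change of coordinates turning `∑ⱼ aᵢⱼ zⱼ + bᵢ` into the variable `X i`, with the last
variable absorbed into the coefficients. -/
noncomputable def affineCoordsEquiv (ha : IsUnit a.det) (b : Fin N → K) :
    MvPolynomial (Fin (N + 1)) K ≃+* MvPolynomial (Fin N) (Polynomial K) :=
  RingEquiv.ofRingHom (toAffineCoords a⁻¹ b) (ofAffineCoords a b)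
    (toAffineCoords_comp_ofAffineCoords b (mul_nonsing_inv a ha))
    (ofAffineCoords_comp_toAffineCoords b (nonsing_inv_mul a ha))

lemma affineCoordsEquiv_affineForm (ha : IsUnit a.det) (i : Fin N) :
    affineCoordsEquiv ha b ((∑ j, C (a i j) * X j.castSucc) + C (b i)) = X i := by
  rw [← ofAffineCoords_X]
  exact (affineCoordsEquiv ha b).apply_symm_apply (X i)

lemma exists_affineCoordsEquiv_eq_C (ha : IsUnit a.det) {h : MvPolynomial (Fin (N + 1)) K}
    (hh : h ∈ supported K {Fin.last N}) : ∃ p, affineCoordsEquiv ha b h = C p := by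
  change ∃ p, toAffineCoords a⁻¹ b h = C p
  induction hh using Algebra.adjoin_induction with
  | mem x hx =>
    rw [Set.image_singleton, Set.mem_singleton_iff] at hx
    exact ⟨_, hx ▸ toAffineCoords_X_last _ b⟩
  | algebraMap x => exact ⟨_, toAffineCoords_C _ b x⟩
  | add x y _ _ hx hy =>
    obtain ⟨p, hp⟩ := hx
    obtain ⟨q, hq⟩ := hy
    exact ⟨p + q, by rw [map_add, hp, hq, C_add]⟩
  | mul x y _ _ hx hy =>
    obtain ⟨p, hp⟩ := hx
    obtain ⟨q, hq⟩ := hy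
    exact ⟨p * q, by rw [map_mul, hp, hq, C_mul]⟩

end AffineCoordinates

section Backward

lemma smithEquivAt_of_ringEquiv {A B : Type*} [CommRing A] [CommRing B] (φ : A ≃+* B) {l m r : ℕ}
    {F : Matrix (Fin l) (Fin m) A} {Ψ : ℕ → B}
    (hΨ : ∀ k ≤ r, minorIdeal (F.map (φ : A →+* B)) k = Ideal.span {∏ j ∈ Finset.range k, Ψ j})
    (hE : MatEquiv (F.map (φ : A →+* B)) (zeroPadded l m (diagonal fun i : Fin r => Ψ i))) :
    SmithEquivAt F r := by
  have map_symm_map : (F.map (φ : A →+* B)).map (φ.symm : B →+* A) = F := by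
    ext i j : 2
    simp
  refine smithEquivAt_of_matEquiv_zeroPadded (Ψ := fun j => φ.symm (Ψ j)) (fun k hk => ?_) ?_
  · have := minorIdeal_map_eq_span (hΨ k hk) (φ.symm : B →+* A)
    rwa [map_symm_map, map_prod] at this
  · have := hE.map (φ.symm : B →+* A)
    rw [map_symm_map, zeroPadded_diagonal] at this
    rw [zeroPadded_diagonal fun j => φ.symm (Ψ j)]
    convert this using 1
    ext i j : 2
    simp only [smithDiag, of_apply, map_apply]
    split_ifs <;> simp

theorem smithEquivAt_of_forall_jkUnit {A B : Type*} [CommRing A] [CommRing B] [IsDomain B]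
    [IsPrincipalIdealRing B] {N l m s : ℕ} (φ : A ≃+* MvPolynomial (Fin N) B)
    (hA : IsHermiteRing A) (hA' : IsProjectiveFree A) {F : Matrix (Fin l) (Fin m) A}
    (hrank : HasRank F (s + 1)) {d : A} {p : B} (hd : IsGcdMinors F (s + 1) d)
    (hdp : φ d = (∏ i, X i) * C p) (hJ : ∀ k, 1 ≤ k → k ≤ s + 1 → JkUnit F k) :
    SmithEquivAt F (s + 1) := by
  let f : A →+* MvPolynomial (Fin N) B := φ
  have minorIdeal_top := hd.minorIdeal_eq_span (hJ (s + 1) (by omega) le_rfl)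
  have p_ne_zero : p ≠ 0 := by
    rintro rfl
    rw [C_0, mul_zero, EmbeddingLike.map_eq_zero_iff] at hdp
    exact hrank.minorIdeal_ne_bot le_rfl (by rw [minorIdeal_top, hdp, Ideal.span_singleton_zero])
  have map_principal (k : ℕ) (hk : k ≤ s) : ∃ e, minorIdeal (F.map f) k = Ideal.span {e} := by
    obtain rfl | hk0 := k.eq_zero_or_pos
    · exact ⟨1, by rw [minorIdeal_zero, Ideal.span_singleton_one]⟩
    · obtain ⟨e, -, he⟩ := (hJ k hk0 (by omega)).exists_minorIdeal_eq_span
      exact ⟨φ e, minorIdeal_map_eq_span he f⟩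
  have map_top : minorIdeal (F.map f) (s + 1) = Ideal.span {(∏ i, X i) * C p} :=
    hdp ▸ minorIdeal_map_eq_span minorIdeal_top f
  have map_bot : minorIdeal (F.map f) (s + 2) = ⊥ := by
    rw [minorIdeal_map, hrank.minorIdeal_succ_eq_bot, Ideal.map_bot]
  obtain ⟨Ψ, hΨ, hE⟩ := exists_matEquiv_diagonal_of_minorIdeal (hA.of_ringEquiv φ)
    (hA'.of_ringEquiv φ) map_principal p_ne_zero map_top map_bot
  exact smithEquivAt_of_ringEquiv φ hΨ hE

end Backward

theorem statement15_general {K : Type*} [Field K] {N l m r : ℕ}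
    {a : Matrix (Fin N) (Fin N) K} (b : Fin N → K) (ha : IsUnit a.det)
    {g : Fin N → MvPolynomial (Fin (N + 1)) K}
    (hg : ∀ i, g i = (∑ j, C (a i j) * X j.castSucc) + C (b i)) (hr : 1 ≤ r)
    {F : Matrix (Fin l) (Fin m) (MvPolynomial (Fin (N + 1)) K)} (hrank : HasRank F r)
    {h : MvPolynomial (Fin (N + 1)) K} (hh : h ∈ supported K {Fin.last N})
    (hd : IsGcdMinors F r ((∏ i, g i) * h)) :
    SmithEquivAt F r ↔ ∀ k, 1 ≤ k → k ≤ r → JkUnit F k := by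
  refine ⟨fun hS k hk1 hk => hS.jkUnit hrank hk1 hk, fun hJ => ?_⟩
  obtain ⟨s, rfl⟩ : ∃ s, r = s + 1 := ⟨r - 1, by omega⟩
  let φ := affineCoordsEquiv ha b
  have hφg (i : Fin N) : φ (g i) = X i := hg i ▸ affineCoordsEquiv_affineForm b ha i
  obtain ⟨p, hp⟩ : ∃ p, φ h = C p := exists_affineCoordsEquiv_eq_C b ha hh
  have hφd : φ ((∏ i, g i) * h) = (∏ i, X i) * C p := by
    simp only [map_mul, map_prod, hφg, hp]
  exact smithEquivAt_of_forall_jkUnit φ (isHermiteRing_mvPolynomial_fin K (N + 1))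
    (isProjectiveFree_mvPolynomial_fin K (N + 1)) hrank hd hφd hJ

/-- `g_i = a_{i1} z_1 + ⋯ + a_{i,n-1} z_{n-1} + b_i` for `i = 1, …, n-1`
(indexed by `Fin (n-1)`, with `z_j = X ⟨j-1⟩`). -/
theorem statement15 {K : Type*} [Field K] (n : ℕ) (hn : 2 ≤ n)
    (a : Matrix (Fin (n - 1)) (Fin (n - 1)) K) (b : Fin (n - 1) → K)
    (ha : IsUnit a.det)
    (g : Fin (n - 1) → MvPolynomial (Fin n) K)
    (hg : ∀ i : Fin (n - 1), g i =
      (∑ j : Fin (n - 1), MvPolynomial.C (a i j) *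
        MvPolynomial.X (Fin.castLE (by omega : n - 1 ≤ n) j)) + MvPolynomial.C (b i))
    (l m r : ℕ) (hlm : l < m) (hr1 : 1 ≤ r) (hrl : r ≤ l)
    (F : Matrix (Fin l) (Fin m) (MvPolynomial (Fin n) K))
    (hrank : HasRank F r)
    (h : MvPolynomial (Fin n) K)
    (hh : h ∈ MvPolynomial.supported K {(⟨n - 1, by omega⟩ : Fin n)})
    (hd : IsGcdMinors F r ((∏ i : Fin (n - 1), g i) * h)) :
    SmithEquivAt F r ↔ ∀ k : ℕ, 1 ≤ k → k ≤ r → JkUnit F k := by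
  obtain ⟨N, rfl⟩ : ∃ N, n = N + 1 := ⟨n - 1, by omega⟩
  exact statement15_general b ha hg hr1 hrank hh hd
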